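/- arXiv:1611.04547 — 2 statements merged into one kernel-verified Lean document; each statement's English description precedes it below -/
import Mathlib

section
/- For every α ∈ (1,2] there exists a finite β > 0 such that the one-sided DLR equations of the long-range Ising model at parameters (α, β) have at least two distinct solutions, i.e. the one-sided long-range Ising model exhibits a phase transition. -/
/-!
The theorem holds at `β = 720`: the infinite-volume limits with plus and minus boundary conditions
solve the DLR equations and have magnetisations at the origin at least `1/8` and at most `-1/8`.

*Percolation.* Let an edge of length `r` of the complete graph on `{0, …, M - 1}` be open with
probability `1 - exp (-180 / r²)`. With probability at least `1/2` some connected set of vertices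
has density at least `7/8`, for a sequence of lengths `M` tending to infinity
(`Perc.pr_good_ge`). This is a multiscale argument. Blocks overlapping in half of their length are
merged; a large block is bad only if it contains two disjoint bad blocks of the previous scale, or
if two long connected sets on both sides of a gap are not joined by an edge (`Perc.bad_cases`). The
former costs the square of the bad probability. The latter is unlikely, since the sum of `1 / r²`
over the pairs of points of the two sets grows like the logarithm of their length
(`Perc.energy_ge`).

*Griffiths inequalities.* For ferromagnetic weights on `{±1}^V`, correlations of characters increase
when couplings increase (`Gri.ex_mono`) and when configurations are restricted to the image of a
group homomorphism (`Gri.ex_glue`). They also dominate the averages over percolation configurations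
whose open edges force equality of the spins (`Perc.pe_le_ex`). Hence in the free chain with
couplings `180 / r²` there are pairs of sites at arbitrarily large distance whose two-point function
is at least `1/8` (`Chain.exists_two_point`).

*Folding.* Given such a pair `x, y` at distance at least `N`, identify the sites at equal distance
from `x` and set all the spins at distance at least `N` to `+1`. By Griffiths the two-point function
is at most the magnetisation at the origin of the folded model on `{0, …, N - 1}`. At most four
edges are folded onto the same pair of sites, and folding shortens edges, so that model has
couplings at most `720 / r^α`: the one-sided model with plus boundary condition has magnetisation at
least `1/8` in every volume (`Chain.mag_plus`), and at most `-1/8` with minus boundary condition.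

*Infinite volume.* The finite-volume Gibbs measures satisfy the DLR equations for smaller volumes
(`Limit.finite_dlr`). The configuration space is compact and the DLR kernels are continuous, so the
equations pass to weak limits (`Limit.exists_dlr`).
-/

open MeasureTheory Real

/-- The two-point spin space `{-1, +1}`, realised as a subset of `ℝ`. -/
abbrev Spin : Type := ({-1, 1} : Set ℝ)

noncomputable instance : Fintype Spin :=
  ((Set.finite_singleton (1 : ℝ)).insert (-1)).fintype

/-- One-sided spin configurations, `{-1,+1}^ℕ`. -/
abbrev SpinConfigN : Type := ℕ → Spin

/-- One-sided energy `E_N(u) = β ∑_{0 ≤ i < j, i < N} u_i u_j / (j-i)^α`. -/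
noncomputable def energyN (α β : ℝ) (N : ℕ) (u : SpinConfigN) : ℝ :=
  β * ∑' p : ℕ × ℕ,
    if p.1 < p.2 ∧ p.1 < N then
      ((u p.1 : ℝ) * (u p.2 : ℝ)) / ((p.2 - p.1 : ℕ) : ℝ) ^ α
    else 0

/-- The configuration `σ·u^{(N)}`: equal to `σ` on `{0,…,N-1}` and to `u` on `{N,N+1,…}`. -/
def spliceN (N : ℕ) (σ : Fin N → Spin) (u : SpinConfigN) : SpinConfigN :=
  fun k => if h : k < N then σ ⟨k, h⟩ else u k

/-- `ν` satisfies the one-sided DLR equations for the long-range Ising model at `(α, β)`: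
for every `N ≥ 1` and every `σ ∈ {-1,+1}^N`, the function
`u ↦ exp(E_N(σ·u^{(N)})) / ∑_τ exp(E_N(τ·u^{(N)}))` is a version of the conditional
expectation of the indicator of `{(u_0,…,u_{N-1}) = σ}` given the σ-algebra generated by
`(u_N, u_{N+1}, …)`. -/
def OneSidedDLR (α β : ℝ) (ν : Measure SpinConfigN) : Prop :=
  IsProbabilityMeasure ν ∧
    ∀ N : ℕ, 1 ≤ N → ∀ σ : Fin N → Spin,
      (fun u : SpinConfigN =>
          Real.exp (energyN α β N (spliceN N σ u)) /
            ∑ τ : Fin N → Spin, Real.exp (energyN α β N (spliceN N τ u)))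
        =ᵐ[ν]
      ν[Set.indicator {u : SpinConfigN | ∀ i : Fin N, u i = σ i} (fun _ => (1 : ℝ)) |
          MeasurableSpace.comap (fun (u : SpinConfigN) (k : ℕ) => u (N + k))
            MeasurableSpace.pi]

/-! ### Griffiths inequalities -/

namespace Gri

variable {V V' : Type*}

/-- The multiplicative submonoid of nonnegative multiples of real characters of `{±1}^V`. -/
def charMonoid (V : Type*) : Submonoid ((V → ℤˣ) → ℝ) where
  carrier := {f | ∃ c : ℝ, 0 ≤ c ∧ ∃ χ : (V → ℤˣ) →* ℝ, f = fun g => c * χ g}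
  one_mem' := ⟨1, zero_le_one, 1, by ext; simp⟩
  mul_mem' := by
    rintro _ _ ⟨c, hc, χ, rfl⟩ ⟨d, hd, ψ, rfl⟩
    exact ⟨c * d, mul_nonneg hc hd, χ * ψ, by ext; simp [mul_mul_mul_comm]⟩

/-- The cone of functions on `{±1}^V` with nonnegative Fourier coefficients. -/
def cone (V : Type*) : Subsemiring ((V → ℤˣ) → ℝ) := (charMonoid V).subsemiringClosure

lemma char_sq (χ : (V → ℤˣ) →* ℝ) (g : V → ℤˣ) : χ g * χ g = 1 := by
  rw [← map_mul]
  have : g * g = 1 := by ext; simp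
  rw [this, map_one]

lemma char_eq (χ : (V → ℤˣ) →* ℝ) (g : V → ℤˣ) : χ g = 1 ∨ χ g = -1 :=
  mul_self_eq_one_iff.1 (char_sq χ g)

lemma char_le (χ : (V → ℤˣ) →* ℝ) (g : V → ℤˣ) : χ g ≤ 1 := by
  rcases char_eq χ g with h | h <;> rw [h]; norm_num

lemma neg_one_le_char (χ : (V → ℤˣ) →* ℝ) (g : V → ℤˣ) : -1 ≤ χ g := by
  rcases char_eq χ g with h | h <;> rw [h]; norm_num

lemma smul_char_mem {c : ℝ} (hc : 0 ≤ c) (χ : (V → ℤˣ) →* ℝ) :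
    (fun g => c * χ g) ∈ cone V :=
  AddSubmonoid.subset_closure ⟨c, hc, χ, rfl⟩

lemma char_mem (χ : (V → ℤˣ) →* ℝ) : (fun g => χ g) ∈ cone V := by
  simpa using smul_char_mem zero_le_one χ

lemma const_mem {c : ℝ} (hc : 0 ≤ c) : (fun _ : V → ℤˣ => c) ∈ cone V := by
  simpa using smul_char_mem hc (1 : (V → ℤˣ) →* ℝ)

lemma affine_mem {a b : ℝ} (ha : 0 ≤ a) (hb : 0 ≤ b) (χ : (V → ℤˣ) →* ℝ) :
    (fun g => a + b * χ g) ∈ cone V :=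
  add_mem (const_mem ha) (smul_char_mem hb χ)

lemma exp_char (c : ℝ) (χ : (V → ℤˣ) →* ℝ) (g : V → ℤˣ) :
    exp (c * χ g) = cosh c + sinh c * χ g := by
  rcases char_eq χ g with h | h <;> rw [h]
  · simp [cosh_add_sinh]
  · simpa [sub_eq_add_neg] using (cosh_sub_sinh c).symm

lemma exp_char_mem {c : ℝ} (hc : 0 ≤ c) (χ : (V → ℤˣ) →* ℝ) :
    (fun g => exp (c * χ g)) ∈ cone V := by
  simp_rw [exp_char]
  exact affine_mem (cosh_pos c).le (sinh_nonneg_iff.2 hc) χ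

/-- The cone is stable under pulling back along a homomorphism. -/
lemma comp_mem {f : (V → ℤˣ) → ℝ} (hf : f ∈ cone V) (Φ : (V' → ℤˣ) →* (V → ℤˣ)) :
    (fun g => f (Φ g)) ∈ cone V' := by
  induction hf using AddSubmonoid.closure_induction with
  | mem f hf =>
    obtain ⟨c, hc, χ, rfl⟩ := hf
    exact smul_char_mem hc (χ.comp Φ)
  | zero => exact zero_mem (cone V')
  | add f g _ _ hf hg => exact add_mem hf hg

/-- Ferromagnetic weights, in Ginibre's form: the doubled weight `w(σ) w(ση)`, as a function
of `σ`, has nonnegative Fourier coefficients for every `η`. -/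
structure Ferro (w : (V → ℤˣ) → ℝ) : Prop where
  mem : w ∈ cone V
  nonneg : ∀ g, 0 ≤ w g
  one_pos : 0 < w 1
  dbl : ∀ h, (fun g => w (h * g) * w g) ∈ cone V

lemma Ferro.mul {w v : (V → ℤˣ) → ℝ} (hw : Ferro w) (hv : Ferro v) :
    Ferro (fun g => w g * v g) where
  mem := mul_mem hw.mem hv.mem
  nonneg g := mul_nonneg (hw.nonneg g) (hv.nonneg g)
  one_pos := mul_pos hw.one_pos hv.one_pos
  dbl h := by
    have := mul_mem (hw.dbl h) (hv.dbl h)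
    convert this using 1
    ext g
    simp only [Pi.mul_apply]
    ring

lemma ferro_affine {a b : ℝ} (ha : 0 < a) (hb : 0 ≤ b) (hba : b ≤ a) (χ : (V → ℤˣ) →* ℝ) :
    Ferro (fun g => a + b * χ g) where
  mem := affine_mem ha.le hb χ
  nonneg g := by nlinarith [neg_one_le_char χ g]
  one_pos := by simp only [map_one]; linarith
  dbl h := by
    have h1 := neg_one_le_char χ h
    have : (fun g => (a ^ 2 + b ^ 2 * χ h) + (a * b * (1 + χ h)) * χ g) ∈ cone V :=
      affine_mem (by nlinarith) (mul_nonneg (by positivity) (by linarith)) χ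
    convert this using 1
    ext g
    simp only [map_mul]
    linear_combination b ^ 2 * χ h * char_sq χ g

lemma ferro_exp {c : ℝ} (hc : 0 ≤ c) (χ : (V → ℤˣ) →* ℝ) :
    Ferro (fun g => exp (c * χ g)) := by
  simp_rw [exp_char]
  exact ferro_affine (cosh_pos c) (sinh_nonneg_iff.2 hc) (sinh_lt_cosh c).le χ

lemma ferro_one : Ferro (fun _ : V → ℤˣ => (1 : ℝ)) := by
  simpa using ferro_exp (V := V) le_rfl 1

lemma ferro_prod {ι : Type*} (S : Finset ι) (w : ι → (V → ℤˣ) → ℝ) (hw : ∀ i ∈ S, Ferro (w i)) :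
    Ferro (fun g => ∏ i ∈ S, w i g) := by
  classical
  induction S using Finset.induction_on with
  | empty => simpa using ferro_one
  | insert i S hi ih =>
    simp_rw [Finset.prod_insert hi]
    exact (hw i (Finset.mem_insert_self _ _)).mul
      (ih fun j hj => hw j (Finset.mem_insert_of_mem hj))

lemma Ferro.comp {w : (V → ℤˣ) → ℝ} (hw : Ferro w) (Φ : (V' → ℤˣ) →* (V → ℤˣ)) :
    Ferro (fun g => w (Φ g)) where
  mem := comp_mem hw.mem Φ
  nonneg g := hw.nonneg _
  one_pos := by simpa using hw.one_pos
  dbl h := by simpa using comp_mem (hw.dbl (Φ h)) Φ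

variable [Fintype V] [DecidableEq V] [Fintype V'] [DecidableEq V']

lemma sum_char_nonneg (χ : (V → ℤˣ) →* ℝ) : 0 ≤ ∑ g, χ g := by
  by_cases h : ∀ g, χ g = 1
  · exact Finset.sum_nonneg fun g _ => by simp [h g]
  · push Not at h
    obtain ⟨a, ha⟩ := h
    have ha' : χ a = -1 := (char_eq χ a).resolve_left ha
    have : ∑ g, χ g = ∑ g, χ (a * g) :=
      (Equiv.sum_comp (Equiv.mulLeft a) (fun g => χ g)).symm
    simp only [map_mul, ha', ← Finset.mul_sum] at this
    linarith

/-- First Griffiths inequality. -/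
lemma sum_nonneg {f : (V → ℤˣ) → ℝ} (hf : f ∈ cone V) : 0 ≤ ∑ g, f g := by
  induction hf using AddSubmonoid.closure_induction with
  | mem f hf =>
    obtain ⟨c, hc, χ, rfl⟩ := hf
    rw [← Finset.mul_sum]
    exact mul_nonneg hc (sum_char_nonneg χ)
  | zero => simp
  | add f g _ _ hf hg => simpa [Finset.sum_add_distrib] using add_nonneg hf hg

lemma Ferro.sum_pos {w : (V → ℤˣ) → ℝ} (hw : Ferro w) : 0 < ∑ g, w g :=
  Finset.sum_pos' (fun g _ => hw.nonneg g) ⟨1, Finset.mem_univ _, hw.one_pos⟩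

/-- Restricting a ferromagnet to a subgroup of configurations, for instance by identifying some
spins and fixing others to `+1`, increases its correlations. -/
lemma Ferro.glue {w : (V → ℤˣ) → ℝ} (hw : Ferro w) (Φ : (V' → ℤˣ) →* (V → ℤˣ))
    (χ : (V → ℤˣ) →* ℝ) :
    (∑ g, χ g * w g) * ∑ g', w (Φ g') ≤ (∑ g, w g) * ∑ g', χ (Φ g') * w (Φ g') := by
  have key : 0 ≤ ∑ h, (1 - χ h) * ∑ g', χ (Φ g') * (w (h * Φ g') * w (Φ g')) := by
    refine Finset.sum_nonneg fun h _ => mul_nonneg (by linarith [char_le χ h]) (sum_nonneg ?_)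
    exact mul_mem (char_mem (χ.comp Φ)) (comp_mem (hw.dbl h) Φ)
  have e : ∑ h, (1 - χ h) * ∑ g', χ (Φ g') * (w (h * Φ g') * w (Φ g'))
      = ∑ g', ∑ h, (χ (Φ g') - χ (h * Φ g')) * w (h * Φ g') * w (Φ g') := by
    simp_rw [Finset.mul_sum]
    rw [Finset.sum_comm]
    refine Finset.sum_congr rfl fun g' _ => Finset.sum_congr rfl fun h _ => ?_
    rw [map_mul]; ring
  have e2 : ∀ g', ∑ h, (χ (Φ g') - χ (h * Φ g')) * w (h * Φ g') * w (Φ g')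
      = ∑ h, (χ (Φ g') - χ h) * w h * w (Φ g') := fun g' =>
    Equiv.sum_comp (Equiv.mulRight (Φ g')) (fun h => (χ (Φ g') - χ h) * w h * w (Φ g'))
  rw [e] at key
  simp_rw [e2, sub_mul, Finset.sum_sub_distrib] at key
  rw [Finset.sum_mul_sum, Finset.sum_mul_sum, Finset.sum_comm,
    Finset.sum_comm (s := Finset.univ (α := V → ℤˣ))]
  have e3 : ∀ g' h, w h * (χ (Φ g') * w (Φ g')) = χ (Φ g') * w h * w (Φ g') := by
    intros; ring
  simp_rw [e3]
  linarith

/-- Second Griffiths inequality. -/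
lemma Ferro.gks {w : (V → ℤˣ) → ℝ} (hw : Ferro w) (χ : (V → ℤˣ) →* ℝ)
    {f : (V → ℤˣ) → ℝ} (hf : f ∈ cone V) :
    (∑ g, χ g * w g) * ∑ g, f g * w g ≤ (∑ g, w g) * ∑ g, χ g * f g * w g := by
  induction hf using AddSubmonoid.closure_induction with
  | zero => simp
  | add f f' _ _ h h' =>
    simp only [Pi.add_apply, add_mul, mul_add, Finset.sum_add_distrib]
    linarith
  | mem f hf =>
    obtain ⟨c, hc, ψ, rfl⟩ := hf
    have key : 0 ≤ ∑ h, (1 - ψ h) * ∑ g, χ g * ψ g * (w (h * g) * w g) := by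
      refine Finset.sum_nonneg fun h _ => mul_nonneg (by linarith [char_le ψ h]) (sum_nonneg ?_)
      exact mul_mem (char_mem (χ * ψ)) (hw.dbl h)
    have e : ∑ h, (1 - ψ h) * ∑ g, χ g * ψ g * (w (h * g) * w g)
        = ∑ g, ∑ h, χ g * (ψ g - ψ (h * g)) * w (h * g) * w g := by
      simp_rw [Finset.mul_sum]
      rw [Finset.sum_comm]
      refine Finset.sum_congr rfl fun g' _ => Finset.sum_congr rfl fun h _ => ?_
      rw [map_mul]; ring
    have e2 : ∀ g, ∑ h, χ g * (ψ g - ψ (h * g)) * w (h * g) * w g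
        = ∑ h, χ g * (ψ g - ψ h) * w h * w g := fun g =>
      Equiv.sum_comp (Equiv.mulRight g) (fun h => χ g * (ψ g - ψ h) * w h * w g)
    rw [e] at key
    simp_rw [e2] at key
    have e3 : ∑ g, ∑ h, χ g * (ψ g - ψ h) * w h * w g
        = (∑ g, w g) * (∑ g, χ g * ψ g * w g) - (∑ g, χ g * w g) * ∑ g, ψ g * w g := by
      rw [Finset.sum_mul_sum, Finset.sum_mul_sum,
        Finset.sum_comm (f := fun i j => w i * (χ j * ψ j * w j)), ← Finset.sum_sub_distrib]
      refine Finset.sum_congr rfl fun g _ => ?_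
      rw [← Finset.sum_sub_distrib]
      refine Finset.sum_congr rfl fun h _ => ?_
      ring
    rw [e3] at key
    have e4 : ∑ g, c * ψ g * w g = c * ∑ g, ψ g * w g := by
      rw [Finset.mul_sum]; exact Finset.sum_congr rfl fun _ _ => by ring
    have e5 : ∑ g, χ g * (c * ψ g) * w g = c * ∑ g, χ g * ψ g * w g := by
      rw [Finset.mul_sum]; exact Finset.sum_congr rfl fun _ _ => by ring
    rw [e4, e5]
    nlinarith [mul_le_mul_of_nonneg_left (sub_nonneg.1 key) hc]

/-- The Gibbs expectation of `f` with respect to the weight `w`. -/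
noncomputable def ex (w f : (V → ℤˣ) → ℝ) : ℝ := (∑ g, f g * w g) / ∑ g, w g

lemma ex_nonneg {w : (V → ℤˣ) → ℝ} (hw : Ferro w) (χ : (V → ℤˣ) →* ℝ) :
    0 ≤ ex w χ :=
  div_nonneg (sum_nonneg (mul_mem (char_mem χ) hw.mem)) hw.sum_pos.le

lemma ex_glue {w : (V → ℤˣ) → ℝ} (hw : Ferro w) (Φ : (V' → ℤˣ) →* (V → ℤˣ))
    (χ : (V → ℤˣ) →* ℝ) :
    ex w χ ≤ ex (fun g => w (Φ g)) (fun g => χ (Φ g)) := by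
  rw [ex, ex, div_le_div_iff₀ hw.sum_pos (hw.comp Φ).sum_pos]
  linarith [hw.glue Φ χ]

/-- Correlations increase when the weight is multiplied by a positive multiple of an element of
the cone. -/
lemma ex_mono {w w' f : (V → ℤˣ) → ℝ} (hw : Ferro w) (hf : f ∈ cone V) {c : ℝ} (hc : 0 < c)
    (hw' : ∀ g, w' g = c * (f g * w g)) (hpos : 0 < ∑ g, w' g) (χ : (V → ℤˣ) →* ℝ) :
    ex w χ ≤ ex w' χ := by
  have h1 : ∑ g, w' g = c * ∑ g, f g * w g := by simp_rw [hw', Finset.mul_sum]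
  have h2 : ∑ g, χ g * w' g = c * ∑ g, χ g * f g * w g := by
    rw [Finset.mul_sum]; exact Finset.sum_congr rfl fun _ _ => by rw [hw']; ring
  rw [ex, ex, div_le_div_iff₀ hw.sum_pos hpos, h1, h2]
  nlinarith [mul_le_mul_of_nonneg_left (hw.gks χ hf) hc.le]

/-- A bond of strength `J` does at least as much for a correlation as the random bond which is
infinitely strong with probability `t` and absent otherwise, provided `t ≤ tanh J`. -/
lemma ex_bond {w : (V → ℤˣ) → ℝ} (hw : Ferro w) (χ ψ : (V → ℤˣ) →* ℝ) {J t : ℝ}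
    (hJ : 0 ≤ J) (ht1 : t ≤ 1) (ht : t * cosh J ≤ sinh J) :
    (1 - t) * ex w χ + t * ex (fun g => (1 + ψ g) * w g) χ
      ≤ ex (fun g => exp (J * ψ g) * w g) χ := by
  set Z := ∑ g, w g with hZ
  set Y := ∑ g, ψ g * w g with hY
  set A := ∑ g, χ g * w g with hA
  set B := ∑ g, χ g * ψ g * w g with hB
  have hs : 0 ≤ sinh J := sinh_nonneg_iff.2 hJ
  have hc := cosh_pos J
  have hZpos : 0 < Z := hw.sum_pos
  have hY0 : 0 ≤ Y := sum_nonneg (mul_mem (char_mem ψ) hw.mem)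
  have hgks : A * Y ≤ Z * B := hw.gks χ (char_mem ψ)
  have e1 : ∑ g, (1 + ψ g) * w g = Z + Y := by
    simp_rw [add_mul, one_mul, Finset.sum_add_distrib, hZ, hY]
  have e2 : ∑ g, χ g * ((1 + ψ g) * w g) = A + B := by
    rw [hA, hB, ← Finset.sum_add_distrib]
    exact Finset.sum_congr rfl fun _ _ => by ring
  have e3 : ∑ g, exp (J * ψ g) * w g = cosh J * Z + sinh J * Y := by
    rw [hZ, hY, Finset.mul_sum, Finset.mul_sum, ← Finset.sum_add_distrib]
    exact Finset.sum_congr rfl fun _ _ => by rw [exp_char]; ring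
  have e4 : ∑ g, χ g * (exp (J * ψ g) * w g) = cosh J * A + sinh J * B := by
    rw [hA, hB, Finset.mul_sum, Finset.mul_sum, ← Finset.sum_add_distrib]
    exact Finset.sum_congr rfl fun _ _ => by rw [exp_char]; ring
  simp only [ex]
  rw [e1, e2, e3, e4]
  have h1 : 0 < Z + Y := by linarith
  have h2 : 0 < cosh J * Z + sinh J * Y := by positivity
  have h3 : (cosh J * A + sinh J * B) / (cosh J * Z + sinh J * Y)
      - ((1 - t) * (A / Z) + t * ((A + B) / (Z + Y)))
      = (Z * B - A * Y) * (sinh J * (Z + Y) - t * (cosh J * Z + sinh J * Y))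
        / ((cosh J * Z + sinh J * Y) * Z * (Z + Y)) := by
    field_simp
    ring
  have h4 : 0 ≤ sinh J * (Z + Y) - t * (cosh J * Z + sinh J * Y) := by
    nlinarith [mul_nonneg (mul_nonneg hs hY0) (sub_nonneg.2 ht1),
      mul_nonneg (sub_nonneg.2 ht) hZpos.le]
  have h5 := div_nonneg (mul_nonneg (sub_nonneg.2 hgks) h4)
    (mul_nonneg (mul_nonneg h2.le hZpos.le) h1.le)
  rw [← h3] at h5
  linarith

end Gri

/-! ### Bernoulli percolation on a finite set of edges -/

namespace Perc

set_option linter.unusedSectionVars false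

open Classical in
/-- Expectation of `f ω` when the random set `ω ⊆ S` of open edges contains each `e ∈ S`
independently with probability `t e`. -/
noncomputable def pe {E : Type*} (t : E → ℝ) (S : Finset E) (f : Finset E → ℝ) : ℝ :=
  ∑ ω ∈ S.powerset, (∏ e ∈ S, if e ∈ ω then t e else 1 - t e) * f ω

open Classical in
/-- Probability that the random set of open edges satisfies `A`. -/
noncomputable def pr {E : Type*} (t : E → ℝ) (S : Finset E) (A : Finset E → Prop) : ℝ :=
  pe t S (fun ω => if A ω then 1 else 0)

section
variable {E : Type*} [DecidableEq E] {t : E → ℝ} {S F G : Finset E} {f g : Finset E → ℝ}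

lemma pe_empty : pe t ∅ f = f ∅ := by simp [pe]

lemma pe_insert {e : E} (he : e ∉ S) :
    pe t (insert e S) f = (1 - t e) * pe t S f + t e * pe t S (fun ω => f (insert e ω)) := by
  classical
  simp only [pe]
  rw [Finset.sum_powerset_insert (by convert he), Finset.mul_sum, Finset.mul_sum]
  congr 1
  · refine Finset.sum_congr rfl fun ω hω => ?_
    have hω' : e ∉ ω := fun h => he (Finset.mem_powerset.1 hω h)
    rw [Finset.prod_insert he, if_neg hω', mul_assoc]
  · refine Finset.sum_congr rfl fun ω hω => ?_
    rw [Finset.prod_insert he, if_pos (Finset.mem_insert_self _ _), mul_assoc]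
    congr 2
    refine Finset.prod_congr rfl fun x hx => ?_
    have : x ≠ e := fun h => he (h ▸ hx)
    simp [this]

lemma pe_union (h : Disjoint F G) :
    pe t (F ∪ G) f = pe t F (fun ω₁ => pe t G (fun ω₂ => f (ω₁ ∪ ω₂))) := by
  induction F using Finset.induction_on generalizing f with
  | empty => simp [pe_empty]
  | insert e F he ih =>
    rw [Finset.disjoint_insert_left] at h
    rw [Finset.insert_union, pe_insert (by simp [he, h.1]), pe_insert he, ih h.2, ih h.2]
    simp [Finset.insert_union]

lemma pe_congr (h : ∀ ω ⊆ S, f ω = g ω) : pe t S f = pe t S g :=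
  Finset.sum_congr rfl fun ω hω => by rw [h ω (Finset.mem_powerset.1 hω)]

lemma pe_const_mul (c : ℝ) : pe t S (fun ω => c * f ω) = c * pe t S f := by
  rw [pe, pe, Finset.mul_sum]
  exact Finset.sum_congr rfl fun _ _ => by ring

lemma pe_const (c : ℝ) : pe t S (fun _ => c) = c := by
  induction S using Finset.induction_on with
  | empty => rw [pe_empty]
  | insert e S he ih => rw [pe_insert he, ih]; ring

lemma pe_sum {ι : Type*} (s : Finset ι) (F : ι → Finset E → ℝ) :
    pe t S (fun ω => ∑ i ∈ s, F i ω) = ∑ i ∈ s, pe t S (F i) := by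
  simp only [pe, Finset.mul_sum]
  exact Finset.sum_comm

lemma pe_mono (ht : ∀ e, 0 ≤ t e ∧ t e ≤ 1) (h : ∀ ω ⊆ S, f ω ≤ g ω) : pe t S f ≤ pe t S g := by
  refine Finset.sum_le_sum fun ω hω => mul_le_mul_of_nonneg_left
    (h ω (Finset.mem_powerset.1 hω)) (Finset.prod_nonneg fun e _ => ?_)
  split_ifs <;> linarith [ht e]

variable {A B : Finset E → Prop}

lemma pr_mono (ht : ∀ e, 0 ≤ t e ∧ t e ≤ 1) (h : ∀ ω ⊆ S, A ω → B ω) : pr t S A ≤ pr t S B := by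
  refine pe_mono ht fun ω hω => ?_
  by_cases hA : A ω
  · simp [hA, h ω hω hA]
  · simp only [hA, if_false]; split_ifs <;> norm_num

lemma pr_nonneg (ht : ∀ e, 0 ≤ t e ∧ t e ≤ 1) : 0 ≤ pr t S A := by
  rw [← pe_const (t := t) (S := S) 0]
  exact pe_mono ht fun ω _ => by split_ifs <;> norm_num

lemma pr_or_le (ht : ∀ e, 0 ≤ t e ∧ t e ≤ 1) :
    pr t S (fun ω => A ω ∨ B ω) ≤ pr t S A + pr t S B := by
  classical
  have : pr t S A + pr t S B
      = pe t S (fun ω => (if A ω then 1 else 0) + (if B ω then 1 else 0)) := by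
    simp only [pr, pe, mul_add, Finset.sum_add_distrib]
  rw [this]
  refine pe_mono ht fun ω _ => ?_
  by_cases hA : A ω <;> by_cases hB : B ω <;> simp [hA, hB]

lemma pr_exists_le (ht : ∀ e, 0 ≤ t e ∧ t e ≤ 1) {ι : Type*} (s : Finset ι)
    (A : ι → Finset E → Prop) :
    pr t S (fun ω => ∃ i ∈ s, A i ω) ≤ ∑ i ∈ s, pr t S (A i) := by
  classical
  simp only [pr]
  rw [← pe_sum]
  refine pe_mono ht fun ω _ => ?_
  split_ifs with h
  · obtain ⟨i, hi, hA⟩ := h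
    calc (1 : ℝ) = if A i ω then 1 else 0 := by simp [hA]
      _ ≤ _ := Finset.single_le_sum (f := fun i => if A i ω then (1 : ℝ) else 0)
        (fun i _ => by split_ifs <;> norm_num) hi
  · exact Finset.sum_nonneg fun i _ => by split_ifs <;> norm_num

lemma pr_not : pr t S (fun ω => ¬ A ω) = 1 - pr t S A := by
  classical
  have h : pr t S (fun ω => ¬ A ω) + pr t S A = pe t S (fun _ => 1) := by
    simp only [pr, pe, ← Finset.sum_add_distrib, ← mul_add]
    refine Finset.sum_congr rfl fun ω _ => ?_
    by_cases hA : A ω <;> simp [hA]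
  rw [pe_const] at h
  linarith

/-- Events determined by disjoint sets of edges are independent. -/
lemma pr_indep {X Y : Finset E} (hXY : Disjoint X Y) (hA : ∀ ω, A ω ↔ A (ω ∩ X))
    (hB : ∀ ω, B ω ↔ B (ω ∩ Y)) :
    pr t S (fun ω => A ω ∧ B ω) = pr t S A * pr t S B := by
  classical
  have hS : S = (S ∩ X) ∪ (S \ X) := by ext x; simp; tauto
  have hd : Disjoint (S ∩ X) (S \ X) := by
    rw [Finset.disjoint_left]; intro x; simp; tauto
  have h1 : ∀ ω₁ ⊆ S ∩ X, ∀ ω₂ ⊆ S \ X, (A (ω₁ ∪ ω₂) ↔ A ω₁) := by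
    intro ω₁ h₁ ω₂ h₂
    have : (ω₁ ∪ ω₂) ∩ X = ω₁ := by
      ext x
      have := @h₁ x; have := @h₂ x
      simp at *; tauto
    rw [hA, this]
  have h2 : ∀ ω₁ ⊆ S ∩ X, ∀ ω₂ ⊆ S \ X, (B (ω₁ ∪ ω₂) ↔ B ω₂) := by
    intro ω₁ h₁ ω₂ h₂
    have : (ω₁ ∪ ω₂) ∩ Y = ω₂ ∩ Y := by
      ext x
      have := @h₁ x; have : x ∈ X → x ∉ Y := fun h => Finset.disjoint_left.1 hXY h
      simp at *; tauto
    rw [hB, this, ← hB]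
  have key : ∀ C : Finset E → ℝ, pe t S C
      = pe t (S ∩ X) (fun ω₁ => pe t (S \ X) (fun ω₂ => C (ω₁ ∪ ω₂))) := by
    intro C
    conv_lhs => rw [hS]
    exact pe_union hd
  simp only [pr]
  rw [key, key, key]
  have eA : pe t (S ∩ X) (fun ω₁ => pe t (S \ X) (fun ω₂ => if A (ω₁ ∪ ω₂) then (1 : ℝ) else 0))
      = pe t (S ∩ X) (fun ω₁ => if A ω₁ then (1 : ℝ) else 0) := by
    refine pe_congr fun ω₁ h₁ => ?_
    rw [← pe_const (t := t) (S := S \ X) (if A ω₁ then (1 : ℝ) else 0)]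
    exact pe_congr fun ω₂ h₂ => by simp [h1 ω₁ h₁ ω₂ h₂]
  have eB : pe t (S ∩ X) (fun ω₁ => pe t (S \ X) (fun ω₂ => if B (ω₁ ∪ ω₂) then (1 : ℝ) else 0))
      = pe t (S \ X) (fun ω₂ => if B ω₂ then (1 : ℝ) else 0) := by
    rw [← pe_const (t := t) (S := S ∩ X) (pe t (S \ X) (fun ω₂ => if B ω₂ then (1 : ℝ) else 0))]
    exact pe_congr fun ω₁ h₁ => pe_congr fun ω₂ h₂ => by simp [h2 ω₁ h₁ ω₂ h₂]
  rw [eA, eB, mul_comm, ← pe_const_mul]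
  refine pe_congr fun ω₁ h₁ => ?_
  rw [mul_comm, ← pe_const_mul]
  refine pe_congr fun ω₂ h₂ => ?_
  by_cases hA' : A ω₁ <;> by_cases hB' : B ω₂ <;> simp [h1 ω₁ h₁ ω₂ h₂, h2 ω₁ h₁ ω₂ h₂, hA', hB']

/-- A conditional probability bound given the edges in `F` integrates to an unconditional one. -/
lemma pr_le_of_forall (ht : ∀ e, 0 ≤ t e ∧ t e ≤ 1) (h : Disjoint F G) {q : ℝ}
    (hq : ∀ ω₁ ⊆ F, pr t G (fun ω₂ => A (ω₁ ∪ ω₂)) ≤ q) : pr t (F ∪ G) A ≤ q := by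
  rw [pr, pe_union h]
  refine (pe_mono ht hq).trans_eq (pe_const q)

lemma pr_closed {X : Finset E} (hX : X ⊆ S) :
    pr t S (fun ω => Disjoint ω X) = ∏ e ∈ X, (1 - t e) := by
  classical
  have hS : S = X ∪ (S \ X) := by simp [Finset.union_eq_right.2 hX]
  have hd : Disjoint X (S \ X) := Finset.disjoint_sdiff
  rw [hS, pr, pe_union hd]
  have : ∀ ω₁ ⊆ X, pe t (S \ X) (fun ω₂ => if Disjoint (ω₁ ∪ ω₂) X then (1 : ℝ) else 0)
      = if ω₁ = ∅ then 1 else 0 := by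
    intro ω₁ h₁
    rw [← pe_const (t := t) (S := S \ X) (if ω₁ = ∅ then (1 : ℝ) else 0)]
    refine pe_congr fun ω₂ h₂ => ?_
    have h3 : Disjoint ω₂ X := Finset.disjoint_of_subset_left h₂ Finset.sdiff_disjoint
    have h4 : Disjoint ω₁ X ↔ ω₁ = ∅ := by
      constructor
      · intro h; exact Finset.disjoint_self_iff_empty _ |>.1 (Finset.disjoint_of_subset_right h₁ h)
      · rintro rfl; simp
    simp [Finset.disjoint_union_left, h3, h4]
  have e : pe t X (fun ω₁ => pe t (S \ X)
      (fun ω₂ => if Disjoint (ω₁ ∪ ω₂) X then (1 : ℝ) else 0))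
      = pe t X (fun ω₁ => if ω₁ = ∅ then 1 else 0) := pe_congr this
  trans pe t X (fun ω₁ => if ω₁ = ∅ then 1 else 0)
  · rw [← e]; congr!
  rw [pe, Finset.sum_eq_single ∅]
  · simp
  · intro b _ hb; simp [hb]
  · simp

end

/-- Correlations of a ferromagnet dominate the corresponding averages over Bernoulli percolation,
in which the open bonds are infinitely strong and the closed ones absent. -/
lemma pe_le_ex {E V : Type*} [DecidableEq E] [Fintype V] [DecidableEq V] {t J : E → ℝ}
    (S : Finset E) (ψ : E → ((V → ℤˣ) →* ℝ)) (χ : (V → ℤˣ) →* ℝ) {w : (V → ℤˣ) → ℝ}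
    (hw : Gri.Ferro w) (ht : ∀ e, 0 ≤ t e ∧ t e ≤ 1) (hJ : ∀ e, 0 ≤ J e)
    (htJ : ∀ e, t e * cosh (J e) ≤ sinh (J e)) :
    pe t S (fun ω => Gri.ex (fun g => (∏ e ∈ ω, (1 + ψ e g)) * w g) χ)
      ≤ Gri.ex (fun g => (∏ e ∈ S, exp (J e * ψ e g)) * w g) χ := by
  induction S using Finset.induction_on generalizing w with
  | empty => simp [pe_empty]
  | insert e S he ih =>
    have h1 : ∀ ω ⊆ S, Gri.Ferro (fun g => (∏ e ∈ ω, (1 + ψ e g)) * w g) := fun ω _ =>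
      (Gri.ferro_prod ω _ fun i _ => by
        simpa using Gri.ferro_affine zero_lt_one zero_le_one le_rfl (ψ i)).mul hw
    have h2 := ih (w := fun g => exp (J e * ψ e g) * w g) ((Gri.ferro_exp (hJ e) (ψ e)).mul hw)
    have e1 : (fun g => (∏ e ∈ insert e S, exp (J e * ψ e g)) * w g)
        = fun g => (∏ e ∈ S, exp (J e * ψ e g)) * (exp (J e * ψ e g) * w g) := by
      ext g; rw [Finset.prod_insert he]; ring
    rw [e1]
    refine le_trans ?_ h2
    rw [pe_insert he, ← pe_const_mul, ← pe_const_mul]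
    have e2 : ∀ f g : Finset E → ℝ, pe t S f + pe t S g = pe t S (fun ω => f ω + g ω) := by
      intro f g; simp only [pe, mul_add, Finset.sum_add_distrib]
    rw [e2]
    refine pe_mono ht fun ω hω => ?_
    have h3 := Gri.ex_bond (h1 ω hω) χ (ψ e) (hJ e) (ht e).2 (htJ e)
    have e3 : (fun g => (∏ e ∈ insert e ω, (1 + ψ e g)) * w g)
        = fun g => (1 + ψ e g) * ((∏ e ∈ ω, (1 + ψ e g)) * w g) := by
      ext g; rw [Finset.prod_insert (fun h => he (hω h))]; ring
    have e4 : (fun g => (∏ e ∈ ω, (1 + ψ e g)) * (exp (J e * ψ e g) * w g))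
        = fun g => exp (J e * ψ e g) * ((∏ e ∈ ω, (1 + ψ e g)) * w g) := by
      ext g; ring
    rw [e3, e4]
    exact h3

end Perc

/-! ### Renormalization of inverse-square percolation -/

namespace Perc

/-- `X` is internally connected by the edges in `ω`: every `±1`-valued function which is constant
along the edges of `ω` inside `X` is constant on `X`. An edge is a pair `(i, j)` with `i < j`. -/
def Cn (ω : Finset (ℕ × ℕ)) (X : Finset ℕ) : Prop :=
  ∀ σ : ℕ → ℤˣ, (∀ i ∈ X, ∀ j ∈ X, (i, j) ∈ ω → σ i = σ j) → ∀ i ∈ X, ∀ j ∈ X, σ i = σ j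

/-- The block `[a, a + L)` contains an internally connected set of density at least `θ`. -/
def Good (a L : ℕ) (θ : ℝ) (ω : Finset (ℕ × ℕ)) : Prop :=
  ∃ X ⊆ Finset.Ico a (a + L), θ * L ≤ X.card ∧ Cn ω X

lemma Cn.congr {ω ω' : Finset (ℕ × ℕ)} {X : Finset ℕ}
    (h : ∀ i ∈ X, ∀ j ∈ X, ((i, j) ∈ ω ↔ (i, j) ∈ ω')) : Cn ω X ↔ Cn ω' X := by
  constructor
  · intro hC σ hσ
    exact hC σ fun i hi j hj hij => hσ i hi j hj ((h i hi j hj).1 hij)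
  · intro hC σ hσ
    exact hC σ fun i hi j hj hij => hσ i hi j hj ((h i hi j hj).2 hij)

lemma Cn.empty (ω : Finset (ℕ × ℕ)) : Cn ω ∅ := by intro σ _ i hi; simp at hi

/-- Two connected sets form a connected set as soon as no function separates them. -/
lemma Cn.union_of {ω : Finset (ℕ × ℕ)} {X Y : Finset ℕ} (hX : Cn ω X) (hY : Cn ω Y)
    {x y : ℕ} (hx : x ∈ X) (hy : y ∈ Y)
    (h : ∀ σ : ℕ → ℤˣ, (∀ i ∈ X ∪ Y, ∀ j ∈ X ∪ Y, (i, j) ∈ ω → σ i = σ j) → σ x = σ y) :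
    Cn ω (X ∪ Y) := by
  intro σ hσ
  have h1 := hX σ fun i hi j hj => hσ i (Finset.mem_union_left _ hi) j (Finset.mem_union_left _ hj)
  have h2 := hY σ fun i hi j hj =>
    hσ i (Finset.mem_union_right _ hi) j (Finset.mem_union_right _ hj)
  have h3 := h σ hσ
  have h4 : ∀ i ∈ X ∪ Y, σ i = σ x := by
    intro i hi
    rcases Finset.mem_union.1 hi with hi | hi
    · exact h1 i hi x hx
    · rw [h3]; exact h2 i hi y hy
  intro i hi j hj
  rw [h4 i hi, h4 j hj]

lemma Cn.union_common {ω : Finset (ℕ × ℕ)} {X Y : Finset ℕ} (hX : Cn ω X) (hY : Cn ω Y)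
    {x : ℕ} (hx : x ∈ X) (hy : x ∈ Y) : Cn ω (X ∪ Y) :=
  hX.union_of hY hx hy fun _ _ => rfl

lemma Cn.union_edge {ω : Finset (ℕ × ℕ)} {X Y : Finset ℕ} (hX : Cn ω X) (hY : Cn ω Y)
    {x y : ℕ} (hx : x ∈ X) (hy : y ∈ Y) (h : (x, y) ∈ ω) : Cn ω (X ∪ Y) :=
  hX.union_of hY hx hy fun _ hσ =>
    hσ x (Finset.mem_union_left _ hx) y (Finset.mem_union_right _ hy) h

lemma good_dep (a L : ℕ) (θ : ℝ) (ω : Finset (ℕ × ℕ)) :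
    Good a L θ ω ↔
      Good a L θ (ω ∩ (Finset.Ico a (a + L) ×ˢ Finset.Ico a (a + L))) := by
  refine exists_congr fun X => and_congr_right fun hX => and_congr_right fun _ => ?_
  refine Cn.congr fun i hi j hj => ?_
  have h1 := hX hi
  have h2 := hX hj
  simp only [Finset.mem_inter, Finset.mem_product, h1, h2, and_self, and_true]

lemma sum_inter_le {ι : Type*} [DecidableEq ι] (T : Finset ι) (B : ι → Finset ℕ) (Z : Finset ℕ)
    (hB : ∀ i ∈ T, ∀ j ∈ T, i ≠ j → Disjoint (B i) (B j)) (f : ℕ → ℝ) (hf : ∀ x, 0 ≤ f x) :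
    ∑ k ∈ T, ∑ x ∈ Z ∩ B k, f x ≤ ∑ x ∈ Z, f x := by
  rw [← Finset.sum_biUnion]
  · refine Finset.sum_le_sum_of_subset_of_nonneg ?_ fun x _ _ => hf x
    intro x hx
    simp only [Finset.mem_biUnion, Finset.mem_inter] at hx
    obtain ⟨_, _, hx, _⟩ := hx
    exact hx
  · intro i hi j hj hij
    exact Finset.disjoint_of_subset_left Finset.inter_subset_right
      (Finset.disjoint_of_subset_right Finset.inter_subset_right (hB i hi j hj hij))

/-- `X` is a connected set which occupies a fraction `θ` of each of the overlapping blocks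
`[a + j h, a + (j + 2) h)`, `s ≤ j < e`. -/
structure Run (a h : ℕ) (θ : ℝ) (ω : Finset (ℕ × ℕ)) (s e : ℕ) (X : Finset ℕ) : Prop where
  sub : X ⊆ Finset.Ico (a + s * h) (a + (e + 1) * h)
  cn : Cn ω X
  card : ∀ j, s ≤ j → j < e →
    θ * (2 * h) ≤ (X ∩ Finset.Ico (a + j * h) (a + (j + 2) * h)).card

/-- Consecutive blocks overlap in half of their length, so their connected sets of density more
than `3/4` meet, and a row of good blocks merges into one connected set. -/
lemma run_exists {a h : ℕ} {θ : ℝ} (hh : 0 < h) (hθ : 3 / 4 < θ) {ω : Finset (ℕ × ℕ)} (s n : ℕ)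
    (hg : ∀ j, s ≤ j → j < s + n → Good (a + j * h) (2 * h) θ ω) :
    ∃ X, Run a h θ ω s (s + n) X := by
  induction n with
  | zero => exact ⟨∅, by simp, Cn.empty ω, fun j h1 h2 => by omega⟩
  | succ n ih =>
    obtain ⟨X, hX⟩ := ih fun j h1 h2 => hg j h1 (by omega)
    obtain ⟨Y, hY, hYc, hYC⟩ := hg (s + n) (by omega) (by omega)
    have hY' : Y ⊆ Finset.Ico (a + (s + n) * h) (a + (s + n + 2) * h) := by
      convert hY using 2; ring
    push_cast at hYc
    have hYi : Y ∩ Finset.Ico (a + (s + n) * h) (a + (s + n + 2) * h) = Y :=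
      Finset.inter_eq_left.2 hY'
    rcases Nat.eq_zero_or_pos n with rfl | hn
    · refine ⟨Y, ?_, hYC, fun j h1 h2 => ?_⟩
      · exact hY'
      · obtain rfl : j = s := by omega
        simp only [add_zero] at hYi
        rwa [hYi]
    · have hc := hX.card (s + n - 1) (by omega) (by omega)
      obtain ⟨m, rfl⟩ : ∃ m, n = m + 1 := ⟨n - 1, by omega⟩
      rw [show s + (m + 1) - 1 = s + m by omega] at hc
      set P := X ∩ Finset.Ico (a + (s + m) * h) (a + (s + m + 2) * h) with hP
      have hnd : ¬ Disjoint P Y := by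
        intro hd
        have h1 : P ∪ Y ⊆ Finset.Ico (a + (s + m) * h) (a + (s + m) * h + 3 * h) := by
          intro x hx
          rcases Finset.mem_union.1 hx with hx | hx
          · have := (Finset.mem_inter.1 hx).2
            rw [Finset.mem_Ico] at this ⊢
            constructor <;> nlinarith
          · have := hY' hx
            rw [Finset.mem_Ico] at this ⊢
            constructor <;> nlinarith
        have h2 := Finset.card_le_card h1
        rw [Finset.card_union_of_disjoint hd, Nat.card_Ico, Nat.add_sub_cancel_left] at h2
        have h3 : (P.card : ℝ) + Y.card ≤ 3 * h := by exact_mod_cast h2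
        have h4 : (0 : ℝ) < h := by exact_mod_cast hh
        nlinarith
      rw [Finset.not_disjoint_iff] at hnd
      obtain ⟨x, hxP, hxY⟩ := hnd
      refine ⟨X ∪ Y, ?_, hX.cn.union_common hYC (Finset.mem_inter.1 hxP).1 hxY, fun j h1 h2 => ?_⟩
      · intro x hx
        rcases Finset.mem_union.1 hx with hx | hx
        · have := hX.sub hx
          rw [Finset.mem_Ico] at this ⊢
          constructor <;> nlinarith
        · have := hY' hx
          rw [Finset.mem_Ico] at this ⊢
          constructor <;> nlinarith
      · by_cases hj : j < s + (m + 1)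
        · refine (hX.card j h1 hj).trans ?_
          exact_mod_cast Finset.card_le_card
            (Finset.inter_subset_inter_right Finset.subset_union_left)
        · obtain rfl : j = s + (m + 1) := by omega
          rw [← hYi] at hYc
          refine hYc.trans ?_
          exact_mod_cast Finset.card_le_card
            (Finset.inter_subset_inter_right Finset.subset_union_right)

lemma block_disjoint (a h : ℕ) {j j' : ℕ} (hj : j + 2 ≤ j') :
    Disjoint (Finset.Ico (a + j * h) (a + (j + 2) * h))
      (Finset.Ico (a + j' * h) (a + (j' + 2) * h)) := by
  rw [Finset.disjoint_left]
  intro x h1 h2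
  rw [Finset.mem_Ico] at h1 h2
  have : (j + 2) * h ≤ j' * h := Nat.mul_le_mul_right h hj
  omega

/-- A set occupying a fraction `θ` of `T.card` disjoint blocks has at least the corresponding
number of elements. -/
lemma card_ge {a h : ℕ} {θ : ℝ} {Z : Finset ℕ} (T : Finset ℕ)
    (hZ : ∀ k ∈ T, θ * (2 * h) ≤
      (Z ∩ Finset.Ico (a + (2 * k) * h) (a + (2 * k + 2) * h)).card) :
    (T.card : ℝ) * (θ * (2 * h)) ≤ Z.card := by
  have := sum_inter_le T (fun k => Finset.Ico (a + (2 * k) * h) (a + (2 * k + 2) * h)) Z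
    (fun i _ j _ hij => by
      rcases lt_or_gt_of_ne hij with h | h
      · exact block_disjoint _ _ (by omega)
      · exact (block_disjoint _ _ (by omega)).symm) (fun _ => 1) (fun _ => zero_le_one)
  simp only [Finset.sum_const, nsmul_eq_mul, mul_one] at this
  refine le_trans ?_ this
  rw [← nsmul_eq_mul]
  exact Finset.card_nsmul_le_sum _ _ _ hZ

/-- The blocks to the left of the `i`-th one and those from the `(i+2)`-nd on form two connected
sets, and no two such sets are joined by an edge. -/
def Sep (a h : ℕ) (θ : ℝ) (C i : ℕ) (ω : Finset (ℕ × ℕ)) : Prop :=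
  (∃ X, Run a h θ ω 0 i X) ∧ (∃ Y, Run a h θ ω (i + 2) (2 * C - 1) Y) ∧
    ∀ X Y, Run a h θ ω 0 i X → Run a h θ ω (i + 2) (2 * C - 1) Y → ∀ x ∈ X, ∀ y ∈ Y, (x, y) ∉ ω

/-- A large block can only be bad if it contains two disjoint bad blocks, or if away from its ends
two long connected sets fail to be joined by an edge. -/
lemma bad_cases {a h : ℕ} {θ θ' : ℝ} (hh : 0 < h) (hθ : 3 / 4 < θ) {C D : ℕ}
    (hD : 1 ≤ D) (hC : D + 1 ≤ C) (hθ' : θ' * C ≤ θ * (C - (D + 1))) {ω : Finset (ℕ × ℕ)}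
    (hbad : ¬ Good a (2 * (h * C)) θ' ω) :
    (∃ p ∈ Finset.range (2 * C) ×ˢ Finset.range (2 * C), p.2 < 2 * C - 1 ∧ p.1 + 2 ≤ p.2 ∧
      ¬ Good (a + p.1 * h) (2 * h) θ ω ∧ ¬ Good (a + p.2 * h) (2 * h) θ ω) ∨
    ∃ i ∈ Finset.range (2 * C), 2 * D ≤ i ∧ i + 2 * D + 2 ≤ 2 * C ∧ Sep a h θ C i ω := by
  have hh' : (0 : ℝ) < h := by exact_mod_cast hh
  -- It suffices to exhibit a connected set which fills at least `C - D - 1` of the disjoint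
  -- even-numbered blocks.
  have fin : ∀ (Z T : Finset ℕ), Z ⊆ Finset.Ico a (a + 2 * (h * C)) → Cn ω Z →
      (∀ k ∈ T, θ * (2 * h) ≤
        (Z ∩ Finset.Ico (a + (2 * k) * h) (a + (2 * k + 2) * h)).card) →
      C ≤ T.card + (D + 1) → False := by
    intro Z T hZ hCn hk hT
    refine hbad ⟨Z, hZ, ?_, hCn⟩
    refine le_trans ?_ (card_ge T hk)
    have h1 : (C : ℝ) ≤ T.card + (D + 1) := by exact_mod_cast hT
    have h2 : θ * (C - (D + 1)) ≤ θ * T.card :=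
      mul_le_mul_of_nonneg_left (by linarith) (by linarith)
    push_cast
    nlinarith [mul_le_mul_of_nonneg_right (hθ'.trans h2) hh'.le]
  by_contra hcon
  push Not at hcon
  obtain ⟨hpair, hsep⟩ := hcon
  have subL : ∀ {i X}, i ≤ 2 * C - 1 → Run a h θ ω 0 i X →
      X ⊆ Finset.Ico a (a + 2 * (h * C)) := by
    intro i X hi hX x hx
    have := hX.sub hx
    rw [Finset.mem_Ico] at this ⊢
    have h3 : (i + 1) * h ≤ 2 * C * h := Nat.mul_le_mul_right h (by omega)
    constructor <;> nlinarith
  by_cases hall : ∀ j < 2 * C - 1, Good (a + j * h) (2 * h) θ ω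
  · obtain ⟨X, hX⟩ := run_exists hh hθ 0 (2 * C - 1) (fun j _ hj => hall j (by omega))
    rw [zero_add] at hX
    exact fin X (Finset.range C) (subL le_rfl hX) hX.cn
      (fun k hk => hX.card _ (by omega) (by have := Finset.mem_range.1 hk; omega)) (by simp)
  · push Not at hall
    classical
    let i := Nat.find hall
    obtain ⟨hi, hibad⟩ : i < 2 * C - 1 ∧ ¬ Good (a + i * h) (2 * h) θ ω := Nat.find_spec hall
    have hmin : ∀ j < i, Good (a + j * h) (2 * h) θ ω := by
      intro j hj
      have := Nat.find_min hall hj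
      by_contra hb
      exact this ⟨by omega, hb⟩
    have hright : ∀ j, i + 2 ≤ j → j < 2 * C - 1 → Good (a + j * h) (2 * h) θ ω := by
      intro j h1 h2
      by_contra hb
      exact hb (hpair (i, j) (by simp; omega) h2 h1 hibad)
    clear_value i
    obtain ⟨X, hX⟩ := run_exists hh hθ 0 i (fun j _ hj => hmin j (by omega))
    rw [zero_add] at hX
    have hXs := subL hi.le hX
    have hXcard : ∀ k, 2 * k < i → θ * (2 * h) ≤
        (X ∩ Finset.Ico (a + (2 * k) * h) (a + (2 * k + 2) * h)).card :=
      fun k hk => hX.card _ (by omega) hk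
    by_cases hi2 : 2 * C < i + 2 * D + 2
    · exact fin X (Finset.range (C - (D + 1))) hXs hX.cn
        (fun k hk => hXcard k (by have := Finset.mem_range.1 hk; omega)) (by simp; omega)
    obtain ⟨Y, hY⟩ := run_exists hh hθ (i + 2) (2 * C - 1 - (i + 2))
      (fun j h1 hj => hright j h1 (by omega))
    rw [show i + 2 + (2 * C - 1 - (i + 2)) = 2 * C - 1 by omega] at hY
    have hYs : Y ⊆ Finset.Ico a (a + 2 * (h * C)) := by
      intro x hx
      have := hY.sub hx
      rw [Finset.mem_Ico, show 2 * C - 1 + 1 = 2 * C by omega] at this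
      rw [Finset.mem_Ico]
      constructor <;> nlinarith
    have hYcard : ∀ k, i + 2 ≤ 2 * k → k < C → θ * (2 * h) ≤
        (Y ∩ Finset.Ico (a + (2 * k) * h) (a + (2 * k + 2) * h)).card :=
      fun k hk hk' => hY.card _ hk (by omega)
    by_cases hi1 : i < 2 * D
    · exact fin Y (Finset.Ico (D + 1) C) hYs hY.cn
        (fun k hk => by
          have := Finset.mem_Ico.1 hk
          exact hYcard k (by omega) (by omega)) (by simp; omega)
    have h5 := hsep i (by simp; omega) (by omega) (by omega)
    simp only [Sep] at h5
    push Not at h5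
    obtain ⟨X', Y', hX', hY', x, hx, y, hy, hxy⟩ := h5 ⟨X, hX⟩ ⟨Y, hY⟩
    have hXs' := subL hi.le hX'
    have hYs' : Y' ⊆ Finset.Ico a (a + 2 * (h * C)) := by
      intro x hx
      have := hY'.sub hx
      rw [Finset.mem_Ico, show 2 * C - 1 + 1 = 2 * C by omega] at this
      rw [Finset.mem_Ico]
      constructor <;> nlinarith
    -- Exactly one even-numbered block, the one with index `(i + 1) / 2`, is left out.
    refine fin (X' ∪ Y') ((Finset.range C).erase ((i + 1) / 2)) (Finset.union_subset hXs' hYs')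
      (hX'.cn.union_edge hY'.cn hx hy hxy) (fun k hk => ?_) ?_
    · have hk1 := Finset.mem_erase.1 hk
      have hk2 := Finset.mem_range.1 hk1.2
      by_cases hki : 2 * k < i
      · refine (hX'.card (2 * k) (by omega) hki).trans ?_
        exact_mod_cast Finset.card_le_card
          (Finset.inter_subset_inter_right Finset.subset_union_left)
      · refine (hY'.card (2 * k) (by omega) (by omega)).trans ?_
        exact_mod_cast Finset.card_le_card
          (Finset.inter_subset_inter_right Finset.subset_union_right)
    · have := Finset.pred_card_le_card_erase (s := Finset.range C) (a := (i + 1) / 2)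
      rw [Finset.card_range] at this
      omega

end Perc

/-! ### Inverse-square percolation: probability estimates -/

namespace Perc

/-- The probability that an edge is open: `1 - exp (-180 / r²)` for an edge of length `r`. -/
noncomputable def tt (e : ℕ × ℕ) : ℝ := 1 - exp (-(180 / ((e.2 : ℝ) - e.1) ^ 2))

lemma tt_mem (e : ℕ × ℕ) : 0 ≤ tt e ∧ tt e ≤ 1 := by
  constructor
  · have : exp (-(180 / ((e.2 : ℝ) - e.1) ^ 2)) ≤ 1 :=
      exp_le_one_iff.2 (neg_nonpos.2 (by positivity))
    simp only [tt]; linarith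
  · have := exp_pos (-(180 / ((e.2 : ℝ) - e.1) ^ 2))
    simp only [tt]; linarith

/-- The edges between vertices of `{0, …, M - 1}`. -/
def edges (M : ℕ) : Finset (ℕ × ℕ) :=
  (Finset.range M ×ˢ Finset.range M).filter fun e => e.1 < e.2

lemma mem_edges {M : ℕ} {e : ℕ × ℕ} : e ∈ edges M ↔ e.1 < e.2 ∧ e.2 < M := by
  simp only [edges, Finset.mem_filter, Finset.mem_product, Finset.mem_range]
  omega

/-- The inverse-square energy between two adjacent rows of blocks grows logarithmically in their
length. -/
lemma log_le_sum (D : ℕ) :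
    log D / 9 ≤ ∑ k ∈ Finset.range D, ∑ l ∈ Finset.range D, 1 / ((k : ℝ) + l + 3) ^ 2 := by
  have h1 : log D ≤ ∑ k ∈ Finset.range D, 1 / ((k : ℝ) + 1) := by
    rcases Nat.eq_zero_or_pos D with rfl | hD
    · simp
    have h := log_add_one_le_harmonic D
    rw [harmonic] at h
    push_cast at h
    have h2 : log D ≤ log (D + 1) := log_le_log (by exact_mod_cast hD) (by linarith)
    simpa [one_div] using h2.trans h
  calc log D / 9 ≤ (∑ k ∈ Finset.range D, 1 / ((k : ℝ) + 1)) / 9 := by linarith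
    _ = ∑ k ∈ Finset.range D, 1 / ((k : ℝ) + 1) / 9 := by rw [Finset.sum_div]
    _ ≤ _ := by
      refine Finset.sum_le_sum fun k hk => ?_
      have hk' := Finset.mem_range.1 hk
      calc 1 / ((k : ℝ) + 1) / 9 ≤ (k + 1) * (1 / (2 * (k : ℝ) + 3) ^ 2) := by
            rw [div_div, mul_one_div, div_le_div_iff₀ (by positivity) (by positivity)]
            nlinarith [Nat.cast_nonneg (α := ℝ) k]
        _ = ∑ l ∈ Finset.range (k + 1), 1 / (2 * (k : ℝ) + 3) ^ 2 := by
            rw [Finset.sum_const, Finset.card_range, nsmul_eq_mul]; push_cast; ring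
        _ ≤ ∑ l ∈ Finset.range (k + 1), 1 / ((k : ℝ) + l + 3) ^ 2 := by
            refine Finset.sum_le_sum fun l hl => ?_
            have : (l : ℝ) ≤ k := by
              exact_mod_cast Nat.lt_succ_iff.1 (Finset.mem_range.1 hl)
            refine one_div_le_one_div_of_le (by positivity) ?_
            gcongr; linarith
        _ ≤ _ := by
            refine Finset.sum_le_sum_of_subset_of_nonneg ?_ fun _ _ _ => by positivity
            exact Finset.range_subset_range.2 hk'

/-- The energy between the connected sets on the two sides of a gap. -/
lemma energy_ge {a h : ℕ} {θ : ℝ} (hh : 0 < h) (hθ : 3 / 4 < θ) {ω : Finset (ℕ × ℕ)}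
    {C D i : ℕ} (h1 : 2 * D ≤ i) (h2 : i + 2 * D + 2 ≤ 2 * C) {X Y : Finset ℕ}
    (hX : Run a h θ ω 0 i X) (hY : Run a h θ ω (i + 2) (2 * C - 1) Y) :
    log D / 18 ≤ ∑ x ∈ X, ∑ y ∈ Y, 1 / ((y : ℝ) - x) ^ 2 := by
  have hh' : (0 : ℝ) < h := by exact_mod_cast hh
  let BX : ℕ → Finset ℕ := fun k =>
    Finset.Ico (a + (i - 1 - 2 * k) * h) (a + (i - 1 - 2 * k + 2) * h)
  let BY : ℕ → Finset ℕ := fun l =>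
    Finset.Ico (a + (i + 2 + 2 * l) * h) (a + (i + 2 + 2 * l + 2) * h)
  have hBX : ∀ k ∈ Finset.range D, ∀ l ∈ Finset.range D, k ≠ l → Disjoint (BX k) (BX l) := by
    intro k hk l hl hkl
    rw [Finset.mem_range] at hk hl
    rcases lt_or_gt_of_ne hkl with h | h
    · exact (block_disjoint _ _ (by omega)).symm
    · exact block_disjoint _ _ (by omega)
  have hBY : ∀ k ∈ Finset.range D, ∀ l ∈ Finset.range D, k ≠ l → Disjoint (BY k) (BY l) := by
    intro k _ l _ hkl
    rcases lt_or_gt_of_ne hkl with h | h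
    · exact block_disjoint _ _ (by omega)
    · exact (block_disjoint _ _ (by omega)).symm
  calc log D / 18
      ≤ ∑ k ∈ Finset.range D, ∑ l ∈ Finset.range D, (1 / 2) * (1 / ((k : ℝ) + l + 3) ^ 2) := by
        simp_rw [← Finset.mul_sum]; linarith [log_le_sum D]
    _ ≤ ∑ k ∈ Finset.range D, ∑ l ∈ Finset.range D, ∑ x ∈ X ∩ BX k, ∑ y ∈ Y ∩ BY l,
          1 / ((y : ℝ) - x) ^ 2 := by
        refine Finset.sum_le_sum fun k hk => Finset.sum_le_sum fun l hl => ?_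
        rw [Finset.mem_range] at hk hl
        have hXc : θ * (2 * h) ≤ (X ∩ BX k).card := hX.card _ (by omega) (by omega)
        have hYc : θ * (2 * h) ≤ (Y ∩ BY l).card := hY.card _ (by omega) (by omega)
        have hlow : ∀ x ∈ X ∩ BX k, ∀ y ∈ Y ∩ BY l,
            1 / (2 * (h : ℝ) * (k + l + 3)) ^ 2 ≤ 1 / ((y : ℝ) - x) ^ 2 := by
          intro x hx y hy
          have hx' := Finset.mem_Ico.1 (Finset.mem_inter.1 hx).2
          have hy' := Finset.mem_Ico.1 (Finset.mem_inter.1 hy).2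
          obtain ⟨r, hr⟩ : ∃ r, i = r + 1 + 2 * k := ⟨i - 1 - 2 * k, by omega⟩
          rw [show i - 1 - 2 * k = r by omega] at hx'
          rw [hr] at hy'
          have hxy : x < y := by nlinarith
          have hyx : y ≤ x + 2 * h * (k + l + 3) := by nlinarith
          have hxy' : (x : ℝ) < y := by exact_mod_cast hxy
          have hyx' : (y : ℝ) ≤ x + 2 * h * (k + l + 3) := by exact_mod_cast hyx
          refine one_div_le_one_div_of_le (pow_pos (by linarith) 2) ?_
          exact pow_le_pow_left₀ (by linarith) (by linarith) 2
        have hcc : θ * (2 * h) * (θ * (2 * h)) ≤ (X ∩ BX k).card * ((Y ∩ BY l).card : ℝ) :=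
          mul_le_mul hXc hYc (by positivity) (by positivity)
        calc (1 / 2 : ℝ) * (1 / ((k : ℝ) + l + 3) ^ 2)
            ≤ (θ * (2 * h) * (θ * (2 * h))) * (1 / (2 * (h : ℝ) * (k + l + 3)) ^ 2) := by
              have : (θ * (2 * h) * (θ * (2 * h))) * (1 / (2 * (h : ℝ) * (k + l + 3)) ^ 2)
                  = θ ^ 2 * (1 / ((k : ℝ) + l + 3) ^ 2) := by field_simp
              rw [this]
              exact mul_le_mul_of_nonneg_right (by nlinarith) (by positivity)
          _ ≤ ((X ∩ BX k).card * ((Y ∩ BY l).card : ℝ)) *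
                (1 / (2 * (h : ℝ) * (k + l + 3)) ^ 2) :=
              mul_le_mul_of_nonneg_right hcc (by positivity)
          _ = ∑ x ∈ X ∩ BX k, ∑ y ∈ Y ∩ BY l, 1 / (2 * (h : ℝ) * (k + l + 3)) ^ 2 := by
              simp only [Finset.sum_const, nsmul_eq_mul]; ring
          _ ≤ _ := Finset.sum_le_sum fun x hx => Finset.sum_le_sum fun y hy => hlow x hx y hy
    _ = ∑ k ∈ Finset.range D, ∑ x ∈ X ∩ BX k, ∑ l ∈ Finset.range D, ∑ y ∈ Y ∩ BY l,
          1 / ((y : ℝ) - x) ^ 2 := Finset.sum_congr rfl fun k _ => Finset.sum_comm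
    _ ≤ ∑ k ∈ Finset.range D, ∑ x ∈ X ∩ BX k, ∑ y ∈ Y, 1 / ((y : ℝ) - x) ^ 2 :=
        Finset.sum_le_sum fun k _ => Finset.sum_le_sum fun x _ =>
          sum_inter_le _ _ _ hBY (fun y => 1 / ((y : ℝ) - x) ^ 2) fun y => by positivity
    _ ≤ _ := sum_inter_le _ _ _ hBX (fun x => ∑ y ∈ Y, 1 / ((y : ℝ) - x) ^ 2)
          fun x => Finset.sum_nonneg fun y _ => by positivity

lemma Run.congr {a h : ℕ} {θ : ℝ} {ω ω' : Finset (ℕ × ℕ)} {s e : ℕ} {X : Finset ℕ}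
    (hω : ∀ x ∈ Finset.Ico (a + s * h) (a + (e + 1) * h),
      ∀ y ∈ Finset.Ico (a + s * h) (a + (e + 1) * h), ((x, y) ∈ ω ↔ (x, y) ∈ ω')) :
    Run a h θ ω s e X ↔ Run a h θ ω' s e X := by
  constructor
  · intro hX
    exact ⟨hX.sub, (Cn.congr fun i hi j hj => hω i (hX.sub hi) j (hX.sub hj)).1 hX.cn, hX.card⟩
  · intro hX
    exact ⟨hX.sub, (Cn.congr fun i hi j hj => hω i (hX.sub hi) j (hX.sub hj)).2 hX.cn, hX.card⟩

/-- Two long connected sets on both sides of a gap are unlikely to stay separated: given the edges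
on either side, the sum of `180 / r²` over the pairs of points of the two sets is at least
`10 log D`. -/
lemma pr_sep_le {M a h : ℕ} {θ : ℝ} (hh : 0 < h) (hθ : 3 / 4 < θ) {C D i : ℕ} (hD : 1 ≤ D)
    (h1 : 2 * D ≤ i) (h2 : i + 2 * D + 2 ≤ 2 * C) (hM : a + 2 * (h * C) ≤ M) :
    pr tt (edges M) (Sep a h θ C i) ≤ 1 / (D : ℝ) ^ 10 := by
  classical
  have hD' : (0 : ℝ) < D := by exact_mod_cast hD
  set Lf := Finset.Ico (a + 0 * h) (a + (i + 1) * h) with hL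
  set Rg := Finset.Ico (a + (i + 2) * h) (a + (2 * C - 1 + 1) * h) with hR
  have hLR : ∀ x ∈ Lf, ∀ y ∈ Rg, x < y := by
    intro x hx y hy
    rw [hL, Finset.mem_Ico] at hx
    rw [hR, Finset.mem_Ico] at hy
    nlinarith
  have hRM : ∀ y ∈ Rg, y < M := by
    intro y hy
    rw [hR, Finset.mem_Ico, show 2 * C - 1 + 1 = 2 * C by omega] at hy
    nlinarith
  have hG : Lf ×ˢ Rg ⊆ edges M := by
    intro e he
    rw [Finset.mem_product] at he
    exact mem_edges.2 ⟨hLR _ he.1 _ he.2, hRM _ he.2⟩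
  rw [← Finset.sdiff_union_of_subset hG]
  refine pr_le_of_forall tt_mem Finset.sdiff_disjoint fun ω₁ _ => ?_
  -- The clusters on both sides do not depend on the edges that join the sides.
  have r1 : ∀ ω₂ ⊆ Lf ×ˢ Rg, ∀ X, Run a h θ (ω₁ ∪ ω₂) 0 i X ↔ Run a h θ ω₁ 0 i X := by
    intro ω₂ h₂ X
    refine Run.congr fun x hx y hy => ?_
    have : (x, y) ∉ ω₂ := fun hxy =>
      (hLR y hy y (Finset.mem_product.1 (h₂ hxy)).2).ne rfl
    simp [this]
  have r2 : ∀ ω₂ ⊆ Lf ×ˢ Rg, ∀ Y, Run a h θ (ω₁ ∪ ω₂) (i + 2) (2 * C - 1) Y ↔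
      Run a h θ ω₁ (i + 2) (2 * C - 1) Y := by
    intro ω₂ h₂ X
    refine Run.congr fun x hx y hy => ?_
    have : (x, y) ∉ ω₂ := fun hxy =>
      (hLR x (Finset.mem_product.1 (h₂ hxy)).1 x hx).ne rfl
    simp [this]
  by_cases hex : (∃ X, Run a h θ ω₁ 0 i X) ∧ ∃ Y, Run a h θ ω₁ (i + 2) (2 * C - 1) Y
  · obtain ⟨⟨X, hX⟩, Y, hY⟩ := hex
    have hsub : X ×ˢ Y ⊆ Lf ×ˢ Rg := Finset.product_subset_product hX.sub hY.sub
    refine (pr_mono (B := fun ω₂ => Disjoint ω₂ (X ×ˢ Y)) tt_mem ?_).trans ?_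
    · rintro ω₂ h₂ ⟨-, -, h3⟩
      rw [Finset.disjoint_left]
      rintro ⟨x, y⟩ hxy hxy'
      rw [Finset.mem_product] at hxy'
      exact h3 X Y ((r1 ω₂ h₂ X).2 hX) ((r2 ω₂ h₂ Y).2 hY) x hxy'.1 y hxy'.2
        (Finset.mem_union_right _ hxy)
    · rw [pr_closed hsub]
      have e1 : ∀ e : ℕ × ℕ, 1 - tt e = exp (-(180 / ((e.2 : ℝ) - e.1) ^ 2)) := by
        intro e; simp [tt]
      simp_rw [e1]
      rw [← exp_sum, Finset.sum_product]
      have e2 := energy_ge hh hθ h1 h2 hX hY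
      have e3 : ∑ x ∈ X, ∑ y ∈ Y, -(180 / ((y : ℝ) - x) ^ 2)
          = -180 * ∑ x ∈ X, ∑ y ∈ Y, 1 / ((y : ℝ) - x) ^ 2 := by
        simp_rw [Finset.mul_sum]
        exact Finset.sum_congr rfl fun x _ => Finset.sum_congr rfl fun y _ => by ring
      rw [e3, one_div, ← exp_log (inv_pos.2 (pow_pos hD' 10)), log_inv, log_pow]
      refine exp_le_exp.2 ?_
      push_cast
      linarith
  · have : pr tt (Lf ×ˢ Rg) (fun ω₂ => Sep a h θ C i (ω₁ ∪ ω₂)) ≤ pr tt (Lf ×ˢ Rg)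
        (fun _ => False) := by
      refine pr_mono tt_mem ?_
      rintro ω₂ h₂ ⟨⟨X, hX⟩, ⟨Y, hY⟩, -⟩
      exact hex ⟨⟨X, (r1 ω₂ h₂ X).1 hX⟩, Y, (r2 ω₂ h₂ Y).1 hY⟩
    refine this.trans ?_
    simp [pr, pe_const]

/-- One renormalization step. -/
lemma pr_bad_step {M a h : ℕ} {θ θ' p : ℝ} (hh : 0 < h) (hθ : 3 / 4 < θ) {C D : ℕ} (hD : 1 ≤ D)
    (hC : D + 1 ≤ C) (hθ' : θ' * C ≤ θ * (C - (D + 1))) (hM : a + 2 * (h * C) ≤ M)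
    (hp : ∀ b, b + 2 * h ≤ M → pr tt (edges M) (fun ω => ¬ Good b (2 * h) θ ω) ≤ p) :
    pr tt (edges M) (fun ω => ¬ Good a (2 * (h * C)) θ' ω)
      ≤ (2 * C) ^ 2 * p ^ 2 + 2 * C * (1 / (D : ℝ) ^ 10) := by
  classical
  refine (pr_mono tt_mem fun ω _ hω => bad_cases hh hθ hD hC hθ' hω).trans ?_
  refine (pr_or_le tt_mem).trans (add_le_add ?_ ?_)
  · refine (pr_exists_le tt_mem _ _).trans ?_
    refine (Finset.sum_le_card_nsmul _ _ (p ^ 2) ?_).trans_eq ?_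
    · rintro ⟨i, j⟩ -
      by_cases hij : j < 2 * C - 1 ∧ i + 2 ≤ j
      · have hb1 : a + i * h + 2 * h ≤ M := by nlinarith [show i + 2 ≤ 2 * C by omega]
        have hb2 : a + j * h + 2 * h ≤ M := by nlinarith [show j + 2 ≤ 2 * C by omega]
        have hind : pr tt (edges M) (fun ω => ¬ Good (a + i * h) (2 * h) θ ω ∧
            ¬ Good (a + j * h) (2 * h) θ ω) = _ :=
          pr_indep
            (X := Finset.Ico (a + i * h) (a + i * h + 2 * h) ×ˢ
              Finset.Ico (a + i * h) (a + i * h + 2 * h))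
            (Y := Finset.Ico (a + j * h) (a + j * h + 2 * h) ×ˢ
              Finset.Ico (a + j * h) (a + j * h + 2 * h))
            (by
              rw [Finset.disjoint_left]
              rintro ⟨x, y⟩ hx hy
              rw [Finset.mem_product, Finset.mem_Ico] at hx hy
              have : i * h + 2 * h ≤ j * h := by nlinarith
              have := hx.1; have := hy.1
              simp only at *
              omega)
            (fun ω => not_congr (good_dep _ _ _ _)) (fun ω => not_congr (good_dep _ _ _ _))
        refine (pr_mono (B := fun ω => ¬ Good (a + i * h) (2 * h) θ ω ∧
            ¬ Good (a + j * h) (2 * h) θ ω) tt_mem fun ω _ hω => hω.2.2).trans ?_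
        rw [hind, sq]
        exact mul_le_mul (hp _ hb1) (hp _ hb2) (pr_nonneg tt_mem)
          ((pr_nonneg tt_mem).trans (hp _ hb1))
      · refine (pr_mono (B := fun _ => False) tt_mem
          fun ω _ hω => hij ⟨hω.1, hω.2.1⟩).trans ?_
        simpa [pr, pe_const] using sq_nonneg p
    · rw [Finset.card_product, Finset.card_range, nsmul_eq_mul]; push_cast; ring
  · refine (pr_exists_le tt_mem _ _).trans ?_
    refine (Finset.sum_le_card_nsmul _ _ (1 / (D : ℝ) ^ 10) ?_).trans_eq ?_
    · intro i _
      by_cases hi : 2 * D ≤ i ∧ i + 2 * D + 2 ≤ 2 * C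
      · exact (pr_mono tt_mem fun ω _ hω => hω.2.2).trans (pr_sep_le hh hθ hD hi.1 hi.2 hM)
      · refine (pr_mono (B := fun _ => False) tt_mem
          fun ω _ hω => hi ⟨hω.1, hω.2.1⟩).trans ?_
        simp [pr, pe_const]
    · rw [Finset.card_range, nsmul_eq_mul]; push_cast; ring

/-- The square root of the ratio of the scales `n + 1` and `n`. -/
def DD (n : ℕ) : ℕ := 32 * 2 ^ n

/-- Half the length of the blocks of scale `n`. -/
def hh : ℕ → ℕ
  | 0 => 1
  | n + 1 => hh n * DD n ^ 2

lemma hh_pos (n : ℕ) : 0 < hh n := by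
  induction n with
  | zero => exact one_pos
  | succ n ih => exact Nat.mul_pos ih (by simp [DD])

lemma lt_hh (n : ℕ) : n < hh n := by
  induction n with
  | zero => exact one_pos
  | succ n ih =>
    have h1 : 2 ≤ DD n ^ 2 := by
      have : 32 ≤ DD n := by simp only [DD]; nlinarith [Nat.one_le_two_pow (n := n)]
      nlinarith
    have : hh (n + 1) = hh n * DD n ^ 2 := rfl
    nlinarith

/-- Blocks of scale `n` are bad with probability at most `DD n ^ (-6)`, when the required density
decreases with the scale towards `7/8`. -/
lemma pr_bad_le {M : ℕ} (n : ℕ) (a : ℕ) (hM : a + 2 * hh n ≤ M) :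
    pr tt (edges M) (fun ω => ¬ Good a (2 * hh n) (7 / 8 + 4 / (DD n : ℝ)) ω)
      ≤ 1 / (DD n : ℝ) ^ 6 := by
  induction n generalizing a with
  | zero =>
    simp only [hh, mul_one] at hM ⊢
    have hX : ({(a, a + 1)} : Finset (ℕ × ℕ)) ⊆ edges M := by
      intro e he
      rw [Finset.mem_singleton] at he
      subst he
      exact mem_edges.2 ⟨by simp, by simp; omega⟩
    refine (pr_mono (B := fun ω => Disjoint ω {(a, a + 1)}) tt_mem fun ω _ hω => ?_).trans ?_
    · by_contra hd
      rw [Finset.disjoint_singleton_right, not_not] at hd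
      refine hω ⟨Finset.Ico a (a + 2), subset_rfl, ?_, ?_⟩
      · simp [DD]; norm_num
      · intro σ hσ
        have h1 : σ a = σ (a + 1) := hσ a (by simp) (a + 1) (by simp) hd
        have h2 : ∀ i ∈ Finset.Ico a (a + 2), σ i = σ a := by
          intro i hi
          rw [Finset.mem_Ico] at hi
          obtain rfl | rfl : i = a ∨ i = a + 1 := by omega
          · rfl
          · exact h1.symm
        intro i hi j hj
        rw [h2 i hi, h2 j hj]
    · rw [pr_closed hX]
      simp only [Finset.prod_singleton, tt, DD]
      push_cast
      have h1 : (2 : ℝ) ^ 180 ≤ exp 180 := by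
        have h2 : (2 : ℝ) ≤ exp 1 := by linarith [add_one_le_exp (1 : ℝ)]
        calc (2 : ℝ) ^ 180 ≤ exp 1 ^ 180 := pow_le_pow_left₀ (by norm_num) h2 _
          _ = exp 180 := by rw [← exp_nat_mul]; norm_num
      have e1 : 1 - (1 - exp (-(180 / ((a : ℝ) + 1 - a) ^ 2))) = (exp 180)⁻¹ := by
        rw [← exp_neg]; simp
      rw [e1, one_div]
      refine inv_anti₀ (by norm_num) (le_trans ?_ h1)
      norm_num
  | succ n ih =>
    have hD32 : 32 ≤ DD n := by simp only [DD]; nlinarith [Nat.one_le_two_pow (n := n)]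
    have hDr : (32 : ℝ) ≤ DD n := by exact_mod_cast hD32
    have hD0 : (0 : ℝ) < DD n := by linarith
    have hDs : (DD (n + 1) : ℝ) = 2 * DD n := by simp only [DD]; push_cast; ring
    have hθ : (3 / 4 : ℝ) < 7 / 8 + 4 / (DD n : ℝ) := by
      have : 0 < 4 / (DD n : ℝ) := by positivity
      linarith
    have hstep := pr_bad_step (M := M) (a := a) (h := hh n) (C := DD n ^ 2) (D := DD n)
      (θ' := 7 / 8 + 4 / (DD (n + 1) : ℝ)) (hh_pos n) hθ (by omega) (by nlinarith)
      (by
        rw [hDs]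
        push_cast
        generalize (DD n : ℝ) = x at *
        have : (7 / 8 + 4 / x) * (x ^ 2 - (x + 1)) - (7 / 8 + 4 / (2 * x)) * x ^ 2
            = (9 * x ^ 2 - 39 * x - 32) / (8 * x) := by
          field_simp; ring
        have h2 : 0 ≤ (9 * x ^ 2 - 39 * x - 32) / (8 * x) :=
          div_nonneg (by nlinarith) (by positivity)
        linarith) hM ih
    refine hstep.trans ?_
    rw [hDs]
    push_cast
    generalize (DD n : ℝ) = x at *
    have : 1 / (2 * x) ^ 6 - ((2 * x ^ 2) ^ 2 * (1 / x ^ 6) ^ 2 + 2 * x ^ 2 * (1 / x ^ 10))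
        = (x ^ 2 - 384) / (64 * x ^ 8) := by
      field_simp; ring
    have h2 : 0 ≤ (x ^ 2 - 384) / (64 * x ^ 8) := div_nonneg (by nlinarith) (by positivity)
    linarith

lemma pr_good_ge (n : ℕ) :
    1 / 2 ≤ pr tt (edges (2 * hh n)) (Good 0 (2 * hh n) (7 / 8)) := by
  have h1 := pr_bad_le (M := 2 * hh n) n 0 (by omega)
  rw [pr_not] at h1
  have hD32 : 32 ≤ DD n := by simp only [DD]; nlinarith [Nat.one_le_two_pow (n := n)]
  have hDr : (32 : ℝ) ≤ DD n := by exact_mod_cast hD32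
  have h2 : 1 / (DD n : ℝ) ^ 6 ≤ 1 / 2 := by
    refine one_div_le_one_div_of_le (by norm_num) ?_
    calc (2 : ℝ) ≤ 32 ^ 6 := by norm_num
      _ ≤ _ := pow_le_pow_left₀ (by norm_num) hDr 6
  have h3 : pr tt (edges (2 * hh n)) (Good 0 (2 * hh n) (7 / 8 + 4 / (DD n : ℝ)))
      ≤ pr tt (edges (2 * hh n)) (Good 0 (2 * hh n) (7 / 8)) := by
    refine pr_mono tt_mem ?_
    rintro ω _ ⟨X, h4, h5, h6⟩
    refine ⟨X, h4, le_trans ?_ h5, h6⟩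
    refine mul_le_mul_of_nonneg_right ?_ (Nat.cast_nonneg _)
    have : 0 < 4 / (DD n : ℝ) := by positivity
    linarith
  linarith

end Perc

/-! ### Two-point functions of the free Ising chain -/

namespace Chain

open Gri Perc

/-- Extension of a configuration on `{0, …, M - 1}` by `+1`. -/
def extend (M : ℕ) : (Fin M → ℤˣ) →* (ℕ → ℤˣ) where
  toFun σ i := if h : i < M then σ ⟨i, h⟩ else 1
  map_one' := by ext i; simp
  map_mul' σ τ := by
    ext i
    by_cases h : i < M <;> simp [h]

lemma extend_of_le {M i : ℕ} (h : M ≤ i) (σ : Fin M → ℤˣ) : extend M σ i = 1 := by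
  simp [extend, h]

/-- The spin at site `i`, as a character. -/
def spin (M i : ℕ) : (Fin M → ℤˣ) →* ℝ :=
  ((Int.castRingHom ℝ : ℤ →* ℝ).comp ((Units.coeHom ℤ).comp (Pi.evalMonoidHom _ i))).comp (extend M)

lemma spin_apply (M i : ℕ) (σ : Fin M → ℤˣ) : spin M i σ = ((extend M σ i : ℤ) : ℝ) := rfl

/-- Weight of the free Ising chain on `{0, …, M - 1}` with couplings `180 / |i - j| ^ 2`. -/
noncomputable def freeW (M : ℕ) (σ : Fin M → ℤˣ) : ℝ :=
  ∏ e ∈ edges M, exp (180 / ((e.2 : ℝ) - e.1) ^ 2 * (spin M e.1 * spin M e.2) σ)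

lemma ferro_freeW (M : ℕ) : Ferro (freeW M) :=
  ferro_prod _ _ fun _ _ => ferro_exp (by positivity) _

lemma ex_eq_one {V : Type*} [Fintype V] [DecidableEq V] {w : (V → ℤˣ) → ℝ} (hw : Ferro w)
    (χ : (V → ℤˣ) →* ℝ) (h : ∀ g, w g ≠ 0 → χ g = 1) : ex w χ = 1 := by
  rw [ex, div_eq_one_iff_eq hw.sum_pos.ne']
  refine Finset.sum_congr rfl fun g _ => ?_
  by_cases hg : w g = 0
  · simp [hg]
  · simp [h g hg]

lemma ex_le_one {V : Type*} [Fintype V] [DecidableEq V] {w : (V → ℤˣ) → ℝ} (hw : Ferro w)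
    (χ : (V → ℤˣ) →* ℝ) : ex w χ ≤ 1 := by
  rw [ex, div_le_one hw.sum_pos]
  exact Finset.sum_le_sum fun g _ => mul_le_of_le_one_left (hw.nonneg g) (char_le χ g)

/-- The total two-point function of the free chain of length `M = 2 * hh n` is at least `M² / 4`. -/
lemma sum_two_point (n : ℕ) : ((2 * hh n : ℕ) : ℝ) ^ 2 / 4 ≤
    ∑ x ∈ Finset.range (2 * hh n), ∑ y ∈ Finset.range (2 * hh n),
      ex (freeW (2 * hh n)) (spin (2 * hh n) x * spin (2 * hh n) y : _ →* ℝ) := by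
  classical
  set M := 2 * hh n with hM
  set ψ : ℕ × ℕ → ((Fin M → ℤˣ) →* ℝ) := fun e => spin M e.1 * spin M e.2 with hψ
  set W : Finset (ℕ × ℕ) → (Fin M → ℤˣ) → ℝ := fun ω g => (∏ e ∈ ω, (1 + ψ e g)) * 1 with hW
  have hF : ∀ ω, Ferro (W ω) := fun ω => by
    refine Ferro.mul (ferro_prod _ _ fun e _ => ?_) ferro_one
    simpa using ferro_affine (a := 1) (b := 1) one_pos zero_le_one le_rfl (ψ e)
  have h1 : ∀ x y, pe tt (edges M) (fun ω => ex (W ω) (ψ (x, y))) ≤ ex (freeW M) (ψ (x, y)) := by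
    intro x y
    have := pe_le_ex (t := tt) (J := fun e : ℕ × ℕ => 180 / ((e.2 : ℝ) - e.1) ^ 2) (edges M) ψ
      (ψ (x, y)) ferro_one tt_mem (fun e => by positivity) (fun e => by
        rw [tt]
        set J := 180 / ((e.2 : ℝ) - e.1) ^ 2
        have h1 := cosh_sub_sinh J
        have h2 := one_le_cosh J
        have h3 := exp_pos (-J)
        nlinarith)
    refine this.trans (le_of_eq ?_)
    congr 1
    ext g
    simp [freeW, hψ]
  have h2 : ∀ ω, Good 0 M (7 / 8) ω → ((7 / 8 : ℝ) * M) ^ 2 ≤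
      ∑ x ∈ Finset.range M, ∑ y ∈ Finset.range M, ex (W ω) (ψ (x, y)) := by
    rintro ω ⟨X, hX, hc, hcn⟩
    have hX' : X ⊆ Finset.range M := by
      rw [Finset.range_eq_Ico]; simpa only [zero_add] using hX
    have e1 : ∀ x ∈ X, ∀ y ∈ X, ex (W ω) (ψ (x, y)) = 1 := by
      intro x hx y hy
      refine ex_eq_one (hF ω) _ fun g hg => ?_
      have hg' : ∀ e ∈ ω, 1 + ψ e g ≠ 0 := by
        have : ∏ e ∈ ω, (1 + ψ e g) ≠ 0 := by simpa [hW] using hg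
        exact Finset.prod_ne_zero_iff.1 this
      have := hcn (extend M g) (fun i _ j _ hij => by
        have h := hg' _ hij
        have h' : ψ (i, j) g = 1 := (char_eq _ g).resolve_right (by intro h'; rw [h'] at h; simp at h)
        simp only [hψ, MonoidHom.mul_apply, spin_apply] at h'
        rcases Int.units_eq_one_or (extend M g i) with a | a <;>
          rcases Int.units_eq_one_or (extend M g j) with b | b <;> rw [a, b] at h' ⊢ <;>
          norm_num at h') x hx y hy
      simp only [hψ, MonoidHom.mul_apply, spin_apply, this]
      rcases Int.units_eq_one_or (extend M g y) with b | b <;> simp [b]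
    calc ((7 / 8 : ℝ) * M) ^ 2 ≤ (X.card : ℝ) ^ 2 := by gcongr
      _ = ∑ x ∈ X, ∑ y ∈ X, ex (W ω) (ψ (x, y)) := by
        rw [Finset.sum_congr rfl fun x hx => Finset.sum_congr rfl fun y hy => e1 x hx y hy]
        simp [sq]
      _ ≤ ∑ x ∈ X, ∑ y ∈ Finset.range M, ex (W ω) (ψ (x, y)) :=
        Finset.sum_le_sum fun x _ => Finset.sum_le_sum_of_subset_of_nonneg hX'
          fun y _ _ => ex_nonneg (hF ω) _
      _ ≤ _ := Finset.sum_le_sum_of_subset_of_nonneg hX'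
          fun x _ _ => Finset.sum_nonneg fun y _ => ex_nonneg (hF ω) _
  calc ((M : ℕ) : ℝ) ^ 2 / 4 ≤ ((7 / 8 : ℝ) * M) ^ 2 * (1 / 2) := by nlinarith [sq_nonneg (M : ℝ)]
    _ ≤ ((7 / 8 : ℝ) * M) ^ 2 * pr tt (edges M) (Good 0 M (7 / 8)) := by
      gcongr; exact pr_good_ge n
    _ = pe tt (edges M) (fun ω => ((7 / 8 : ℝ) * M) ^ 2 * if Good 0 M (7 / 8) ω then 1 else 0) := by
      rw [pe_const_mul, pr]
    _ ≤ pe tt (edges M) (fun ω => ∑ x ∈ Finset.range M, ∑ y ∈ Finset.range M,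
          ex (W ω) (ψ (x, y))) := by
      refine pe_mono tt_mem fun ω _ => ?_
      by_cases h : Good 0 M (7 / 8) ω
      · simpa [h] using h2 ω h
      · simpa [h] using Finset.sum_nonneg fun x _ => Finset.sum_nonneg fun y _ => ex_nonneg (hF ω) _
    _ = ∑ x ∈ Finset.range M, ∑ y ∈ Finset.range M,
          pe tt (edges M) (fun ω => ex (W ω) (ψ (x, y))) := by
      rw [pe_sum]; exact Finset.sum_congr rfl fun x _ => pe_sum _ _
    _ ≤ _ := Finset.sum_le_sum fun x _ => Finset.sum_le_sum fun y _ => h1 x y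

/-- Two far-away sites of a long free chain are correlated. -/
lemma exists_two_point (N : ℕ) : ∃ M x y : ℕ, N ≤ M ∧ x < M ∧ y < M ∧ N ≤ Nat.dist y x ∧
    1 / 8 ≤ ex (freeW M) (spin M x * spin M y : _ →* ℝ) := by
  set n := 16 * N with hn
  have hs := sum_two_point n
  have hlt := lt_hh n
  set M := 2 * hh n with hM
  have hMN : 16 * N ≤ M := by omega
  have hM0 : 0 < M := by omega
  have hMr : (0 : ℝ) < M := by exact_mod_cast hM0
  by_contra! hcon
  have : ∀ x ∈ Finset.range M, ∑ y ∈ Finset.range M,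
      ex (freeW M) (spin M x * spin M y : _ →* ℝ) < (M : ℝ) / 4 := by
    intro x hx
    have hx' := Finset.mem_range.1 hx
    calc ∑ y ∈ Finset.range M, ex (freeW M) (spin M x * spin M y : _ →* ℝ)
        = ∑ y ∈ Finset.range M with Nat.dist y x < N, ex (freeW M) (spin M x * spin M y : _ →* ℝ)
          + ∑ y ∈ Finset.range M with ¬ Nat.dist y x < N,
              ex (freeW M) (spin M x * spin M y : _ →* ℝ) :=
        (Finset.sum_filter_add_sum_filter_not _ _ _).symm
      _ ≤ ∑ y ∈ Finset.Ico (x - N) (x + N), (1 : ℝ)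
          + ∑ y ∈ Finset.range M with ¬ Nat.dist y x < N, (1 / 8 : ℝ) := by
        refine add_le_add ?_ (Finset.sum_le_sum fun y hy => ?_)
        · refine (Finset.sum_le_sum fun y _ => ex_le_one (ferro_freeW M) _).trans ?_
          refine Finset.sum_le_sum_of_subset_of_nonneg (fun y hy => ?_) fun _ _ _ => zero_le_one
          have hy' := (Finset.mem_filter.1 hy).2
          unfold Nat.dist at hy'
          exact Finset.mem_Ico.2 (by omega)
        · rw [Finset.mem_filter, Finset.mem_range] at hy
          exact (hcon M x y (by omega) hx' hy.1 (by omega)).le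
      _ ≤ (2 * N : ℕ) + (M : ℝ) * (1 / 8) := by
        simp only [Finset.sum_const, nsmul_eq_mul, mul_one, Nat.card_Ico]
        gcongr
        · omega
        · exact (Finset.card_filter_le _ _).trans (Finset.card_range M).le
      _ < M / 4 := by
        have : ((32 * N : ℕ) : ℝ) < M := by exact_mod_cast (by omega)
        push_cast at this ⊢
        linarith
  have h3 := Finset.sum_lt_sum_of_nonempty (Finset.nonempty_range_iff.2 hM0.ne') this
  simp only [Finset.sum_const, Finset.card_range, nsmul_eq_mul] at h3
  nlinarith
end Chain

/-! ### Folding the chain: magnetisation with plus boundary condition -/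

namespace Chain

open Gri Perc

/-- The coupling of the one-sided model, restricted to pairs meeting `{0, …, N - 1}`. -/
noncomputable def coup (α : ℝ) (N : ℕ) (p : ℕ × ℕ) : ℝ :=
  if p.1 < p.2 ∧ p.1 < N then 1 / ((p.2 - p.1 : ℕ) : ℝ) ^ α else 0

lemma coup_nonneg (α : ℝ) (N : ℕ) (p : ℕ × ℕ) : 0 ≤ coup α N p := by
  unfold coup; split_ifs <;> positivity

lemma coup_summable {α : ℝ} (hα : 1 < α) (N : ℕ) : Summable (coup α N) := by
  rw [summable_prod_of_nonneg (coup_nonneg α N)]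
  constructor
  · intro k
    rw [← summable_nat_add_iff k]
    refine Summable.of_nonneg_of_le (fun _ => coup_nonneg _ _ _) (fun l => ?_)
      (Real.summable_one_div_nat_rpow.2 hα)
    simp only [coup]
    split_ifs
    · simp
    · positivity
  · refine summable_of_ne_finset_zero (s := Finset.range N) fun k hk => ?_
    have : ¬ k < N := by simpa using hk
    simp [coup, this]

lemma energyN_eq (α β : ℝ) (N : ℕ) (u : SpinConfigN) :
    energyN α β N u = β * ∑' p : ℕ × ℕ, coup α N p * ((u p.1 : ℝ) * u p.2) := by
  unfold energyN
  congr 2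
  ext p
  unfold coup
  split_ifs <;> ring

/-- The sign group identified with the spin space. -/
def toSpin (z : ℤˣ) : Spin := ⟨((z : ℤ) : ℝ), by
  rcases Int.units_eq_one_or z with h | h <;> simp [h]⟩

lemma toSpin_bijective : Function.Bijective toSpin := by
  constructor
  · intro a b h
    have h' : ((a : ℤ) : ℝ) = ((b : ℤ) : ℝ) := congrArg Subtype.val h
    exact Units.ext (by exact_mod_cast h')
  · rintro ⟨s, hs⟩
    rcases hs with rfl | hs
    · exact ⟨-1, by simp [toSpin]⟩
    · rw [Set.mem_singleton_iff] at hs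
      subst hs
      exact ⟨1, by simp [toSpin]⟩

lemma spin_abs (s : Spin) : |(s : ℝ)| = 1 := by
  obtain ⟨s, hs⟩ := s
  rcases hs with rfl | hs
  · simp
  · rw [Set.mem_singleton_iff] at hs; simp [hs]

/-- Functions whose exponential is, up to a positive factor, an element of the cone. -/
def ExpCone {V : Type*} (f : (V → ℤˣ) → ℝ) : Prop :=
  ∃ c : ℝ, 0 < c ∧ ∃ h ∈ cone V, ∀ g, exp (f g) = c * h g

lemma ExpCone.add {V : Type*} {f f' : (V → ℤˣ) → ℝ} (hf : ExpCone f) (hf' : ExpCone f') :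
    ExpCone (fun g => f g + f' g) := by
  obtain ⟨c, hc, h, hh, e⟩ := hf
  obtain ⟨c', hc', h', hh', e'⟩ := hf'
  exact ⟨c * c', mul_pos hc hc', h * h', mul_mem hh hh', fun g => by
    rw [exp_add, e, e', Pi.mul_apply]; ring⟩

lemma expCone_const {V : Type*} (a : ℝ) : ExpCone (fun _ : V → ℤˣ => a) :=
  ⟨exp a, exp_pos a, 1, one_mem _, fun g => by simp⟩

lemma expCone_char {V : Type*} {a : ℝ} (ha : 0 ≤ a) (χ : (V → ℤˣ) →* ℝ) :
    ExpCone (fun g => a * χ g) :=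
  ⟨1, one_pos, _, exp_char_mem ha χ, fun g => by simp⟩

lemma expCone_sum {V ι : Type*} (S : Finset ι) (f : ι → (V → ℤˣ) → ℝ)
    (hf : ∀ i ∈ S, ExpCone (f i)) : ExpCone (fun g => ∑ i ∈ S, f i g) := by
  classical
  induction S using Finset.induction_on with
  | empty => simpa using expCone_const 0
  | insert i S hi ih =>
    simp_rw [Finset.sum_insert hi]
    exact (hf i (Finset.mem_insert_self _ _)).add (ih fun j hj => hf j (Finset.mem_insert_of_mem hj))

/-- Identification of sites of `{0, …, M - 1}` at the same distance from `x`; sites at distance at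
least `N` are set to `+1`. -/
def fold (M N x : ℕ) : (Fin N → ℤˣ) →* (Fin M → ℤˣ) where
  toFun σ i := extend N σ (Nat.dist i x)
  map_one' := by ext i; simp
  map_mul' σ τ := by ext i; simp

lemma spin_fold {M N x i : ℕ} (hi : i < M) (σ : Fin N → ℤˣ) :
    spin M i (fold M N x σ) = spin N (Nat.dist i x) σ := by
  simp only [spin_apply]
  congr 2
  simp [extend, fold, hi]

/-- The distances to `x` of the end points of an edge, in increasing order. -/
def dpair (x : ℕ) (e : ℕ × ℕ) : ℕ × ℕ :=
  (min (Nat.dist e.1 x) (Nat.dist e.2 x), max (Nat.dist e.1 x) (Nat.dist e.2 x))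

/-- At most four edges are folded onto the same pair of distances. -/
lemma fibre_le {α : ℝ} (hα : α ≤ 2) (M x k l : ℕ) (hkl : k < l) :
    ∑ e ∈ edges M with dpair x e = (k, l), 180 / ((e.2 : ℝ) - e.1) ^ 2
      ≤ 720 * (1 / ((l - k : ℕ) : ℝ) ^ α) := by
  have hd : (1 : ℝ) ≤ ((l - k : ℕ) : ℝ) := by exact_mod_cast (by omega)
  have hsub : (edges M).filter (fun e => dpair x e = (k, l)) ⊆
      {(x + k, x + l), (x - l, x - k), (x - k, x + l), (x - l, x + k)} := by
    intro e he
    obtain ⟨he, h⟩ := Finset.mem_filter.1 he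
    have he' := (mem_edges.1 he).1
    obtain ⟨i, j⟩ := e
    simp only [dpair, Prod.mk.injEq, Nat.dist] at h he'
    simp only [Finset.mem_insert, Finset.mem_singleton, Prod.mk.injEq]
    omega
  have hcard : ((edges M).filter (fun e => dpair x e = (k, l))).card ≤ 4 :=
    (Finset.card_le_card hsub).trans Finset.card_le_four
  have hterm : ∀ e ∈ (edges M).filter (fun e => dpair x e = (k, l)),
      180 / ((e.2 : ℝ) - e.1) ^ 2 ≤ 180 * (1 / ((l - k : ℕ) : ℝ) ^ α) := by
    intro e he
    obtain ⟨he, h⟩ := Finset.mem_filter.1 he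
    have he' := (mem_edges.1 he).1
    have h1 : l - k ≤ e.2 - e.1 := by
      simp only [dpair, Prod.mk.injEq, Nat.dist] at h
      omega
    have h2 : ((l - k : ℕ) : ℝ) ≤ (e.2 : ℝ) - e.1 := by
      rw [← Nat.cast_sub he'.le]; exact_mod_cast h1
    have h3 : ((l - k : ℕ) : ℝ) ^ α ≤ ((e.2 : ℝ) - e.1) ^ 2 := by
      calc ((l - k : ℕ) : ℝ) ^ α ≤ ((l - k : ℕ) : ℝ) ^ (2 : ℝ) := rpow_le_rpow_of_exponent_le hd hα
        _ = ((l - k : ℕ) : ℝ) ^ 2 := by norm_cast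
        _ ≤ _ := by gcongr
    have h4 : 0 < ((l - k : ℕ) : ℝ) ^ α := rpow_pos_of_pos (by linarith) _
    rw [div_eq_mul_one_div]
    gcongr
  have h0 : 0 ≤ 180 * (1 / ((l - k : ℕ) : ℝ) ^ α) := by positivity
  calc _ ≤ ((edges M).filter (fun e => dpair x e = (k, l))).card • (180 * (1 / ((l - k : ℕ) : ℝ) ^ α)) :=
        Finset.sum_le_card_nsmul _ _ _ hterm
    _ ≤ (4 : ℝ) * (180 * (1 / ((l - k : ℕ) : ℝ) ^ α)) := by
      rw [nsmul_eq_mul]; gcongr; exact_mod_cast hcard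
    _ = _ := by ring

/-- Exponent of the weight of the one-sided model with plus boundary condition. -/
noncomputable def plusE (α : ℝ) (N : ℕ) (g : Fin N → ℤˣ) : ℝ :=
  720 * ∑' p : ℕ × ℕ, coup α N p * (spin N p.1 * spin N p.2) g

lemma freeW_fold (M N x : ℕ) (hx : x < M) (g : Fin N → ℤˣ) : freeW M (fold M N x g) =
    exp (∑ p ∈ Finset.range M ×ˢ Finset.range M,
      (∑ e ∈ edges M with dpair x e = p, 180 / ((e.2 : ℝ) - e.1) ^ 2) *
        (spin N p.1 * spin N p.2) g) := by
  rw [freeW, ← exp_sum]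
  congr 1
  rw [← Finset.sum_fiberwise_of_maps_to (g := dpair x) (t := Finset.range M ×ˢ Finset.range M)]
  · refine Finset.sum_congr rfl fun p _ => ?_
    rw [Finset.sum_mul]
    refine Finset.sum_congr rfl fun e he => ?_
    obtain ⟨he, h⟩ := Finset.mem_filter.1 he
    have he' := mem_edges.1 he
    congr 1
    simp only [MonoidHom.mul_apply]
    rw [spin_fold (by omega), spin_fold he'.2, ← h]
    simp only [dpair]
    rcases le_total (Nat.dist e.1 x) (Nat.dist e.2 x) with h | h
    · rw [min_eq_left h, max_eq_right h]
    · rw [min_eq_right h, max_eq_left h, mul_comm]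
  · intro e he
    have he' := mem_edges.1 he
    simp only [dpair, Finset.mem_product, Finset.mem_range, Nat.dist]
    omega

lemma plusE_eq {α : ℝ} (hα : 1 < α) {M N : ℕ} (hNM : N ≤ M) : ∃ t : ℕ → ℝ, (∀ k, 0 ≤ t k) ∧
    ∀ g : Fin N → ℤˣ, plusE α N g =
      ∑ p ∈ Finset.range M ×ˢ Finset.range M, 720 * coup α N p * (spin N p.1 * spin N p.2) g
      + ∑ k ∈ Finset.range N, t k * spin N k g := by
  have hs : ∀ g, Summable fun p => coup α N p * (spin N p.1 * spin N p.2) g := fun g =>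
    (coup_summable hα N).of_norm_bounded fun p => by
      rw [norm_mul, Real.norm_of_nonneg (coup_nonneg _ _ _)]
      refine mul_le_of_le_one_right (coup_nonneg _ _ _) ?_
      rcases char_eq (spin N p.1 * spin N p.2) g with h | h <;> rw [h] <;> norm_num
  refine ⟨fun k => 720 * ∑' l, coup α N (k, l + M), fun k =>
    mul_nonneg (by norm_num) (tsum_nonneg fun l => coup_nonneg _ _ _), fun g => ?_⟩
  have e1 : ∀ k, ∑' l, coup α N (k, l) * (spin N k * spin N l) g =
      ∑ l ∈ Finset.range M, coup α N (k, l) * (spin N k * spin N l) g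
        + (∑' l, coup α N (k, l + M)) * spin N k g := by
    intro k
    rw [← ((hs g).prod_factor k).sum_add_tsum_nat_add M, ← tsum_mul_right]
    congr 2
    ext l
    have : spin N (l + M) g = 1 := by
      rw [spin_apply, extend_of_le (by omega)]; simp
    rw [MonoidHom.mul_apply, this, mul_one]
  have z : ∀ k ∉ Finset.range N, ∀ l, coup α N (k, l) = 0 := by
    intro k hk l
    have : ¬ k < N := by simpa using hk
    simp [coup, this]
  have e2 : ∑' p : ℕ × ℕ, coup α N p * (spin N p.1 * spin N p.2) g
      = ∑ k ∈ Finset.range N, ∑' l, coup α N (k, l) * (spin N k * spin N l) g := by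
    rw [(hs g).tsum_prod]
    refine tsum_eq_sum fun k hk => ?_
    simp [z k hk]
  have e3 : ∑ p ∈ Finset.range M ×ˢ Finset.range M, 720 * coup α N p * (spin N p.1 * spin N p.2) g
      = 720 * ∑ k ∈ Finset.range N, ∑ l ∈ Finset.range M,
        coup α N (k, l) * (spin N k * spin N l) g := by
    rw [Finset.sum_product, Finset.mul_sum]
    rw [← Finset.sum_subset (Finset.range_subset_range.2 hNM)]
    · simp_rw [Finset.mul_sum, mul_assoc]
    · intro k _ hk
      simp [z k hk]
  rw [plusE, e2, e3]
  simp_rw [e1, Finset.sum_add_distrib, mul_add, Finset.mul_sum, mul_assoc]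

/-- The magnetisation at the origin with plus boundary condition is bounded below uniformly in the
volume. -/
lemma ex_plus {α : ℝ} (hα : 1 < α) (hα₂ : α ≤ 2) (N : ℕ) :
    1 / 8 ≤ ex (fun g => exp (plusE α N g)) (spin N 0) := by
  obtain ⟨M, x, y, hNM, hx, hy, hxy, h⟩ := exists_two_point N
  refine h.trans ((ex_glue (ferro_freeW M) (fold M N x) _).trans ?_)
  have e : (fun g => (spin M x * spin M y) (fold M N x g)) = fun g => spin N 0 g := by
    ext g
    rw [MonoidHom.mul_apply, spin_fold hx, spin_fold hy, spin_apply N (Nat.dist y x),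
      extend_of_le hxy, Nat.dist_self]
    simp
  rw [e]
  obtain ⟨t, ht, hE⟩ := plusE_eq hα hNM
  set C : ℕ × ℕ → ℝ := fun p => ∑ e ∈ edges M with dpair x e = p, 180 / ((e.2 : ℝ) - e.1) ^ 2
    with hC
  have key : ExpCone (fun g : Fin N → ℤˣ =>
      ∑ p ∈ Finset.range M ×ˢ Finset.range M,
        (720 * coup α N p - C p) * (spin N p.1 * spin N p.2) g
      + ∑ k ∈ Finset.range N, t k * spin N k g) := by
    refine (expCone_sum _ _ ?_).add (expCone_sum _ _ fun k _ => expCone_char (ht k) _)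
    rintro ⟨k, l⟩ _
    by_cases hkl : k < l ∧ k < N
    · refine expCone_char (sub_nonneg.2 ?_) _
      have := fibre_le hα₂ M x k l hkl.1
      simpa [coup, hkl] using this
    · -- the spins of such a pair multiply to `1`, or no edge is folded onto it
      have hc : coup α N (k, l) = 0 := by rw [coup, if_neg hkl]
      rcases lt_trichotomy k l with h | h | h
      · have hk : N ≤ k := by by_contra hk; exact hkl ⟨h, by omega⟩
        convert expCone_const (720 * coup α N (k, l) - C (k, l)) using 2 with g
        simp [spin_apply, extend_of_le hk, extend_of_le (hk.trans h.le)]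
      · subst h
        convert expCone_const (720 * coup α N (k, k) - C (k, k)) using 2 with g
        simp [char_sq]
      · have : C (k, l) = 0 := by
          refine Finset.sum_eq_zero fun e he => ?_
          have := (Finset.mem_filter.1 he).2
          simp only [dpair, Prod.mk.injEq] at this
          omega
        simpa [hc, this] using expCone_const (V := Fin N) 0
  obtain ⟨c, hc, f, hf, hcf⟩ := key
  refine ex_mono ((ferro_freeW M).comp _) hf hc (fun g => ?_)
    (Finset.sum_pos (fun g _ => exp_pos _) Finset.univ_nonempty) _
  rw [freeW_fold M N x hx, ← mul_assoc, ← hcf, ← exp_add, hE]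
  congr 1
  simp only [sub_mul, Finset.sum_sub_distrib, hC]
  ring

/-- The finite-volume magnetisation at the origin with boundary condition `η`. -/
noncomputable def mag (α β : ℝ) (η : SpinConfigN) (N : ℕ) : ℝ :=
  (∑ τ : Fin N → Spin, exp (energyN α β N (spliceN N τ η)) * (spliceN N τ η 0 : ℝ)) /
    ∑ τ : Fin N → Spin, exp (energyN α β N (spliceN N τ η))

lemma mag_plus {α : ℝ} (hα : 1 < α) (hα₂ : α ≤ 2) (N : ℕ) :
    1 / 8 ≤ mag α 720 (fun _ => toSpin 1) N := by
  refine (ex_plus hα hα₂ N).trans (le_of_eq ?_)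
  have hs : ∀ (g : Fin N → ℤˣ) k,
      ((spliceN N (fun i => toSpin (g i)) (fun _ => toSpin 1) k : Spin) : ℝ) = spin N k g := by
    intro g k
    simp only [spliceN, spin_apply, extend, MonoidHom.coe_mk, OneHom.coe_mk]
    split_ifs <;> rfl
  have hE : ∀ g : Fin N → ℤˣ,
      energyN α 720 N (spliceN N (fun i => toSpin (g i)) (fun _ => toSpin 1)) = plusE α N g := by
    intro g
    rw [energyN_eq, plusE]
    simp_rw [hs]
    rfl
  let e : (Fin N → ℤˣ) ≃ (Fin N → Spin) :=
    Equiv.arrowCongr (Equiv.refl _) (Equiv.ofBijective toSpin toSpin_bijective)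
  have he : ∀ g, e g = fun i => toSpin (g i) := fun g => rfl
  rw [mag, ex, ← Equiv.sum_comp e, ← Equiv.sum_comp e]
  simp_rw [he, hE, hs, mul_comm]

lemma mag_minus {α : ℝ} (hα : 1 < α) (hα₂ : α ≤ 2) (N : ℕ) :
    mag α 720 (fun _ => toSpin (-1)) N ≤ -(1 / 8) := by
  have h := mag_plus hα hα₂ N
  let f : Spin ≃ Spin := Function.Involutive.toPerm
    (fun s => ⟨-(s : ℝ), by rcases s.2 with h | h <;> [right; left] <;> simp_all⟩)
    (fun s => by simp)
  have hf : ∀ s : Spin, ((f s : Spin) : ℝ) = -s := fun s => rfl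
  have hs : ∀ (τ : Fin N → Spin) k, ((spliceN N (fun i => f (τ i)) (fun _ => toSpin (-1)) k : Spin) : ℝ)
      = -(spliceN N τ (fun _ => toSpin 1) k : Spin) := by
    intro τ k
    simp only [spliceN]
    split_ifs
    · rw [hf]
    · simp [toSpin]
  have hE : ∀ τ : Fin N → Spin, energyN α 720 N (spliceN N (fun i => f (τ i)) (fun _ => toSpin (-1)))
      = energyN α 720 N (spliceN N τ (fun _ => toSpin 1)) := by
    intro τ
    rw [energyN_eq, energyN_eq]
    simp_rw [hs, neg_mul_neg]
  let e : (Fin N → Spin) ≃ (Fin N → Spin) := Equiv.arrowCongr (Equiv.refl _) f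
  have he : ∀ g, e g = fun i => f (g i) := fun g => rfl
  have : mag α 720 (fun _ => toSpin (-1)) N = -mag α 720 (fun _ => toSpin 1) N := by
    rw [mag, ← Equiv.sum_comp e, ← Equiv.sum_comp e
      (fun τ => exp (energyN α 720 N (spliceN N τ (fun _ => toSpin (-1)))))]
    simp_rw [he, hE, hs, mul_neg, Finset.sum_neg_distrib, neg_div]
    rfl
  linarith

end Chain

/-! ### Infinite-volume limits satisfy the DLR equations -/

namespace Limit

open Chain

open scoped BoundedContinuousFunction

/-- The first `N` spins are forgotten. -/
def tail (N : ℕ) (u : SpinConfigN) : SpinConfigN := fun k => u (N + k)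

/-- The event that the first `N` spins are given by `σ`. -/
def cyl (N : ℕ) (σ : Fin N → Spin) : Set SpinConfigN := {u | ∀ i : Fin N, u i = σ i}

/-- The Gibbs weight of the volume `{0, …, N - 1}`. -/
noncomputable def wt (α β : ℝ) (N : ℕ) (u : SpinConfigN) : ℝ := exp (energyN α β N u)

/-- The conditional probability of `σ` prescribed by the DLR equations. -/
noncomputable def gam (α β : ℝ) (N : ℕ) (σ : Fin N → Spin) (u : SpinConfigN) : ℝ :=
  wt α β N (spliceN N σ u) / ∑ τ : Fin N → Spin, wt α β N (spliceN N τ u)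

lemma spliceN_lt {N k : ℕ} (h : k < N) (σ : Fin N → Spin) (u : SpinConfigN) :
    spliceN N σ u k = σ ⟨k, h⟩ := by simp [spliceN, h]

lemma spliceN_ge {N k : ℕ} (h : N ≤ k) (σ : Fin N → Spin) (u : SpinConfigN) :
    spliceN N σ u k = u k := by simp [spliceN, h]

lemma spliceN_spliceN (N : ℕ) (σ τ : Fin N → Spin) (u : SpinConfigN) :
    spliceN N σ (spliceN N τ u) = spliceN N σ u := by
  funext k
  by_cases h : k < N
  · rw [spliceN_lt h, spliceN_lt h]
  · rw [spliceN_ge (not_lt.1 h), spliceN_ge (not_lt.1 h), spliceN_ge (not_lt.1 h)]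

lemma tail_spliceN (N : ℕ) (τ : Fin N → Spin) (u : SpinConfigN) :
    tail N (spliceN N τ u) = tail N u := by
  funext k; exact spliceN_ge (by omega) _ _

lemma mem_cyl_spliceN (N : ℕ) (σ τ : Fin N → Spin) (u : SpinConfigN) :
    spliceN N τ u ∈ cyl N σ ↔ τ = σ := by
  simp only [cyl, Set.mem_ofPred_eq]
  constructor
  · intro h; funext i; rw [← h i, spliceN_lt i.2]
  · rintro rfl i; rw [spliceN_lt i.2]

lemma spliceN_append (N m : ℕ) (a a' : Fin N → Spin) (b : Fin m → Spin) (η : SpinConfigN) :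
    spliceN (N + m) (Fin.append a b) η =
      spliceN N a (spliceN (N + m) (Fin.append a' b) η) := by
  funext k
  by_cases h : k < N
  · rw [spliceN_lt h, spliceN_lt (by omega)]
    exact Fin.append_left a b ⟨k, h⟩
  · rw [spliceN_ge (N := N) (not_lt.1 h)]
    by_cases h' : k < N + m
    · rw [spliceN_lt h', spliceN_lt h']
      obtain ⟨j, rfl⟩ := Nat.exists_eq_add_of_le (not_lt.1 h)
      have hj : j < m := by omega
      have e : (⟨N + j, h'⟩ : Fin (N + m)) = Fin.natAdd N ⟨j, hj⟩ := rfl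
      rw [e, Fin.append_right, Fin.append_right]
    · rw [spliceN_ge (not_lt.1 h'), spliceN_ge (not_lt.1 h')]

lemma pair_abs (u : SpinConfigN) (p : ℕ × ℕ) : |(u p.1 : ℝ) * u p.2| = 1 := by
  rw [abs_mul, spin_abs, spin_abs, one_mul]

lemma norm_coup_mul (α : ℝ) (N : ℕ) (u : SpinConfigN) (p : ℕ × ℕ) :
    ‖coup α N p * ((u p.1 : ℝ) * u p.2)‖ ≤ coup α N p := by
  rw [norm_mul, Real.norm_of_nonneg (coup_nonneg _ _ _), Real.norm_eq_abs, pair_abs, mul_one]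

/-- Enlarging the volume changes the energy by a function of the outer spins only. -/
lemma wt_split {α : ℝ} (hα : 1 < α) (β : ℝ) (N m : ℕ) : ∃ r : SpinConfigN → ℝ,
    (∀ u, wt α β (N + m) u = wt α β N u * r u) ∧ ∀ τ u, r (spliceN N τ u) = r u := by
  refine ⟨fun u => exp (β * ∑' p : ℕ × ℕ, (coup α (N + m) p - coup α N p) * ((u p.1 : ℝ) * u p.2)),
    fun u => ?_, fun τ u => ?_⟩
  · have s1 : Summable fun p => coup α (N + m) p * ((u p.1 : ℝ) * u p.2) :=
      (coup_summable hα _).of_norm_bounded (norm_coup_mul _ _ u)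
    have s2 : Summable fun p => coup α N p * ((u p.1 : ℝ) * u p.2) :=
      (coup_summable hα _).of_norm_bounded (norm_coup_mul _ _ u)
    simp_rw [sub_mul]
    rw [s1.tsum_sub s2, wt, wt, ← exp_add, energyN_eq, energyN_eq]
    congr 1; ring
  · refine congrArg (fun x => exp (β * x)) (tsum_congr fun p => ?_)
    by_cases h : p.1 < p.2 ∧ N ≤ p.1
    · rw [spliceN_ge h.2, spliceN_ge (h.2.trans h.1.le)]
    · have : coup α (N + m) p - coup α N p = 0 := by
        unfold coup
        split_ifs <;> first | omega | simp
      rw [this, zero_mul, zero_mul]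

lemma wt_pos (α β : ℝ) (N : ℕ) (u : SpinConfigN) : 0 < wt α β N u := exp_pos _

lemma sum_wt_pos (α β : ℝ) (N : ℕ) (u : SpinConfigN) :
    0 < ∑ τ : Fin N → Spin, wt α β N (spliceN N τ u) :=
  Finset.sum_pos (fun _ _ => wt_pos _ _ _ _) ⟨fun _ => toSpin 1, Finset.mem_univ _⟩

lemma gam_spliceN (α β : ℝ) (N : ℕ) (σ τ : Fin N → Spin) (u : SpinConfigN) :
    gam α β N σ (spliceN N τ u) = gam α β N σ u := by
  simp only [gam, spliceN_spliceN]

lemma gam_nonneg (α β : ℝ) (N : ℕ) (σ : Fin N → Spin) (u : SpinConfigN) : 0 ≤ gam α β N σ u :=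
  div_nonneg (wt_pos _ _ _ _).le (sum_wt_pos _ _ _ _).le

/-- The DLR equations in finite volume. -/
lemma finite_dlr {α : ℝ} (hα : 1 < α) (β : ℝ) {N M : ℕ} (hNM : N ≤ M) (σ : Fin N → Spin)
    (η : SpinConfigN) (f : SpinConfigN → ℝ) :
    ∑ τ : Fin M → Spin, wt α β M (spliceN M τ η) * (f (tail N (spliceN M τ η)) *
        (cyl N σ).indicator (fun _ => 1) (spliceN M τ η))
      = ∑ τ : Fin M → Spin, wt α β M (spliceN M τ η) * (f (tail N (spliceN M τ η)) *
        gam α β N σ (spliceN M τ η)) := by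
  classical
  obtain ⟨m, rfl⟩ := Nat.exists_eq_add_of_le hNM
  obtain ⟨r, hr, hr'⟩ := wt_split hα β N m
  rw [← Equiv.sum_comp (Fin.appendEquiv N m), ← Equiv.sum_comp (Fin.appendEquiv N m),
    Fintype.sum_prod_type_right, Fintype.sum_prod_type_right]
  refine Finset.sum_congr rfl fun b _ => ?_
  have e : ∀ a : Fin N → Spin, spliceN (N + m) (Fin.appendEquiv N m (a, b)) η =
      spliceN N a (spliceN (N + m) (Fin.append σ b) η) := fun a => spliceN_append N m a σ b η
  set ξ := spliceN (N + m) (Fin.append σ b) η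
  have hi : ∀ a, (cyl N σ).indicator (fun _ => (1 : ℝ)) (spliceN N a ξ) = if a = σ then 1 else 0 := by
    intro a
    rw [Set.indicator_apply]
    simp only [mem_cyl_spliceN]
  simp_rw [e, hr, hr', tail_spliceN, gam_spliceN, hi]
  simp only [mul_ite, mul_one, mul_zero, Finset.sum_ite_eq', Finset.mem_univ, if_true]
  rw [gam]
  have hZ := (sum_wt_pos α β N ξ).ne'
  simp_rw [mul_assoc]
  rw [← Finset.sum_mul]
  field_simp

lemma continuous_wt {α : ℝ} (hα : 1 < α) (β : ℝ) (N : ℕ) : Continuous (wt α β N) := by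
  refine continuous_exp.comp ?_
  rw [funext fun u => energyN_eq α β N u]
  refine continuous_const.mul (continuous_tsum (fun p => ?_) (coup_summable hα N)
    fun p u => norm_coup_mul α N u p)
  fun_prop

lemma continuous_spliceN (N : ℕ) (σ : Fin N → Spin) : Continuous (spliceN N σ) := by
  refine continuous_pi fun k => ?_
  unfold spliceN
  split_ifs <;> fun_prop

lemma continuous_tail (N : ℕ) : Continuous (tail N) :=
  continuous_pi fun k => continuous_apply (N + k)

lemma continuous_gam {α : ℝ} (hα : 1 < α) (β : ℝ) (N : ℕ) (σ : Fin N → Spin) :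
    Continuous (gam α β N σ) :=
  ((continuous_wt hα β N).comp (continuous_spliceN N σ)).div
    (continuous_finsetSum _ fun τ _ => (continuous_wt hα β N).comp (continuous_spliceN N τ))
    fun u => (sum_wt_pos α β N u).ne'

lemma isClopen_cyl (N : ℕ) (σ : Fin N → Spin) : IsClopen (cyl N σ) := by
  have : cyl N σ = ⋂ i : Fin N, (fun u : SpinConfigN => u i) ⁻¹' {σ i} := by
    ext u; simp [cyl]
  rw [this]
  exact isClopen_iInter_of_finite fun i => (isClopen_discrete _).preimage (continuous_apply _)

lemma continuous_ind (N : ℕ) (σ : Fin N → Spin) :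
    Continuous ((cyl N σ).indicator (fun _ => (1 : ℝ))) :=
  (isClopen_cyl N σ).continuous_indicator continuous_const

/-- The finite-volume Gibbs measure with boundary condition `η`. -/
noncomputable def gibbs (α β : ℝ) (η : SpinConfigN) (M : ℕ) : Measure SpinConfigN :=
  ∑ τ : Fin M → Spin, ENNReal.ofReal (wt α β M (spliceN M τ η) /
    ∑ τ : Fin M → Spin, wt α β M (spliceN M τ η)) • Measure.dirac (spliceN M τ η)

instance (α β : ℝ) (η : SpinConfigN) (M : ℕ) : IsProbabilityMeasure (gibbs α β η M) := by
  constructor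
  have hZ := sum_wt_pos α β M η
  simp only [gibbs, Measure.coe_finsetSum, Finset.sum_apply, Measure.smul_apply, measure_univ,
    smul_eq_mul, mul_one]
  rw [← ENNReal.ofReal_sum_of_nonneg fun τ _ => div_nonneg (wt_pos _ _ _ _).le hZ.le,
    ← Finset.sum_div, div_self hZ.ne', ENNReal.ofReal_one]

lemma integral_gibbs (α β : ℝ) (η : SpinConfigN) (M : ℕ) (f : SpinConfigN → ℝ) :
    ∫ u, f u ∂gibbs α β η M = (∑ τ : Fin M → Spin, wt α β M (spliceN M τ η) * f (spliceN M τ η)) /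
      ∑ τ : Fin M → Spin, wt α β M (spliceN M τ η) := by
  have hZ := sum_wt_pos α β M η
  rw [gibbs, integral_finsetSum_measure, Finset.sum_div]
  · refine Finset.sum_congr rfl fun τ _ => ?_
    rw [integral_smul_measure, integral_dirac, smul_eq_mul,
      ENNReal.toReal_ofReal (div_nonneg (wt_pos _ _ _ _).le hZ.le)]
    ring
  · intro τ _
    exact (integrable_dirac (by simp)).smul_measure ENNReal.ofReal_ne_top

/-- A probability measure with the DLR property against continuous functions of the tail satisfies
the DLR equations. -/
lemma dlr_of_continuous {α : ℝ} (hα : 1 < α) (β : ℝ) (ν : Measure SpinConfigN)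
    [IsProbabilityMeasure ν]
    (h : ∀ (N : ℕ) (σ : Fin N → Spin) (f : SpinConfigN →ᵇ ℝ),
      ∫ u, f (tail N u) * (cyl N σ).indicator (fun _ => 1) u ∂ν
        = ∫ u, f (tail N u) * gam α β N σ u ∂ν) :
    OneSidedDLR α β ν := by
  refine ⟨inferInstance, fun N _ σ => ?_⟩
  have hm : MeasurableSpace.comap (tail N) MeasurableSpace.pi ≤ MeasurableSpace.pi :=
    (continuous_tail N).measurable.comap_le
  have hbd : ∀ g : SpinConfigN → ℝ, Continuous g → Integrable g ν := fun g hg =>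
    (BoundedContinuousFunction.mkOfCompact ⟨g, hg⟩).integrable ν
  have hk := hbd _ (continuous_gam hα β N σ)
  have hcyl : MeasurableSet (cyl N σ) := (isClopen_cyl N σ).isOpen.measurableSet
  have hkm : Measurable fun u => ENNReal.ofReal (gam α β N σ u) :=
    (continuous_gam hα β N σ).measurable.ennreal_ofReal
  have : IsFiniteMeasure (ν.withDensity fun u => ENNReal.ofReal (gam α β N σ u)) :=
    isFiniteMeasure_withDensity_ofReal hk.2
  have hmap : (ν.withDensity fun u => ENNReal.ofReal (gam α β N σ u)).map (tail N)
      = (ν.restrict (cyl N σ)).map (tail N) := by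
    refine ext_of_forall_integral_eq_of_IsFiniteMeasure fun f => ?_
    rw [integral_map (continuous_tail N).aemeasurable f.continuous.aestronglyMeasurable,
      integral_map (continuous_tail N).aemeasurable f.continuous.aestronglyMeasurable,
      integral_withDensity_eq_integral_toReal_smul hkm (by simp), ← integral_indicator hcyl]
    trans ∫ u, f (tail N u) * gam α β N σ u ∂ν
    · refine integral_congr_ae (.of_forall fun u => ?_)
      simp only [smul_eq_mul]
      rw [ENNReal.toReal_ofReal (gam_nonneg _ _ _ _ _), mul_comm]
    · rw [← h]
      refine integral_congr_ae (.of_forall fun u => ?_)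
      by_cases hu : u ∈ cyl N σ <;> simp [hu]
  refine ae_eq_condExp_of_forall_setIntegral_eq hm (hbd _ (continuous_ind N σ))
    (fun s _ _ => hk.integrableOn) ?_ ?_
  · rintro _ ⟨t, ht, rfl⟩ _
    have h1 := congrArg (fun μ => (μ t).toReal) hmap
    simp only [Measure.map_apply (continuous_tail N).measurable ht] at h1
    have ht' : MeasurableSet (tail N ⁻¹' t) := (continuous_tail N).measurable ht
    rw [withDensity_apply _ ht', Measure.restrict_apply ht'] at h1
    have e1 : ∫ u in tail N ⁻¹' t, gam α β N σ u ∂ν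
        = (∫⁻ u in tail N ⁻¹' t, ENNReal.ofReal (gam α β N σ u) ∂ν).toReal :=
      integral_eq_lintegral_of_nonneg_ae (.of_forall fun u => gam_nonneg _ _ _ _ _)
        (continuous_gam hα β N σ).aestronglyMeasurable
    have e2 : ∫ u in tail N ⁻¹' t, (cyl N σ).indicator (fun _ => (1 : ℝ)) u ∂ν
        = (ν (tail N ⁻¹' t ∩ cyl N σ)).toReal := by
      rw [setIntegral_indicator hcyl]
      simp [Measure.real]
    exact e1.trans (h1.trans e2.symm)
  · -- the kernel is a measurable function of the tail
    let pad : SpinConfigN → SpinConfigN := fun v k => if k < N then toSpin 1 else v (k - N)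
    have hpad : Continuous pad := by
      refine continuous_pi fun k => ?_
      by_cases hk : k < N <;> simp only [pad, hk, if_true, if_false] <;> fun_prop
    have e : gam α β N σ = (fun v => gam α β N σ (pad v)) ∘ tail N := by
      funext u
      have : pad (tail N u) = spliceN N (fun _ => toSpin 1) u := by
        funext k
        by_cases hk : k < N
        · simp [pad, spliceN, hk]
        · have : N + (k - N) = k := by omega
          simp [pad, spliceN, hk, tail, this]
      simp only [Function.comp, this, gam_spliceN]
    have : Measurable[MeasurableSpace.comap (tail N) MeasurableSpace.pi] (gam α β N σ) := by
      rw [e]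
      exact ((continuous_gam hα β N σ).comp hpad).measurable.comp (comap_measurable _)
    exact this.stronglyMeasurable.aestronglyMeasurable

/-- Every boundary condition yields a solution of the DLR equations, whose magnetisation is a limit
point of the finite-volume magnetisations. -/
lemma exists_dlr {α : ℝ} (hα : 1 < α) (β : ℝ) (η : SpinConfigN) : ∃ ν : Measure SpinConfigN,
    OneSidedDLR α β ν ∧ Filter.Tendsto (mag α β η) (Filter.hyperfilter ℕ)
      (nhds (∫ u, (u 0 : ℝ) ∂ν)) := by
  let P : ℕ → ProbabilityMeasure SpinConfigN := fun M => ⟨gibbs α β η M, inferInstance⟩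
  let ν : ProbabilityMeasure SpinConfigN := ((Filter.hyperfilter ℕ).map P).lim
  have hlim : Filter.Tendsto P (Filter.hyperfilter ℕ) (nhds ν) :=
    ((Filter.hyperfilter ℕ).map P).le_nhds_lim
  rw [ProbabilityMeasure.tendsto_iff_forall_integral_tendsto] at hlim
  have hlim' : ∀ g : SpinConfigN → ℝ, Continuous g → Filter.Tendsto
      (fun M => ∫ u, g u ∂gibbs α β η M) (Filter.hyperfilter ℕ) (nhds (∫ u, g u ∂(ν : Measure _))) :=
    fun g hg => hlim (BoundedContinuousFunction.mkOfCompact ⟨g, hg⟩)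
  refine ⟨ν, dlr_of_continuous hα β ν fun N σ f => ?_, ?_⟩
  · have t1 := hlim' _ ((f.continuous.comp (continuous_tail N)).mul (continuous_ind N σ))
    have t2 := hlim' _ ((f.continuous.comp (continuous_tail N)).mul (continuous_gam hα β N σ))
    refine tendsto_nhds_unique_of_eventuallyEq t1 t2 ?_
    refine ((Filter.eventually_ge_atTop N).filter_mono Nat.hyperfilter_le_atTop).mono fun M hM => ?_
    simp only [integral_gibbs]
    congr 1
    exact finite_dlr hα β hM σ η f
  · have t := hlim' (fun u => (u 0 : ℝ)) (by fun_prop)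
    simp only [integral_gibbs] at t
    exact t

end Limit

/-- **Theorem 1 (phase transition for the one-sided long-range Ising model).**
For every `α ∈ (1,2]` there is a finite inverse temperature `β > 0` at which the
one-sided DLR equations of the long-range Ising model have at least two distinct
solutions. -/
theorem onesided_longrange_ising_phase_transition
    (α : ℝ) (hα₁ : 1 < α) (hα₂ : α ≤ 2) :
    ∃ β : ℝ, 0 < β ∧
      ∃ ν₁ ν₂ : Measure SpinConfigN,
        OneSidedDLR α β ν₁ ∧ OneSidedDLR α β ν₂ ∧ ν₁ ≠ ν₂ := by
  obtain ⟨ν₁, h₁, t₁⟩ := Limit.exists_dlr hα₁ 720 (fun _ => Chain.toSpin 1)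
  obtain ⟨ν₂, h₂, t₂⟩ := Limit.exists_dlr hα₁ 720 (fun _ => Chain.toSpin (-1))
  refine ⟨720, by norm_num, ν₁, ν₂, h₁, h₂, ?_⟩
  rintro rfl
  have a := ge_of_tendsto' t₁ fun N => Chain.mag_plus hα₁ hα₂ N
  have b := le_of_tendsto' t₂ fun N => Chain.mag_minus hα₁ hα₂ N
  linarith
end

section
/- Let (φ_n) be a normalized continuous potential sequence on X = ∏_{n≥0} A_n whose uniform variations r_k satisfy Berbee's condition, let μ be a Gibbs chain for (φ_n), and let π̂ : X → Y be a symbolic map. Then every cylinder set of X and of Y has positive measure under μ and μ∘π̂⁻¹ respectively, and for every k ≥ 1 and every word w ∈ ∏_{i<k} A_i, the functions y ↦ μ([w] ∩ π̂⁻¹([y]_N)) / μ(π̂⁻¹([y]_N)) (where [w] = {x ∈ X : x_i = w_i for i < k} and [y]_N = {y' ∈ Y : y'_i = y_i for i < N}) converge uniformly in y ∈ Y as N → ∞, and the limit is a continuous function of y. That is, the conditional probability measure μ(· | π̂(x) = y) depends continuously on y. -/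
/-!
Fix a point `y` of `Y` and let `C n` be the set of letters of `A n` over `y n`. Conditioning a
Gibbs chain successively on its tails gives
`∫ f` over `π̂⁻¹[y]_N` `= ∫ F_N dμ`, where `F_N(x)` is the sum of
`exp (φ_0 + ⋯ + φ_{N-1}) * f` over all points obtained from `x` by replacing the first `N`
coordinates by letters of `C 0, …, C (N-1)` (`fiberSum`, `setIntegral_cylinder`). Writing `Z_N`
for `F_N` with `f = 1`, positivity of cylinders follows from `Z_N > 0`, and the conditional
probability of `[w]` given `π̂⁻¹[y]_N` is a weighted mean of the ratios `R_N = F_N / Z_N`, with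
`f` the indicator of `[w]`. Let `S_N`, `I_N` be the supremum and infimum of `R_N`. The intervals
`[I_N, S_N]` are nested, so it suffices that `D_N = S_N - I_N` tends to `0` uniformly in `y`.

For this, compare two tails `t`, `t'` that agree on the coordinates `n ≤ i < N`, and look at
`(S_n Z_n(t) - F_n(t)) + (F_n(t') - I_n Z_n(t'))`. Both brackets are nonnegative. For `n = 0` and
`f` depending on the first `N` coordinates, the sum is exactly `D_0`. Passing from `n` to `n + 1`
keeps a proportion `exp (-r_{N-n})` of the bound relative to `max (Z_n(t), Z_n(t'))`
(`gain_step`), and replacing `S_n, I_n` by `S_{n+1}, I_{n+1}` costs at most `D_n - D_{n+1}` times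
this maximum (`gain_bound`). At `n = N` the tails are arbitrary, and with
`s_m = exp (-(r_1 + ⋯ + r_m))` one obtains the renewal inequality (`renewal_step`)
`∑_{i ≤ N} s_{N-i} D_i ≤ ∑_{i < N} s_{N-1-i} D_i` for `N ≥ k`.
These sums are therefore nonincreasing in `N`, hence at most `k`; as `D` is nonincreasing,
`D_N * ∑_{i ≤ N} s_i ≤ k` (`avgOsc_mul_sum_le`). The bound does not involve `y`, and Berbee's
condition says that the sum diverges. The limit is continuous as a uniform limit of locally
constant functions.
-/

open MeasureTheory Real Filter

/-- The σ-algebra on `X = ∏_{n≥0} A_n` generated by the coordinates `(x_m, x_{m+1}, …)`. -/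
def tailAlgebra (A : ℕ → Type) [∀ n, MeasurableSpace (A n)] (m : ℕ) :
    MeasurableSpace (∀ n, A n) :=
  MeasurableSpace.comap (fun (x : ∀ n, A n) (k : ℕ) => x (m + k)) MeasurableSpace.pi

/-- `(φ_n)` is a normalized continuous potential sequence on `X = ∏_{n≥0} A_n`:
each `φ_n` is continuous, depends only on the coordinates `(x_n, x_{n+1}, …)`
(i.e. it is a function of `x^{(n)}`), and `∑_{a ∈ A_n} exp(φ_n(a·x^{(n+1)})) = 1`. -/
def IsNormalizedPotential (A : ℕ → Type) [∀ n, Fintype (A n)]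
    [∀ n, TopologicalSpace (A n)] (φ : ℕ → (∀ k, A k) → ℝ) : Prop :=
  (∀ n, Continuous (φ n)) ∧
  (∀ n (x y : ∀ k, A k), (∀ k, n ≤ k → x k = y k) → φ n x = φ n y) ∧
  (∀ n (x : ∀ k, A k), ∑ a : A n, Real.exp (φ n (Function.update x n a)) = 1)

/-- `μ` is a Gibbs chain for `(φ_n)`: for every `n` and `a ∈ A_n` the function
`x ↦ exp(φ_n(a·x^{(n+1)}))` is a version of the conditional expectation of the
indicator of `{x_n = a}` given the σ-algebra generated by `(x_{n+1}, x_{n+2}, …)`. -/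
def IsGibbsChain (A : ℕ → Type) [∀ n, MeasurableSpace (A n)]
    (φ : ℕ → (∀ k, A k) → ℝ) (μ : Measure (∀ n, A n)) : Prop :=
  IsProbabilityMeasure μ ∧
    ∀ n (a : A n),
      (fun x : ∀ k, A k => Real.exp (φ n (Function.update x n a)))
        =ᵐ[μ]
      μ[Set.indicator {x : ∀ k, A k | x n = a} (fun _ => (1 : ℝ)) | tailAlgebra A (n + 1)]

/-! ### Weighted sums over a fiber -/

section Aux

variable {A : ℕ → Type}

/-- The weighted sum of `f` over all points that agree with `x` from coordinate `n` on and whose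
coordinates `i < n` lie in `C i`, a point `z` having weight `exp (φ 0 z + ⋯ + φ (n - 1) z)`. The
sum is built up one coordinate at a time, so it does not depend on the first `n` coordinates of
`x` as soon as each `φ i` is a function of the coordinates from `i` on. -/
noncomputable def fiberSum (φ : ℕ → (∀ k, A k) → ℝ) (C : ∀ n, Finset (A n))
    (f : (∀ k, A k) → ℝ) : ℕ → (∀ k, A k) → ℝ
  | 0, x => f x
  | n + 1, x => ∑ a ∈ C n, Real.exp (φ n (Function.update x n a)) *
      fiberSum φ C f n (Function.update x n a)

lemma update_agree {n : ℕ} {x y : ∀ k, A k} (h : ∀ k, n + 1 ≤ k → x k = y k) (a : A n) :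
    ∀ k, n ≤ k → Function.update x n a k = Function.update y n a k := by
  intro k hk
  rcases eq_or_ne k n with rfl | hne
  · simp
  · simp [hne, h k (by omega)]

lemma fiberSum_congr (φ : ℕ → (∀ k, A k) → ℝ)
    (hdep : ∀ n (x y : ∀ k, A k), (∀ k, n ≤ k → x k = y k) → φ n x = φ n y)
    (C : ∀ n, Finset (A n)) (f : (∀ k, A k) → ℝ) (n : ℕ) :
    ∀ x y : ∀ k, A k, (∀ k, n ≤ k → x k = y k) → fiberSum φ C f n x = fiberSum φ C f n y := by
  induction n with
  | zero =>
    intro x y h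
    rw [show x = y from funext fun k => h k (Nat.zero_le k)]
  | succ n ih =>
    intro x y h
    simp only [fiberSum]
    refine Finset.sum_congr rfl fun a _ => ?_
    rw [hdep n _ _ (update_agree h a), ih _ _ (update_agree h a)]

lemma fiberSum_mono (φ : ℕ → (∀ k, A k) → ℝ) (C : ∀ n, Finset (A n))
    {f g : (∀ k, A k) → ℝ} (h : ∀ x, f x ≤ g x) (n : ℕ) :
    ∀ x, fiberSum φ C f n x ≤ fiberSum φ C g n x := by
  induction n with
  | zero => exact h
  | succ n ih =>
    intro x
    exact Finset.sum_le_sum fun a _ => mul_le_mul_of_nonneg_left (ih _) (Real.exp_nonneg _)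

lemma fiberSum_nonneg (φ : ℕ → (∀ k, A k) → ℝ) (C : ∀ n, Finset (A n))
    {f : (∀ k, A k) → ℝ} (h : ∀ x, 0 ≤ f x) (n : ℕ) :
    ∀ x, 0 ≤ fiberSum φ C f n x := by
  induction n with
  | zero => exact h
  | succ n ih =>
    intro x
    exact Finset.sum_nonneg fun a _ => mul_nonneg (Real.exp_nonneg _) (ih _)

lemma fiberSum_one_pos (φ : ℕ → (∀ k, A k) → ℝ) (C : ∀ n, Finset (A n))
    (hC : ∀ n, (C n).Nonempty) (n : ℕ) :
    ∀ x, 0 < fiberSum φ C (fun _ => 1) n x := by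
  induction n with
  | zero => intro x; exact one_pos
  | succ n ih =>
    intro x
    exact Finset.sum_pos (fun a _ => mul_pos (Real.exp_pos _) (ih _)) (hC n)

lemma fiberSum_one_le [∀ n, Fintype (A n)] (φ : ℕ → (∀ k, A k) → ℝ)
    (hnorm : ∀ n (x : ∀ k, A k), ∑ a : A n, Real.exp (φ n (Function.update x n a)) = 1)
    (C : ∀ n, Finset (A n)) (n : ℕ) :
    ∀ x, fiberSum φ C (fun _ => 1) n x ≤ 1 := by
  induction n with
  | zero => intro x; exact le_rfl
  | succ n ih =>
    intro x
    calc _ ≤ ∑ a ∈ C n, Real.exp (φ n (Function.update x n a)) :=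
          Finset.sum_le_sum fun a _ => mul_le_of_le_one_right (Real.exp_nonneg _) (ih _)
      _ ≤ ∑ a : A n, Real.exp (φ n (Function.update x n a)) :=
          Finset.sum_le_sum_of_subset_of_nonneg (Finset.subset_univ _)
            fun _ _ _ => Real.exp_nonneg _
      _ = 1 := hnorm n x

/-- A restriction on a coordinate `N ≥ n` is not affected by summing over the coordinates `< n`. -/
lemma fiberSum_indicator (φ : ℕ → (∀ k, A k) → ℝ) (C : ∀ n, Finset (A n))
    (f : (∀ k, A k) → ℝ) {n N : ℕ} (hn : n ≤ N) (D : Set (A N)) :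
    fiberSum φ C (Set.indicator {x | x N ∈ D} f) n =
      Set.indicator {x | x N ∈ D} (fiberSum φ C f n) := by
  induction n with
  | zero => rfl
  | succ n ih =>
    funext x
    have ih := ih (by omega)
    have hne : N ≠ n := by omega
    have hup : ∀ a : A n, Function.update x n a ∈ {x : ∀ k, A k | x N ∈ D} ↔
        x ∈ {x : ∀ k, A k | x N ∈ D} := by
      intro a
      change Function.update x n a N ∈ D ↔ x N ∈ D
      rw [Function.update_of_ne hne]
    by_cases hx : x ∈ {x : ∀ k, A k | x N ∈ D}
    · rw [Set.indicator_of_mem hx]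
      simp only [fiberSum, ih]
      exact Finset.sum_congr rfl fun a _ => by rw [Set.indicator_of_mem ((hup a).2 hx)]
    · rw [Set.indicator_of_notMem hx]
      simp only [fiberSum, ih]
      refine Finset.sum_eq_zero fun a _ => ?_
      rw [Set.indicator_of_notMem (mt (hup a).1 hx), mul_zero]

/-! ### Oscillation of fiber averages -/

section Osc

variable (φ : ℕ → (∀ k, A k) → ℝ) (C : ∀ n, Finset (A n)) (f : (∀ k, A k) → ℝ)

/-- The weighted average of `f` over the words of length `n` in `C`, given the tail of `x`. -/
noncomputable def fiberAvg (n : ℕ) (x : ∀ k, A k) : ℝ :=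
  fiberSum φ C f n x / fiberSum φ C (fun _ => 1) n x

/-- The supremum over all tails of the fiber averages of level `n`. -/
noncomputable def avgSup (n : ℕ) : ℝ := ⨆ x, fiberAvg φ C f n x

/-- The infimum over all tails of the fiber averages of level `n`. -/
noncomputable def avgInf (n : ℕ) : ℝ := ⨅ x, fiberAvg φ C f n x

variable {φ C f}

lemma fiberAvg_nonneg (hC : ∀ n, (C n).Nonempty) (hf0 : ∀ x, 0 ≤ f x) (n : ℕ) (x : ∀ k, A k) :
    0 ≤ fiberAvg φ C f n x :=
  div_nonneg (fiberSum_nonneg φ C hf0 n x) (fiberSum_one_pos φ C hC n x).le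

lemma fiberAvg_le_one (hC : ∀ n, (C n).Nonempty) (hf1 : ∀ x, f x ≤ 1) (n : ℕ) (x : ∀ k, A k) :
    fiberAvg φ C f n x ≤ 1 :=
  (div_le_one (fiberSum_one_pos φ C hC n x)).2 (fiberSum_mono φ C hf1 n x)

lemma avgSup_le_one [Nonempty (∀ k, A k)] (hC : ∀ n, (C n).Nonempty) (hf1 : ∀ x, f x ≤ 1)
    (n : ℕ) : avgSup φ C f n ≤ 1 :=
  ciSup_le fun x => fiberAvg_le_one hC hf1 n x

lemma avgInf_nonneg [Nonempty (∀ k, A k)] (hC : ∀ n, (C n).Nonempty) (hf0 : ∀ x, 0 ≤ f x)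
    (n : ℕ) : 0 ≤ avgInf φ C f n :=
  le_ciInf fun x => fiberAvg_nonneg hC hf0 n x

lemma fiberAvg_le_avgSup (hC : ∀ n, (C n).Nonempty) (hf1 : ∀ x, f x ≤ 1) (n : ℕ)
    (x : ∀ k, A k) : fiberAvg φ C f n x ≤ avgSup φ C f n :=
  le_ciSup (f := fiberAvg φ C f n)
    ⟨1, by rintro _ ⟨y, rfl⟩; exact fiberAvg_le_one hC hf1 n y⟩ x

lemma avgInf_le_fiberAvg (hC : ∀ n, (C n).Nonempty) (hf0 : ∀ x, 0 ≤ f x) (n : ℕ)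
    (x : ∀ k, A k) : avgInf φ C f n ≤ fiberAvg φ C f n x :=
  ciInf_le (f := fiberAvg φ C f n)
    ⟨0, by rintro _ ⟨y, rfl⟩; exact fiberAvg_nonneg hC hf0 n y⟩ x

lemma fiberSum_le_avgSup (hC : ∀ n, (C n).Nonempty) (hf1 : ∀ x, f x ≤ 1) (n : ℕ)
    (x : ∀ k, A k) :
    fiberSum φ C f n x ≤ avgSup φ C f n * fiberSum φ C (fun _ => 1) n x :=
  (div_le_iff₀ (fiberSum_one_pos φ C hC n x)).1 (fiberAvg_le_avgSup hC hf1 n x)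

lemma avgInf_le_fiberSum (hC : ∀ n, (C n).Nonempty) (hf0 : ∀ x, 0 ≤ f x) (n : ℕ)
    (x : ∀ k, A k) :
    avgInf φ C f n * fiberSum φ C (fun _ => 1) n x ≤ fiberSum φ C f n x :=
  (le_div_iff₀ (fiberSum_one_pos φ C hC n x)).1 (avgInf_le_fiberAvg hC hf0 n x)

lemma avgSup_antitone [Nonempty (∀ k, A k)] (hC : ∀ n, (C n).Nonempty) (hf1 : ∀ x, f x ≤ 1) :
    Antitone (avgSup φ C f) := by
  refine antitone_nat_of_succ_le fun n => ciSup_le fun x => ?_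
  rw [fiberAvg, div_le_iff₀ (fiberSum_one_pos φ C hC _ x)]
  simp only [fiberSum, Finset.mul_sum]
  refine Finset.sum_le_sum fun a _ => ?_
  have := mul_le_mul_of_nonneg_left (fiberSum_le_avgSup (φ := φ) hC hf1 n (Function.update x n a))
    (Real.exp_nonneg (φ n (Function.update x n a)))
  linarith

lemma avgInf_monotone [Nonempty (∀ k, A k)] (hC : ∀ n, (C n).Nonempty) (hf0 : ∀ x, 0 ≤ f x) :
    Monotone (avgInf φ C f) := by
  refine monotone_nat_of_le_succ fun n => le_ciInf fun x => ?_
  rw [fiberAvg, le_div_iff₀ (fiberSum_one_pos φ C hC _ x)]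
  simp only [fiberSum, Finset.mul_sum]
  refine Finset.sum_le_sum fun a _ => ?_
  have := mul_le_mul_of_nonneg_left (avgInf_le_fiberSum (φ := φ) hC hf0 n (Function.update x n a))
    (Real.exp_nonneg (φ n (Function.update x n a)))
  linarith

/-- One step of the coupling estimate. For each letter `a` the weights of `a` in front of `t` and
of `t'` differ by a factor of at most `exp ρ`, so the smaller of the two dominates `exp (-ρ)` times
the larger; since both brackets are nonnegative, a lower bound `g` relative to the larger mass
survives the summation over `a` up to the factor `exp (-ρ)`. -/
lemma gain_step (hC : ∀ n, (C n).Nonempty) (hf0 : ∀ x, 0 ≤ f x) (hf1 : ∀ x, f x ≤ 1)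
    {n : ℕ} {t t' : ∀ k, A k} {ρ g : ℝ}
    (hρ : ∀ a ∈ C n, |φ n (Function.update t n a) - φ n (Function.update t' n a)| ≤ ρ)
    (hg : 0 ≤ g)
    (ih : ∀ a ∈ C n, g * max (fiberSum φ C (fun _ => 1) n (Function.update t n a))
          (fiberSum φ C (fun _ => 1) n (Function.update t' n a)) ≤
        (avgSup φ C f n * fiberSum φ C (fun _ => 1) n (Function.update t n a)
          - fiberSum φ C f n (Function.update t n a)) +
        (fiberSum φ C f n (Function.update t' n a)
          - avgInf φ C f n * fiberSum φ C (fun _ => 1) n (Function.update t' n a))) :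
    Real.exp (-ρ) * g * max (fiberSum φ C (fun _ => 1) (n + 1) t)
          (fiberSum φ C (fun _ => 1) (n + 1) t') ≤
        (avgSup φ C f n * fiberSum φ C (fun _ => 1) (n + 1) t - fiberSum φ C f (n + 1) t) +
        (fiberSum φ C f (n + 1) t' - avgInf φ C f n * fiberSum φ C (fun _ => 1) (n + 1) t') := by
  have key : ∀ a ∈ C n, Real.exp (-ρ) * g *
      max (Real.exp (φ n (Function.update t n a)) *
            fiberSum φ C (fun _ => 1) n (Function.update t n a))
          (Real.exp (φ n (Function.update t' n a)) *
            fiberSum φ C (fun _ => 1) n (Function.update t' n a)) ≤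
      Real.exp (φ n (Function.update t n a)) *
        (avgSup φ C f n * fiberSum φ C (fun _ => 1) n (Function.update t n a)
          - fiberSum φ C f n (Function.update t n a)) +
      Real.exp (φ n (Function.update t' n a)) *
        (fiberSum φ C f n (Function.update t' n a)
          - avgInf φ C f n * fiberSum φ C (fun _ => 1) n (Function.update t' n a)) := by
    intro a ha
    have h1 := hρ a ha
    have h2 := ih a ha
    have hu := sub_nonneg.2 (fiberSum_le_avgSup (φ := φ) hC hf1 n (Function.update t n a))
    have hl := sub_nonneg.2 (avgInf_le_fiberSum (φ := φ) hC hf0 n (Function.update t' n a))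
    have hz := (fiberSum_one_pos φ C hC n (Function.update t n a)).le
    have hz' := (fiberSum_one_pos φ C hC n (Function.update t' n a)).le
    generalize fiberSum φ C (fun _ => 1) n (Function.update t n a) = z at *
    generalize fiberSum φ C (fun _ => 1) n (Function.update t' n a) = z' at *
    generalize avgSup φ C f n * z - fiberSum φ C f n (Function.update t n a) = U at *
    generalize fiberSum φ C f n (Function.update t' n a) - avgInf φ C f n * z' = V at *
    generalize φ n (Function.update t n a) = s at *
    generalize φ n (Function.update t' n a) = s' at *
    rw [abs_le] at h1
    -- both weights are at least `m`, and `exp (-ρ)` times either is at most `m`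
    set m := min (Real.exp s) (Real.exp s') with hm
    have e1 : Real.exp (-ρ) * Real.exp s ≤ m := by
      rw [← Real.exp_add, hm, le_min_iff, Real.exp_le_exp, Real.exp_le_exp]
      constructor <;> linarith [abs_nonneg (s - s')]
    have e2 : Real.exp (-ρ) * Real.exp s' ≤ m := by
      rw [← Real.exp_add, hm, le_min_iff, Real.exp_le_exp, Real.exp_le_exp]
      constructor <;> linarith
    have hm0 : 0 ≤ m := le_min (Real.exp_nonneg _) (Real.exp_nonneg _)
    have e3 : Real.exp (-ρ) * max (Real.exp s * z) (Real.exp s' * z') ≤ m * max z z' := by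
      rw [mul_max_of_nonneg _ _ (Real.exp_nonneg _), max_le_iff, ← mul_assoc, ← mul_assoc]
      exact ⟨mul_le_mul e1 (le_max_left _ _) hz hm0, mul_le_mul e2 (le_max_right _ _) hz' hm0⟩
    calc _ = g * (Real.exp (-ρ) * max (Real.exp s * z) (Real.exp s' * z')) := by ring
      _ ≤ g * (m * max z z') := mul_le_mul_of_nonneg_left e3 hg
      _ = m * (g * max z z') := by ring
      _ ≤ m * (U + V) := mul_le_mul_of_nonneg_left h2 hm0
      _ = m * U + m * V := by ring
      _ ≤ _ := add_le_add (mul_le_mul_of_nonneg_right (min_le_left _ _) hu)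
          (mul_le_mul_of_nonneg_right (min_le_right _ _) hl)
  have hsum := Finset.sum_le_sum key
  have hR : (avgSup φ C f n * fiberSum φ C (fun _ => 1) (n + 1) t - fiberSum φ C f (n + 1) t) +
        (fiberSum φ C f (n + 1) t' - avgInf φ C f n * fiberSum φ C (fun _ => 1) (n + 1) t')
      = ∑ a ∈ C n, (Real.exp (φ n (Function.update t n a)) *
        (avgSup φ C f n * fiberSum φ C (fun _ => 1) n (Function.update t n a)
          - fiberSum φ C f n (Function.update t n a)) +
      Real.exp (φ n (Function.update t' n a)) *
        (fiberSum φ C f n (Function.update t' n a)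
          - avgInf φ C f n * fiberSum φ C (fun _ => 1) n (Function.update t' n a))) := by
    simp only [fiberSum, Finset.mul_sum, ← Finset.sum_sub_distrib, ← Finset.sum_add_distrib]
    exact Finset.sum_congr rfl fun a _ => by ring
  rw [hR]
  refine le_trans ?_ hsum
  rw [← Finset.mul_sum]
  refine mul_le_mul_of_nonneg_left ?_ (by positivity)
  exact max_le (Finset.sum_le_sum fun a _ => le_max_left _ _)
    (Finset.sum_le_sum fun a _ => le_max_right _ _)

/-- The oscillation over all tails of the fiber averages of level `n`. -/
noncomputable def avgOsc (φ : ℕ → (∀ k, A k) → ℝ) (C : ∀ n, Finset (A n))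
    (f : (∀ k, A k) → ℝ) (n : ℕ) : ℝ := avgSup φ C f n - avgInf φ C f n

lemma avgOsc_antitone [Nonempty (∀ k, A k)] (hC : ∀ n, (C n).Nonempty) (hf0 : ∀ x, 0 ≤ f x)
    (hf1 : ∀ x, f x ≤ 1) : Antitone (avgOsc φ C f) := fun _ _ h =>
  sub_le_sub (avgSup_antitone hC hf1 h) (avgInf_monotone hC hf0 h)

lemma avgOsc_le_one [Nonempty (∀ k, A k)] (hC : ∀ n, (C n).Nonempty) (hf0 : ∀ x, 0 ≤ f x)
    (hf1 : ∀ x, f x ≤ 1) (n : ℕ) : avgOsc φ C f n ≤ 1 := by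
  have h1 := avgSup_le_one (φ := φ) hC hf1 n
  have h2 := avgInf_nonneg (φ := φ) hC hf0 n
  unfold avgOsc; linarith

/-- The terms `exp (-(r_1 + ⋯ + r_m))` of Berbee's series. -/
noncomputable def survival (r : ℕ → ℝ) (m : ℕ) : ℝ := Real.exp (-(∑ i ∈ Finset.Icc 1 m, r i))

lemma survival_succ (r : ℕ → ℝ) (m : ℕ) :
    survival r (m + 1) = Real.exp (-r (m + 1)) * survival r m := by
  rw [survival, survival, Finset.sum_Icc_succ_top (by omega), ← Real.exp_add]
  congr 1; ring

lemma survival_pos (r : ℕ → ℝ) (m : ℕ) : 0 < survival r m := Real.exp_pos _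

/-- The lower bound for the two brackets at level `n`, for tails `t`, `t'` that agree on `[n, N)`.
It is multiplied through by `survival r (N - n)`, so that its coefficient starts at
`survival r N * avgOsc 0` and only loses the decrements of the oscillation. -/
lemma gain_bound [Nonempty (∀ k, A k)] (hC : ∀ n, (C n).Nonempty) (hf0 : ∀ x, 0 ≤ f x)
    (hf1 : ∀ x, f x ≤ 1) {r : ℕ → ℝ}
    (hr : ∀ k, 1 ≤ k → ∀ n (x y : ∀ j, A j),
      (∀ i, n ≤ i → i < n + k → x i = y i) → |φ n x - φ n y| ≤ r k)
    {N : ℕ} (hfN : ∀ x y : ∀ k, A k, (∀ i, i < N → x i = y i) → f x = f y)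
    {n : ℕ} (hn : n ≤ N) :
    ∀ t t' : ∀ k, A k, (∀ i, n ≤ i → i < N → t i = t' i) →
      (survival r N * avgOsc φ C f 0 -
          ∑ i ∈ Finset.range n, survival r (N - 1 - i) * (avgOsc φ C f i - avgOsc φ C f (i + 1))) *
        max (fiberSum φ C (fun _ => 1) n t) (fiberSum φ C (fun _ => 1) n t') ≤
      survival r (N - n) *
        ((avgSup φ C f n * fiberSum φ C (fun _ => 1) n t - fiberSum φ C f n t) +
         (fiberSum φ C f n t' - avgInf φ C f n * fiberSum φ C (fun _ => 1) n t')) := by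
  induction n with
  | zero =>
    intro t t' h
    have := hfN t t' fun i hi => h i (Nat.zero_le i) hi
    simp only [fiberSum, this, avgOsc, Finset.range_zero, Finset.sum_empty, max_self]
    apply le_of_eq
    rw [Nat.sub_zero]; ring
  | succ n ih =>
    intro t t' h
    have ih := ih (by omega)
    rw [Finset.sum_range_succ, ← sub_sub]
    generalize survival r N * avgOsc φ C f 0 - ∑ i ∈ Finset.range n,
      survival r (N - 1 - i) * (avgOsc φ C f i - avgOsc φ C f (i + 1)) = g at *
    obtain ⟨m, rfl⟩ : ∃ m, N = n + 1 + m := ⟨N - (n + 1), by omega⟩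
    have e1 : n + 1 + m - 1 - n = m := by omega
    have e2 : n + 1 + m - (n + 1) = m := by omega
    have e3 : n + 1 + m - n = m + 1 := by omega
    rw [e1, e2]
    rw [e3] at ih
    have hs := survival_pos r m
    have hu := sub_nonneg.2 (fiberSum_le_avgSup (φ := φ) hC hf1 (n + 1) t)
    have hl := sub_nonneg.2 (avgInf_le_fiberSum (φ := φ) hC hf0 (n + 1) t')
    have hd := avgOsc_antitone (φ := φ) hC hf0 hf1 (Nat.le_succ n)
    have hmax : 0 ≤ max (fiberSum φ C (fun _ => 1) (n + 1) t)
        (fiberSum φ C (fun _ => 1) (n + 1) t') :=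
      (fiberSum_one_pos φ C hC (n + 1) t).le.trans (le_max_left _ _)
    rcases le_total g 0 with hg | hg
    · refine le_trans (mul_nonpos_of_nonpos_of_nonneg ?_ hmax)
        (mul_nonneg hs.le (add_nonneg hu hl))
      have := mul_nonneg hs.le (sub_nonneg.2 hd)
      simp only [Nat.succ_eq_add_one] at this
      linarith
    · have hagree : ∀ a : A n, ∀ i, n ≤ i → i < n + 1 + m →
          Function.update t n a i = Function.update t' n a i := by
        intro a i h1 h2
        rcases eq_or_ne i n with rfl | hne
        · simp
        · simp [hne, h i (by omega) h2]
      have step := gain_step (φ := φ) (C := C) (f := f) hC hf0 hf1 (n := n) (t := t) (t' := t')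
        (ρ := r (m + 1)) (g := g / survival r (m + 1))
        (fun a _ => hr (m + 1) (by omega) n _ _ fun i h1 h2 => hagree a i h1 (by omega))
        (div_nonneg hg (survival_pos r _).le)
        (fun a _ => by
          rw [div_mul_eq_mul_div, div_le_iff₀ (survival_pos r _), mul_comm _ (survival r (m + 1))]
          exact ih _ _ (hagree a))
      have hcoef : Real.exp (-r (m + 1)) * (g / survival r (m + 1)) = g / survival r m := by
        rw [survival_succ]
        have := Real.exp_pos (-r (m + 1))
        field_simp
      rw [hcoef, div_mul_eq_mul_div, div_le_iff₀ hs] at step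
      -- replacing the bounds of level `n` by those of level `n + 1` costs at most
      -- the decrease of the oscillation times the larger mass
      have h1 : (avgSup φ C f n - avgSup φ C f (n + 1)) * fiberSum φ C (fun _ => 1) (n + 1) t ≤
          (avgSup φ C f n - avgSup φ C f (n + 1)) * max (fiberSum φ C (fun _ => 1) (n + 1) t)
            (fiberSum φ C (fun _ => 1) (n + 1) t') :=
        mul_le_mul_of_nonneg_left (le_max_left _ _)
          (sub_nonneg.2 (avgSup_antitone hC hf1 (Nat.le_succ n)))
      have h2 : (avgInf φ C f (n + 1) - avgInf φ C f n) * fiberSum φ C (fun _ => 1) (n + 1) t' ≤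
          (avgInf φ C f (n + 1) - avgInf φ C f n) * max (fiberSum φ C (fun _ => 1) (n + 1) t)
            (fiberSum φ C (fun _ => 1) (n + 1) t') :=
        mul_le_mul_of_nonneg_left (le_max_right _ _)
          (sub_nonneg.2 (avgInf_monotone hC hf0 (Nat.le_succ n)))
      have h3 := mul_le_mul_of_nonneg_left (add_le_add h1 h2) hs.le
      simp only [avgOsc]
      generalize max (fiberSum φ C (fun _ => 1) (n + 1) t)
        (fiberSum φ C (fun _ => 1) (n + 1) t') = M at *
      linarith

/-- The renewal inequality. It expresses that the coefficient in `gain_bound` at level `n = N` is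
nonpositive: at this level all pairs of tails are admitted, so a positive coefficient would bound
the oscillation by something smaller than itself. -/
lemma renewal_step [Nonempty (∀ k, A k)] (hC : ∀ n, (C n).Nonempty) (hf0 : ∀ x, 0 ≤ f x)
    (hf1 : ∀ x, f x ≤ 1) {r : ℕ → ℝ}
    (hr : ∀ k, 1 ≤ k → ∀ n (x y : ∀ j, A j),
      (∀ i, n ≤ i → i < n + k → x i = y i) → |φ n x - φ n y| ≤ r k)
    {N : ℕ} (hfN : ∀ x y : ∀ k, A k, (∀ i, i < N → x i = y i) → f x = f y) :
    ∑ i ∈ Finset.range (N + 1), survival r (N - i) * avgOsc φ C f i ≤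
      ∑ i ∈ Finset.range N, survival r (N - 1 - i) * avgOsc φ C f i := by
  have hb := gain_bound (φ := φ) hC hf0 hf1 hr hfN le_rfl
  have hs0 : survival r (N - N) = 1 := by simp [survival]
  have hneg : survival r N * avgOsc φ C f 0 - ∑ i ∈ Finset.range N,
      survival r (N - 1 - i) * (avgOsc φ C f i - avgOsc φ C f (i + 1)) ≤ 0 := by
    by_contra! hpos
    generalize survival r N * avgOsc φ C f 0 - ∑ i ∈ Finset.range N,
      survival r (N - 1 - i) * (avgOsc φ C f i - avgOsc φ C f (i + 1)) = g at *
    have hdiff : ∀ t t' : ∀ k, A k,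
        fiberAvg φ C f N t - fiberAvg φ C f N t' ≤ avgOsc φ C f N - g := by
      intro t t'
      have h := hb t t' fun i h1 h2 => by omega
      rw [hs0, one_mul] at h
      have hz := fiberSum_one_pos φ C hC N t
      have hz' := fiberSum_one_pos φ C hC N t'
      have e : fiberSum φ C f N t = fiberAvg φ C f N t * fiberSum φ C (fun _ => 1) N t := by
        rw [fiberAvg, div_mul_cancel₀ _ hz.ne']
      have e' : fiberSum φ C f N t' = fiberAvg φ C f N t' * fiberSum φ C (fun _ => 1) N t' := by
        rw [fiberAvg, div_mul_cancel₀ _ hz'.ne']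
      have hu := sub_nonneg.2 (fiberAvg_le_avgSup (φ := φ) hC hf1 N t)
      have hl := sub_nonneg.2 (avgInf_le_fiberAvg (φ := φ) hC hf0 N t')
      rw [e, e', ← sub_mul, ← sub_mul] at h
      have h1 := mul_le_mul_of_nonneg_left (le_max_left (fiberSum φ C (fun _ => 1) N t)
        (fiberSum φ C (fun _ => 1) N t')) hu
      have h2 := mul_le_mul_of_nonneg_left (le_max_right (fiberSum φ C (fun _ => 1) N t)
        (fiberSum φ C (fun _ => 1) N t')) hl
      have hM : 0 < max (fiberSum φ C (fun _ => 1) N t) (fiberSum φ C (fun _ => 1) N t') :=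
        lt_max_of_lt_left hz
      have h3 := h.trans (add_le_add h1 h2)
      rw [← add_mul] at h3
      have h4 := le_of_mul_le_mul_right h3 hM
      unfold avgOsc; linarith
    have hsup : ∀ t', avgSup φ C f N ≤ avgOsc φ C f N - g + fiberAvg φ C f N t' :=
      fun t' => ciSup_le fun t => by linarith [hdiff t t']
    have hinf : avgSup φ C f N - (avgOsc φ C f N - g) ≤ avgInf φ C f N :=
      le_ciInf fun t' => by linarith [hsup t']
    unfold avgOsc at hinf
    linarith
  rw [Finset.sum_range_succ']
  simp only [mul_sub, Finset.sum_sub_distrib, Nat.sub_zero] at hneg ⊢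
  have : ∑ i ∈ Finset.range N, survival r (N - (i + 1)) * avgOsc φ C f (i + 1) =
      ∑ i ∈ Finset.range N, survival r (N - 1 - i) * avgOsc φ C f (i + 1) :=
    Finset.sum_congr rfl fun i _ => by rw [show N - (i + 1) = N - 1 - i by omega]
  rw [this]; linarith

/-- The quantitative decay of the oscillation for `f` depending on `k` coordinates. The right-hand
side of the renewal inequality is nonincreasing in `N ≥ k`, and at `N = k` it is a sum of `k`
terms in `[0, 1]`. -/
lemma avgOsc_mul_sum_le [Nonempty (∀ k, A k)] (hC : ∀ n, (C n).Nonempty) (hf0 : ∀ x, 0 ≤ f x)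
    (hf1 : ∀ x, f x ≤ 1) {r : ℕ → ℝ}
    (hr : ∀ k, 1 ≤ k → ∀ n (x y : ∀ j, A j),
      (∀ i, n ≤ i → i < n + k → x i = y i) → |φ n x - φ n y| ≤ r k)
    {k : ℕ} (hfk : ∀ x y : ∀ k, A k, (∀ i, i < k → x i = y i) → f x = f y)
    {N : ℕ} (hN : k ≤ N) :
    avgOsc φ C f N * ∑ i ∈ Finset.range (N + 1), survival r i ≤ k := by
  have hmono : ∀ N, k ≤ N →
      ∑ i ∈ Finset.range N, survival r (N - 1 - i) * avgOsc φ C f i ≤ k := by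
    intro N hN
    induction N, hN using Nat.le_induction with
    | base =>
      calc _ ≤ ∑ i ∈ Finset.range k, (1 : ℝ) := by
            refine Finset.sum_le_sum fun i _ => ?_
            have h1 : survival r (k - 1 - i) ≤ 1 := by
              refine Real.exp_le_one_iff.2 (neg_nonpos.2 (Finset.sum_nonneg fun j hj => ?_))
              let x := Classical.arbitrary (∀ k, A k)
              exact (abs_nonneg _).trans
                (hr j (Finset.mem_Icc.1 hj).1 0 x x fun _ _ _ => rfl)
            calc _ ≤ survival r (k - 1 - i) * 1 :=
                  mul_le_mul_of_nonneg_left (avgOsc_le_one hC hf0 hf1 i) (survival_pos r _).le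
              _ ≤ 1 := by simpa using h1
        _ = k := by simp
    | succ N hN ih =>
      exact (renewal_step (φ := φ) hC hf0 hf1 hr
        fun x y h => hfk x y fun i hi => h i (by omega)).trans ih
  refine le_trans ?_ (hmono (N + 1) (by omega))
  rw [← Finset.sum_range_reflect, Finset.mul_sum]
  refine Finset.sum_le_sum fun i hi => ?_
  rw [mul_comm]
  have := Finset.mem_range.1 hi
  exact mul_le_mul_of_nonneg_left (avgOsc_antitone hC hf0 hf1 (by omega)) (survival_pos r _).le

end Osc

/-! ### Integrals of Gibbs chains -/

section Integral

lemma measurable_update_coord [∀ n, MeasurableSpace (A n)] (n : ℕ) (a : A n) :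
    Measurable fun x : ∀ k, A k => Function.update x n a := by
  refine measurable_pi_lambda _ fun k => ?_
  rcases eq_or_ne k n with rfl | hne
  · simp
  · simpa [hne] using measurable_pi_apply k

lemma integrable_of_unit_bounds [∀ n, MeasurableSpace (A n)]
    {μ : Measure (∀ n, A n)} [IsProbabilityMeasure μ]
    {h : (∀ k, A k) → ℝ} (hm : Measurable h) (h0 : ∀ x, 0 ≤ h x) (h1 : ∀ x, h x ≤ 1) :
    Integrable h μ :=
  Integrable.of_bound hm.aestronglyMeasurable 1
    (Eventually.of_forall fun x => by rw [Real.norm_eq_abs, abs_of_nonneg (h0 x)]; exact h1 x)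

variable [∀ n, Fintype (A n)] [∀ n, TopologicalSpace (A n)] [∀ n, DiscreteTopology (A n)]
  [∀ n, MeasurableSpace (A n)] [∀ n, DiscreteMeasurableSpace (A n)]
  {φ : ℕ → (∀ k, A k) → ℝ}

lemma measurable_exp_potential (hφ : IsNormalizedPotential A φ) (n : ℕ) (a : A n) :
    Measurable fun x : ∀ k, A k => Real.exp (φ n (Function.update x n a)) :=
  Real.measurable_exp.comp ((hφ.1 n).measurable.comp (measurable_update_coord n a))

lemma measurable_fiberSum (hφ : IsNormalizedPotential A φ) (C : ∀ n, Finset (A n))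
    {f : (∀ k, A k) → ℝ} (hf : Measurable f) (n : ℕ) : Measurable (fiberSum φ C f n) := by
  induction n with
  | zero => exact hf
  | succ n ih =>
    exact Finset.measurable_fun_sum _ fun a _ =>
      (measurable_exp_potential hφ n a).mul (ih.comp (measurable_update_coord n a))

/-- Pull-out property: a bounded function of the coordinates beyond `n` factors out of the
conditional probability of `{x_n = a}`. -/
lemma integral_indicator_mul {μ : Measure (∀ n, A n)} (hμ : IsGibbsChain A φ μ) (n : ℕ) (a : A n)
    {h : (∀ k, A k) → ℝ} (hm : Measurable h) (h0 : ∀ x, 0 ≤ h x) (h1 : ∀ x, h x ≤ 1)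
    (hdep : ∀ x y : ∀ k, A k, (∀ k, n ≤ k → x k = y k) → h x = h y) :
    ∫ x, Set.indicator {x : ∀ k, A k | x n = a} (fun _ => (1 : ℝ)) x *
        h (Function.update x n a) ∂μ =
      ∫ x, Real.exp (φ n (Function.update x n a)) * h (Function.update x n a) ∂μ := by
  have := hμ.1
  have hle : tailAlgebra A (n + 1) ≤ MeasurableSpace.pi := by
    rw [tailAlgebra, ← measurable_iff_comap_le]
    exact measurable_pi_lambda _ fun k => measurable_pi_apply _
  obtain ⟨x₀⟩ : Nonempty (∀ k, A k) := μ.nonempty_of_neZero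
  -- overwriting the coordinates up to `n` by constants makes the function tail-measurable
  let ψ : (∀ k, A k) → (∀ k, A k) := fun x i => if i < n + 1 then Function.update x₀ n a i else x i
  have hψ : @Measurable _ _ (tailAlgebra A (n + 1)) MeasurableSpace.pi ψ := by
    refine @measurable_pi_lambda _ _ _ (tailAlgebra A (n + 1)) _ _ fun i => ?_
    by_cases hi : i < n + 1
    · simp only [ψ, hi, if_true]
      exact measurable_const
    · simp only [ψ, hi, if_false]
      obtain ⟨j, rfl⟩ : ∃ j, i = n + 1 + j := ⟨i - (n + 1), by omega⟩
      exact (measurable_pi_apply (X := fun k => A (n + 1 + k)) j).comp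
        (comap_measurable (fun (x : ∀ n, A n) (k : ℕ) => x (n + 1 + k)))
  have hg : (fun x => h (Function.update x n a)) = h ∘ ψ := by
    funext x
    refine hdep _ _ fun k hk => ?_
    rcases eq_or_ne k n with rfl | hne
    · simp [ψ]
    · simp only [ψ, Function.update_of_ne hne, if_neg (show ¬ k < n + 1 by omega)]
  have hgm : StronglyMeasurable[tailAlgebra A (n + 1)] fun x => h (Function.update x n a) := by
    rw [hg]
    exact (hm.comp hψ).stronglyMeasurable
  have hset : MeasurableSet {x : ∀ k, A k | x n = a} :=
    measurable_pi_apply n (MeasurableSet.singleton a)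
  have hind : Integrable (Set.indicator {x : ∀ k, A k | x n = a} (fun _ => (1 : ℝ))) μ :=
    (integrable_const 1).indicator hset
  have hgmeas : Measurable fun x => h (Function.update x n a) :=
    hm.comp (measurable_update_coord n a)
  have hmul : Integrable (Set.indicator {x : ∀ k, A k | x n = a} (fun _ => (1 : ℝ)) *
      fun x => h (Function.update x n a)) μ := by
    refine hind.mul_bdd (c := 1) hgmeas.aestronglyMeasurable (Eventually.of_forall fun x => ?_)
    rw [Real.norm_eq_abs, abs_of_nonneg (h0 _)]
    exact h1 _
  have hce := condExp_mul_of_stronglyMeasurable_right hgm hmul hind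
  have := integral_condExp hle (μ := μ) (f := Set.indicator {x : ∀ k, A k | x n = a}
    (fun _ => (1 : ℝ)) * fun x => h (Function.update x n a))
  rw [integral_congr_ae hce] at this
  change ∫ x, (Set.indicator {x : ∀ k, A k | x n = a} (fun _ => (1 : ℝ)) *
    fun x => h (Function.update x n a)) x ∂μ = _
  rw [← this]
  refine integral_congr_ae ?_
  filter_upwards [hμ.2 n a] with x hx
  rw [Pi.mul_apply, ← hx]

/-- Invariance of a Gibbs chain under resampling the coordinate `n` given the later ones, for
functions of the coordinates from `n` on. -/
lemma integral_eq_integral_step (hφ : IsNormalizedPotential A φ)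
    {μ : Measure (∀ n, A n)} (hμ : IsGibbsChain A φ μ) (n : ℕ)
    {h : (∀ k, A k) → ℝ} (hm : Measurable h) (h0 : ∀ x, 0 ≤ h x) (h1 : ∀ x, h x ≤ 1)
    (hdep : ∀ x y : ∀ k, A k, (∀ k, n ≤ k → x k = y k) → h x = h y) :
    ∫ x, h x ∂μ =
      ∫ x, ∑ a : A n, Real.exp (φ n (Function.update x n a)) * h (Function.update x n a) ∂μ := by
  have := hμ.1
  have hset : ∀ a : A n, MeasurableSet {x : ∀ k, A k | x n = a} := fun a =>
    measurable_pi_apply n (MeasurableSet.singleton a)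
  have hgmeas : ∀ a : A n, Measurable fun x => h (Function.update x n a) := fun a =>
    hm.comp (measurable_update_coord n a)
  have hexp1 : ∀ (a : A n) x, Real.exp (φ n (Function.update x n a)) ≤ 1 := fun a x =>
    (Finset.single_le_sum (f := fun a => Real.exp (φ n (Function.update x n a)))
      (fun _ _ => Real.exp_nonneg _) (Finset.mem_univ a)).trans_eq (hφ.2.2 n x)
  have hsum : ∀ x, h x = ∑ a : A n, Set.indicator {x : ∀ k, A k | x n = a}
      (fun _ => (1 : ℝ)) x * h (Function.update x n a) := by
    intro x
    rw [Finset.sum_eq_single (x n)]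
    · rw [Set.indicator_of_mem (by exact rfl), one_mul, Function.update_eq_self]
    · intro b _ hb
      rw [Set.indicator_of_notMem (s := {x : ∀ k, A k | x n = b}) (a := x)
        (fun h => hb (Eq.symm h)), zero_mul]
    · simp
  calc ∫ x, h x ∂μ = ∫ x, ∑ a : A n, Set.indicator {x : ∀ k, A k | x n = a}
        (fun _ => (1 : ℝ)) x * h (Function.update x n a) ∂μ := integral_congr_ae (.of_forall hsum)
    _ = ∑ a : A n, ∫ x, Set.indicator {x : ∀ k, A k | x n = a}
        (fun _ => (1 : ℝ)) x * h (Function.update x n a) ∂μ := by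
      refine integral_finsetSum _ fun a _ => integrable_of_unit_bounds ?_ ?_ ?_
      · exact (measurable_const.indicator (hset a)).mul (hgmeas a)
      · exact fun x => mul_nonneg (Set.indicator_nonneg (fun _ _ => zero_le_one) _) (h0 _)
      · exact fun x => mul_le_one₀ (Set.indicator_le' (fun _ _ => le_rfl)
          (fun _ _ => zero_le_one) _) (h0 _) (h1 _)
    _ = ∑ a : A n, ∫ x, Real.exp (φ n (Function.update x n a)) * h (Function.update x n a) ∂μ :=
      Finset.sum_congr rfl fun a _ => integral_indicator_mul hμ n a hm h0 h1 hdep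
    _ = _ := by
      refine (integral_finsetSum _ fun a _ => integrable_of_unit_bounds ?_ ?_ ?_).symm
      · exact (measurable_exp_potential hφ n a).mul (hgmeas a)
      · exact fun x => mul_nonneg (Real.exp_nonneg _) (h0 _)
      · exact fun x => mul_le_one₀ (hexp1 a x) (h0 _) (h1 _)

/-- The integral over a cylinder in terms of fiber sums: the coordinates `0, …, N - 1` are averaged
out one after the other. -/
lemma setIntegral_cylinder (hφ : IsNormalizedPotential A φ)
    {μ : Measure (∀ n, A n)} (hμ : IsGibbsChain A φ μ) (C : ∀ n, Finset (A n)) (N : ℕ) :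
    ∀ {f : (∀ k, A k) → ℝ}, Measurable f → (∀ x, 0 ≤ f x) → (∀ x, f x ≤ 1) →
      ∫ x in {x : ∀ k, A k | ∀ i, i < N → x i ∈ C i}, f x ∂μ = ∫ x, fiberSum φ C f N x ∂μ := by
  classical
  have := hμ.1
  induction N with
  | zero =>
    intro f _ _ _
    simp [fiberSum]
  | succ N ih =>
    intro f hf hf0 hf1
    set D : Set (∀ k, A k) := {x | x N ∈ (C N : Set (A N))} with hD
    have hDm : MeasurableSet D := measurable_pi_apply N (MeasurableSet.of_discrete)
    have hS : {x : ∀ k, A k | ∀ i, i < N + 1 → x i ∈ C i} =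
        {x : ∀ k, A k | ∀ i, i < N → x i ∈ C i} ∩ D := by
      ext x
      change (∀ i, i < N + 1 → x i ∈ C i) ↔ (∀ i, i < N → x i ∈ C i) ∧ x N ∈ C N
      refine ⟨fun h => ⟨fun i hi => h i (by omega), h N (by omega)⟩, fun h i hi => ?_⟩
      rcases Nat.lt_succ_iff_lt_or_eq.1 hi with h' | rfl
      · exact h.1 i h'
      · exact h.2
    have hle1 : ∀ x, fiberSum φ C f N x ≤ 1 := fun x =>
      (fiberSum_mono φ C hf1 N x).trans (fiberSum_one_le φ hφ.2.2 C N x)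
    have hge0 := fiberSum_nonneg φ C hf0 N
    rw [hS, ← setIntegral_indicator hDm, ih (hf.indicator hDm)
      (fun x => Set.indicator_nonneg (fun _ _ => hf0 _) _)
      (fun x => Set.indicator_le' (fun _ _ => hf1 _) (fun _ _ => zero_le_one) _),
      hD, fiberSum_indicator φ C f le_rfl (C N : Set (A N)), ← hD]
    rw [integral_eq_integral_step hφ hμ N ((measurable_fiberSum hφ C hf N).indicator hDm)
      (fun x => Set.indicator_nonneg (fun _ _ => hge0 _) _)
      (fun x => Set.indicator_le' (fun _ _ => hle1 _) (fun _ _ => zero_le_one) _)]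
    · refine integral_congr_ae (.of_forall fun x => ?_)
      simp only [fiberSum]
      rw [← Finset.sum_subset (Finset.subset_univ (C N))]
      · refine Finset.sum_congr rfl fun a ha => ?_
        rw [Set.indicator_of_mem]
        change Function.update x N a N ∈ C N
        simpa using ha
      · intro a _ ha
        rw [Set.indicator_of_notMem, mul_zero]
        change ¬ Function.update x N a N ∈ C N
        simpa using ha
    · intro x y hxy
      have h1 := fiberSum_congr φ hφ.2.1 C f N x y hxy
      have h2 : x ∈ D ↔ y ∈ D := by
        change x N ∈ C N ↔ y N ∈ C N
        rw [hxy N le_rfl]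
      by_cases hx : x ∈ D
      · rw [Set.indicator_of_mem hx, Set.indicator_of_mem (h2.1 hx), h1]
      · rw [Set.indicator_of_notMem hx, Set.indicator_of_notMem (mt h2.2 hx)]

lemma measureReal_inter_cylinder (hφ : IsNormalizedPotential A φ)
    {μ : Measure (∀ n, A n)} (hμ : IsGibbsChain A φ μ) (C : ∀ n, Finset (A n)) (N : ℕ)
    {W : Set (∀ k, A k)} (hW : MeasurableSet W) :
    (μ (W ∩ {x : ∀ k, A k | ∀ i, i < N → x i ∈ C i})).toReal =
      ∫ x, fiberSum φ C (Set.indicator W fun _ => 1) N x ∂μ := by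
  have := hμ.1
  rw [← setIntegral_cylinder hφ hμ C N (measurable_const.indicator hW)
    (fun x => Set.indicator_nonneg (fun _ _ => zero_le_one) _)
    (fun x => Set.indicator_le' (fun _ _ => le_rfl) (fun _ _ => zero_le_one) _)]
  rw [integral_indicator_const _ hW, smul_eq_mul, mul_one, measureReal_def,
    Measure.restrict_apply hW]

lemma measureReal_cylinder (hφ : IsNormalizedPotential A φ)
    {μ : Measure (∀ n, A n)} (hμ : IsGibbsChain A φ μ) (C : ∀ n, Finset (A n)) (N : ℕ) :
    (μ {x : ∀ k, A k | ∀ i, i < N → x i ∈ C i}).toReal =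
      ∫ x, fiberSum φ C (fun _ => 1) N x ∂μ := by
  have := measureReal_inter_cylinder hφ hμ C N MeasurableSet.univ
  rwa [Set.univ_inter, Set.indicator_univ] at this

lemma integral_fiberSum_one_pos (hφ : IsNormalizedPotential A φ)
    {μ : Measure (∀ n, A n)} (hμ : IsGibbsChain A φ μ) {C : ∀ n, Finset (A n)}
    (hC : ∀ n, (C n).Nonempty) (N : ℕ) :
    0 < ∫ x, fiberSum φ C (fun _ => 1) N x ∂μ := by
  have := hμ.1
  have hpos := fiberSum_one_pos φ C hC N
  rw [integral_pos_iff_support_of_nonneg (fun x => (hpos x).le)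
    (integrable_of_unit_bounds (measurable_fiberSum hφ C measurable_const N)
      (fun x => (hpos x).le) (fiberSum_one_le φ hφ.2.2 C N))]
  have : Function.support (fun x => fiberSum φ C (fun _ => 1) N x) = Set.univ :=
    Set.eq_univ_of_forall fun x => (hpos x).ne'
  rw [this, measure_univ]
  exact one_pos

/-- The conditional probability of `W` given the cylinder of `C` is an average of the fiber
averages of level `N`, hence lies between their infimum and supremum. -/
lemma ratio_mem (hφ : IsNormalizedPotential A φ)
    {μ : Measure (∀ n, A n)} (hμ : IsGibbsChain A φ μ) {C : ∀ n, Finset (A n)}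
    (hC : ∀ n, (C n).Nonempty) (N : ℕ) {W : Set (∀ k, A k)} (hW : MeasurableSet W) :
    (μ (W ∩ {x : ∀ k, A k | ∀ i, i < N → x i ∈ C i})).toReal /
        (μ {x : ∀ k, A k | ∀ i, i < N → x i ∈ C i}).toReal ∈
      Set.Icc (avgInf φ C (Set.indicator W fun _ => 1) N)
        (avgSup φ C (Set.indicator W fun _ => 1) N) := by
  have := hμ.1
  have hf0 : ∀ x, 0 ≤ Set.indicator W (fun _ => (1 : ℝ)) x :=
    fun x => Set.indicator_nonneg (fun _ _ => zero_le_one) _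
  have hf1 : ∀ x, Set.indicator W (fun _ => (1 : ℝ)) x ≤ 1 :=
    fun x => Set.indicator_le' (fun _ _ => le_rfl) (fun _ _ => zero_le_one) _
  have hfm : Measurable (Set.indicator W (fun _ => (1 : ℝ))) := measurable_const.indicator hW
  have i1 : Integrable (fun x => fiberSum φ C (fun _ => 1) N x) μ :=
    integrable_of_unit_bounds (measurable_fiberSum hφ C measurable_const N)
      (fun x => (fiberSum_one_pos φ C hC N x).le) (fiberSum_one_le φ hφ.2.2 C N)
  have i2 : Integrable (fun x => fiberSum φ C (Set.indicator W fun _ => 1) N x) μ :=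
    integrable_of_unit_bounds (measurable_fiberSum hφ C hfm N) (fiberSum_nonneg φ C hf0 N)
      fun x => (fiberSum_mono φ C hf1 N x).trans (fiberSum_one_le φ hφ.2.2 C N x)
  have hpos := integral_fiberSum_one_pos hφ hμ hC N
  rw [measureReal_inter_cylinder hφ hμ C N hW, measureReal_cylinder hφ hμ C N]
  constructor
  · rw [le_div_iff₀ hpos, ← integral_const_mul]
    exact integral_mono (i1.const_mul _) i2 fun x => avgInf_le_fiberSum hC hf0 N x
  · rw [div_le_iff₀ hpos, ← integral_const_mul]
    exact integral_mono i2 (i1.const_mul _) fun x => fiberSum_le_avgSup hC hf1 N x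

lemma measure_cylinder_pos (hφ : IsNormalizedPotential A φ)
    {μ : Measure (∀ n, A n)} (hμ : IsGibbsChain A φ μ) {C : ∀ n, Finset (A n)}
    (hC : ∀ n, (C n).Nonempty) (N : ℕ) :
    0 < μ {x : ∀ k, A k | ∀ i, i < N → x i ∈ C i} := by
  have h := integral_fiberSum_one_pos hφ hμ hC N
  rw [← measureReal_cylinder hφ hμ C N] at h
  exact (ENNReal.toReal_pos_iff.1 h).1

end Integral

end Aux

/-! ### Uniform convergence -/

/-- **Theorem 2 (i).** Let `(φ_n)` be a normalized continuous potential sequence on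
`X = ∏ A_n` whose uniform variations `r_k` satisfy Berbee's condition, let `μ` be a Gibbs
chain for `(φ_n)` and let `π̂ : X → Y` be a symbolic map.  Then all cylinders of `X`
(resp. of `Y`) have positive `μ`- (resp. `μ∘π̂⁻¹`-) measure, and for every cylinder `[w]`
of `X` the functions `y ↦ μ([w] ∩ π̂⁻¹[y]_N)/μ(π̂⁻¹[y]_N)` converge uniformly in `y` as
`N → ∞` to a continuous function of `y`; that is, the conditional measure
`μ(·| π̂(x) = y)` depends continuously on `y`. -/
theorem conditional_measure_continuous_of_berbee
    (A : ℕ → Type) (B : ℕ → Type)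
    [∀ n, Fintype (A n)] [∀ n, Nontrivial (A n)]
    [∀ n, TopologicalSpace (A n)] [∀ n, DiscreteTopology (A n)]
    [∀ n, MeasurableSpace (A n)] [∀ n, DiscreteMeasurableSpace (A n)]
    [∀ n, Fintype (B n)]
    [∀ n, TopologicalSpace (B n)] [∀ n, DiscreteTopology (B n)]
    [∀ n, MeasurableSpace (B n)] [∀ n, DiscreteMeasurableSpace (B n)]
    (φ : ℕ → (∀ k, A k) → ℝ) (hφ : IsNormalizedPotential A φ)
    -- `r k` is the uniform variation `r_k = sup_n var_k φ_n` …
    (r : ℕ → ℝ)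
    (hr : ∀ k, 1 ≤ k → ∀ n (x y : ∀ j, A j),
      (∀ i, n ≤ i → i < n + k → x i = y i) → |φ n x - φ n y| ≤ r k)
    -- … and it satisfies Berbee's condition `∑ exp(-(r_1 + ⋯ + r_m)) = ∞`:
    (hBerbee : ¬ Summable fun m : ℕ => Real.exp (-(∑ i ∈ Finset.Icc 1 m, r i)))
    (μ : Measure (∀ n, A n)) (hμ : IsGibbsChain A φ μ)
    (p : ∀ n, A n → B n) (hπ : ∀ n, Function.Surjective (p n)) :
    (∀ (k : ℕ) (w : ∀ i : Fin k, A i),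
        0 < μ {x : ∀ n, A n | ∀ i : Fin k, x i = w i}) ∧
    (∀ (N : ℕ) (v : ∀ i : Fin N, B i),
        0 < (μ.map fun (x : ∀ n, A n) (n : ℕ) => p n (x n))
              {y : ∀ n, B n | ∀ i : Fin N, y i = v i}) ∧
    (∀ (k : ℕ) (w : ∀ i : Fin k, A i),
        ∃ G : (∀ n, B n) → ℝ, Continuous G ∧
          TendstoUniformly
            (fun (N : ℕ) (y : ∀ n, B n) =>
              (μ ({x : ∀ n, A n | ∀ i : Fin k, x i = w i} ∩
                    (fun (x : ∀ n, A n) (n : ℕ) => p n (x n)) ⁻¹'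
                      {y' : ∀ n, B n | ∀ i, i < N → y' i = y i})).toReal /
              (μ ((fun (x : ∀ n, A n) (n : ℕ) => p n (x n)) ⁻¹'
                      {y' : ∀ n, B n | ∀ i, i < N → y' i = y i})).toReal)
            G atTop) := by
  classical
  have hprob := hμ.1
  have hne : Nonempty (∀ k, A k) := ⟨fun k => Classical.arbitrary (A k)⟩
  have hpm : Measurable fun (x : ∀ n, A n) (n : ℕ) => p n (x n) :=
    measurable_pi_lambda _ fun n => (Measurable.of_discrete).comp (measurable_pi_apply n)
  have hX : ∀ (k : ℕ) (w : ∀ i : Fin k, A i),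
      0 < μ {x : ∀ n, A n | ∀ i : Fin k, x i = w i} := by
    intro k w
    let C : ∀ n, Finset (A n) := fun n =>
      if h : n < k then {w ⟨n, h⟩} else {Classical.arbitrary (A n)}
    have hC : ∀ n, (C n).Nonempty := by
      intro n
      by_cases h : n < k <;> simp [C, h]
    refine (measure_cylinder_pos hφ hμ hC k).trans_le (measure_mono fun x hx i => ?_)
    have := hx i i.2
    simpa [C] using this
  refine ⟨hX, ?_, ?_⟩
  · intro N v
    have hset : MeasurableSet {y : ∀ n, B n | ∀ i : Fin N, y i = v i} := by
      have : {y : ∀ n, B n | ∀ i : Fin N, y i = v i} =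
          ⋂ i : Fin N, (fun y : ∀ n, B n => y i) ⁻¹' {v i} := by
        ext y
        simp only [Set.mem_iInter]
        rfl
      rw [this]
      exact MeasurableSet.iInter fun i => measurable_pi_apply _ (MeasurableSet.singleton _)
    rw [Measure.map_apply hpm hset]
    choose w hw using fun i : Fin N => hπ i (v i)
    refine (hX N w).trans_le (measure_mono fun x hx i => ?_)
    change p i (x i) = v i
    rw [hx i, hw i]
  · intro k w
    set W : Set (∀ n, A n) := {x | ∀ i : Fin k, x i = w i} with hWdef
    have hW : MeasurableSet W := by
      have : W = ⋂ i : Fin k, (fun x : ∀ n, A n => x i) ⁻¹' {w i} := by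
        ext x
        simp only [Set.mem_iInter]
        rfl
      rw [this]
      exact MeasurableSet.iInter fun i => measurable_pi_apply _ (MeasurableSet.singleton _)
    let f : (∀ n, A n) → ℝ := Set.indicator W fun _ => 1
    have hf0 : ∀ x, 0 ≤ f x := fun x => Set.indicator_nonneg (fun _ _ => zero_le_one) _
    have hf1 : ∀ x, f x ≤ 1 :=
      fun x => Set.indicator_le' (fun _ _ => le_rfl) (fun _ _ => zero_le_one) _
    have hfk : ∀ x y : ∀ n, A n, (∀ i, i < k → x i = y i) → f x = f y := by
      intro x y h
      have hiff : x ∈ W ↔ y ∈ W :=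
        forall_congr' fun i => by rw [h i i.2]
      by_cases hx : x ∈ W
      · simp only [f, Set.indicator_of_mem hx, Set.indicator_of_mem (hiff.1 hx)]
      · simp only [f, Set.indicator_of_notMem hx, Set.indicator_of_notMem (mt hiff.2 hx)]
    let C : (∀ n, B n) → ∀ n, Finset (A n) := fun y n => Finset.univ.filter fun a => p n a = y n
    have hC : ∀ y n, (C y n).Nonempty := fun y n => by
      obtain ⟨a, ha⟩ := hπ n (y n)
      exact ⟨a, by simp [C, ha]⟩
    have hfib : ∀ (N : ℕ) (y : ∀ n, B n), (fun (x : ∀ n, A n) (n : ℕ) => p n (x n)) ⁻¹'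
        {y' : ∀ n, B n | ∀ i, i < N → y' i = y i} =
        {x : ∀ n, A n | ∀ i, i < N → x i ∈ C y i} := by
      intro N y
      ext x
      change (∀ i, i < N → p i (x i) = y i) ↔ ∀ i, i < N → x i ∈ C y i
      simp [C]
    -- the intervals `[avgInf N, avgSup N]` are nested; `G y` is a point in all of them
    let G : (∀ n, B n) → ℝ := fun y => ⨅ N, avgSup φ (C y) f N
    have hGmem : ∀ y N, G y ∈ Set.Icc (avgInf φ (C y) f N) (avgSup φ (C y) f N) := by
      intro y N
      have hIS : ∀ m, avgInf φ (C y) f m ≤ avgSup φ (C y) f m := fun m =>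
        (avgInf_le_fiberAvg (hC y) hf0 m hne.some).trans (fiberAvg_le_avgSup (hC y) hf1 m hne.some)
      refine ⟨le_ciInf fun m => ?_, ciInf_le (f := fun N => avgSup φ (C y) f N) ⟨0, ?_⟩ N⟩
      · exact (avgInf_monotone (hC y) hf0 (le_max_left N m)).trans
          ((hIS _).trans (avgSup_antitone (hC y) hf1 (le_max_right N m)))
      · rintro _ ⟨m, rfl⟩
        exact (avgInf_nonneg (hC y) hf0 m).trans (hIS m)
    have hlim : Tendsto (fun N : ℕ => ∑ i ∈ Finset.range (N + 1), survival r i) atTop atTop :=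
      ((not_summable_iff_tendsto_nat_atTop_of_nonneg fun m => (survival_pos r m).le).1
        hBerbee).comp (tendsto_add_atTop_nat 1)
    have hunif : TendstoUniformly
            (fun (N : ℕ) (y : ∀ n, B n) =>
              (μ (W ∩ (fun (x : ∀ n, A n) (n : ℕ) => p n (x n)) ⁻¹'
                      {y' : ∀ n, B n | ∀ i, i < N → y' i = y i})).toReal /
              (μ ((fun (x : ∀ n, A n) (n : ℕ) => p n (x n)) ⁻¹'
                      {y' : ∀ n, B n | ∀ i, i < N → y' i = y i})).toReal)
            G atTop := by
      rw [Metric.tendstoUniformly_iff]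
      intro ε hε
      filter_upwards [hlim.eventually_gt_atTop (k / ε), eventually_ge_atTop k] with N hN hkN y
      rw [hfib]
      have h1 := ratio_mem hφ hμ (hC y) N hW
      have h2 := hGmem y N
      have h3 := avgOsc_mul_sum_le (φ := φ) (hC y) hf0 hf1 hr hfk hkN
      have hS : 0 < ∑ i ∈ Finset.range (N + 1), survival r i :=
        lt_of_le_of_lt (by positivity) hN
      rw [div_lt_iff₀ hε] at hN
      have h4 : avgOsc φ (C y) f N < ε := by
        by_contra! hcon
        have := mul_le_mul_of_nonneg_right hcon hS.le
        linarith
      refine lt_of_le_of_lt ?_ h4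
      exact Real.dist_le_of_mem_Icc h2 h1
    refine ⟨G, hunif.continuous (Eventually.frequently (Eventually.of_forall fun N => ?_)), hunif⟩
    -- at a fixed level the ratio only depends on the first `N` coordinates of `y`
    refine IsLocallyConstant.continuous ((IsLocallyConstant.iff_eventually_eq _).2 fun y => ?_)
    have hev : ∀ᶠ z : ∀ n, B n in nhds y, ∀ i ∈ Finset.range N, z i = y i := by
      rw [Filter.eventually_all_finset]
      intro i _
      exact ((isOpen_discrete {y i}).preimage (continuous_apply i)).mem_nhds rfl
    filter_upwards [hev] with z hz
    have hset : {y' : ∀ n, B n | ∀ i, i < N → y' i = z i} =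
        {y' : ∀ n, B n | ∀ i, i < N → y' i = y i} := by
      ext y'
      exact forall_congr' fun i => forall_congr' fun hi => by
        rw [hz i (Finset.mem_range.2 hi)]
    simp only [hset]
end
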